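/- arXiv:2510.01732 — 10 statements merged into one kernel-verified Lean document; each statement's English description precedes it below -/
import Mathlib

section
/- For every integer k, setting λ := 1/2 + 3k, there exists a smooth (infinitely differentiable) bounded function G : ℝ → ℝ with lim_{t→−∞} G(t) = 1 and lim_{t→+∞} G(t) = 0, such that the function v(x,y) := (y² + x^{2/3})^{λ/2} · G(y·x^{−1/3}) satisfies y·∂ₓv(x,y) − ∂²_{yy}v(x,y) = 0 at every point (x,y) ∈ (0,∞) × ℝ, and moreover, for every fixed y > 0, v(x,y) → 0 as x → 0⁺. -/
open Filter Set

/-- The self-similar ansatz `v(x,y) = (y² + x^(2/3))^(l/2) · G(y · x^(-1/3))`,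
i.e. `v = r^l G(t)` in the polar-like variables `r, t`. -/
noncomputable def selfSimilar (l : ℝ) (G : ℝ → ℝ) (x y : ℝ) : ℝ :=
  (y ^ 2 + x ^ ((2 : ℝ) / 3)) ^ (l / 2) * G (y * x ^ (-(1 : ℝ) / 3))

open MeasureTheory in
lemma gint (n : ℕ) : Integrable (fun u : ℝ => u ^ n * Real.exp (-u ^ 2)) := by
  have h := integrable_rpow_mul_exp_neg_mul_sq (b := 1) one_pos (s := (n : ℝ))
    (by have : (0 : ℝ) ≤ n := Nat.cast_nonneg n
        linarith)
  simpa using h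

open MeasureTheory in
lemma gint_mul (n : ℕ) (g : ℝ → ℝ) (hg : Continuous g) (hb : ∀ u, |g u| ≤ 1) :
    Integrable (fun u : ℝ => u ^ n * Real.exp (-u ^ 2) * g u) := by
  refine (gint n).mono (by fun_prop) (Filter.Eventually.of_forall fun u => ?_)
  rw [norm_mul]
  exact mul_le_of_le_one_right (norm_nonneg _) (hb u)

/-- phase -/
noncomputable def ph (s u : ℝ) : ℝ := u ^ 3 / 3 + (s - 1) * u

noncomputable def cI (n : ℕ) (s : ℝ) : ℝ :=
  ∫ u : ℝ, u ^ n * Real.exp (-u ^ 2) * Real.cos (ph s u)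

noncomputable def sI (n : ℕ) (s : ℝ) : ℝ :=
  ∫ u : ℝ, u ^ n * Real.exp (-u ^ 2) * Real.sin (ph s u)

lemma ph_cont (s : ℝ) : Continuous (ph s) := by unfold ph; fun_prop

open MeasureTheory in
lemma cInt (n : ℕ) (s : ℝ) :
    Integrable (fun u : ℝ => u ^ n * Real.exp (-u ^ 2) * Real.cos (ph s u)) :=
  gint_mul n _ (Real.continuous_cos.comp (ph_cont s)) (fun _ => Real.abs_cos_le_one _)

open MeasureTheory in
lemma sInt (n : ℕ) (s : ℝ) :
    Integrable (fun u : ℝ => u ^ n * Real.exp (-u ^ 2) * Real.sin (ph s u)) :=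
  gint_mul n _ (Real.continuous_sin.comp (ph_cont s)) (fun _ => Real.abs_sin_le_one _)

lemma ph_deriv (s u : ℝ) : HasDerivAt (fun s => ph s u) u s := by
  unfold ph
  have := ((((hasDerivAt_id s).sub_const 1).mul_const u).const_add (u ^ 3 / 3))
  simpa using this

open MeasureTheory in
lemma cI_deriv (n : ℕ) (s : ℝ) : HasDerivAt (cI n) (-sI (n + 1) s) s := by
  have h := (hasDerivAt_integral_of_dominated_loc_of_deriv_le (μ := volume)
    (F := fun s u : ℝ => u ^ n * Real.exp (-u ^ 2) * Real.cos (ph s u))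
    (F' := fun s u : ℝ => -(u ^ (n + 1) * Real.exp (-u ^ 2) * Real.sin (ph s u)))
    (bound := fun u => ‖u ^ (n + 1) * Real.exp (-u ^ 2)‖) (x₀ := s)
    Filter.univ_mem (Filter.Eventually.of_forall fun s => (cInt n s).aestronglyMeasurable)
    (cInt n s) (sInt (n + 1) s).neg.aestronglyMeasurable
    (Filter.Eventually.of_forall fun u x _ => by
      rw [norm_neg, norm_mul]
      exact mul_le_of_le_one_right (norm_nonneg _) (Real.abs_sin_le_one _))
    (gint (n + 1)).norm
    (Filter.Eventually.of_forall fun u x _ => by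
      have := ((ph_deriv x u).cos).const_mul (u ^ n * Real.exp (-u ^ 2))
      refine HasDerivAt.congr_deriv this ?_
      ring)).2
  rw [integral_neg] at h
  exact h

open MeasureTheory in
lemma sI_deriv (n : ℕ) (s : ℝ) : HasDerivAt (sI n) (cI (n + 1) s) s := by
  have h := (hasDerivAt_integral_of_dominated_loc_of_deriv_le (μ := volume)
    (F := fun s u : ℝ => u ^ n * Real.exp (-u ^ 2) * Real.sin (ph s u))
    (F' := fun s u : ℝ => (u ^ (n + 1) * Real.exp (-u ^ 2) * Real.cos (ph s u)))
    (bound := fun u => ‖u ^ (n + 1) * Real.exp (-u ^ 2)‖) (x₀ := s)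
    Filter.univ_mem (Filter.Eventually.of_forall fun s => (sInt n s).aestronglyMeasurable)
    (sInt n s) (cInt (n + 1) s).aestronglyMeasurable
    (Filter.Eventually.of_forall fun u x _ => by
      rw [norm_mul]
      exact mul_le_of_le_one_right (norm_nonneg _) (Real.abs_cos_le_one _))
    (gint (n + 1)).norm
    (Filter.Eventually.of_forall fun u x _ => by
      have := ((ph_deriv x u).sin).const_mul (u ^ n * Real.exp (-u ^ 2))
      refine HasDerivAt.congr_deriv this ?_
      ring)).2
  exact h

lemma gauss_deriv (u : ℝ) :
    HasDerivAt (fun u : ℝ => Real.exp (-u ^ 2)) (Real.exp (-u ^ 2) * (-(2 * u))) u := by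
  have := ((hasDerivAt_pow 2 u).neg).exp
  simpa using this

open MeasureTheory in
lemma airy_rel (s : ℝ) : cI 2 s + (s - 1) * cI 0 s - 2 * sI 1 s = 0 := by
  have hd : ∀ u : ℝ, HasDerivAt (fun u : ℝ => u ^ 0 * Real.exp (-u ^ 2) * Real.sin (ph s u))
      (u ^ 2 * Real.exp (-u ^ 2) * Real.cos (ph s u)
        + (s - 1) * (u ^ 0 * Real.exp (-u ^ 2) * Real.cos (ph s u))
        - 2 * (u ^ 1 * Real.exp (-u ^ 2) * Real.sin (ph s u))) u := by
    intro u
    have hp : HasDerivAt (ph s) (u ^ 2 + (s - 1)) u := by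
      have := ((hasDerivAt_pow 3 u).div_const 3).add ((hasDerivAt_id u).const_mul (s - 1))
      unfold ph
      refine HasDerivAt.congr_deriv this ?_
      simp
    have := (gauss_deriv u).mul hp.sin
    simp only [pow_zero, one_mul]
    refine HasDerivAt.congr_deriv this ?_
    ring
  have i1 := (cInt 2 s).add ((cInt 0 s).const_mul (s - 1))
  have i2 := (sInt 1 s).const_mul 2
  have h := integral_eq_zero_of_hasDerivAt_of_integrable hd (i1.sub i2) (sInt 0 s)
  have e1 := integral_sub i1 i2
  have e2 := integral_add (cInt 2 s) ((cInt 0 s).const_mul (s - 1))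
  simp only [Pi.add_apply] at e1
  rw [e1, e2, integral_const_mul, integral_const_mul] at h
  exact h

open MeasureTheory in
lemma cI_pos : 0 < cI 0 1 := by
  have hd : ∀ u : ℝ, HasDerivAt
      (fun u : ℝ => -(1/2 * (u ^ 5 * Real.exp (-u ^ 2)) + 5/4 * (u ^ 3 * Real.exp (-u ^ 2))
        + 15/8 * (u ^ 1 * Real.exp (-u ^ 2))))
      (u ^ 6 * Real.exp (-u ^ 2) - 15 / 8 * (u ^ 0 * Real.exp (-u ^ 2))) u := by
    intro u
    have g := gauss_deriv u
    have := (((((hasDerivAt_pow 5 u).mul g).const_mul (1/2)).add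
      (((hasDerivAt_pow 3 u).mul g).const_mul (5/4))).add
      (((hasDerivAt_pow 1 u).mul g).const_mul (15/8))).neg
    refine HasDerivAt.congr_deriv this ?_
    norm_num
    ring
  have i1 := (gint 6).sub ((gint 0).const_mul (15/8))
  have h := integral_eq_zero_of_hasDerivAt_of_integrable hd i1
    ((((gint 5).const_mul (1/2)).add ((gint 3).const_mul (5/4))).add
      ((gint 1).const_mul (15/8))).neg
  rw [integral_sub (gint 6) ((gint 0).const_mul (15/8)), integral_const_mul] at h
  have hp : 0 < ∫ u : ℝ, u ^ 0 * Real.exp (-u ^ 2) := by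
    have := integral_gaussian 1
    simp only [neg_mul, one_mul, div_one] at this
    simp only [pow_zero, one_mul, this]
    exact Real.sqrt_pos.2 Real.pi_pos
  have i2 := (gint 0).sub ((gint 6).const_mul (1/18))
  have hle : ∫ u : ℝ, (u ^ 0 * Real.exp (-u ^ 2) - 1/18 * (u ^ 6 * Real.exp (-u ^ 2))) ≤ cI 0 1 := by
    refine integral_mono i2 (cInt 0 1) fun u => ?_
    have := mul_le_mul_of_nonneg_left (Real.one_sub_sq_div_two_le_cos (x := ph 1 u))
      (Real.exp_pos (-u ^ 2)).le
    have e : ph 1 u = u ^ 3 / 3 := by unfold ph; ring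
    rw [e] at this
    simp only [e, pow_zero, one_mul]
    refine le_trans (le_of_eq ?_) this
    ring
  rw [integral_sub (gint 0) ((gint 6).const_mul (1/18)), integral_const_mul] at hle
  linarith

open MeasureTheory in
lemma cI_bd (n : ℕ) : ∃ M, ∀ s, |cI n s| ≤ M := by
  refine ⟨∫ u : ℝ, ‖u ^ n * Real.exp (-u ^ 2)‖, fun s => ?_⟩
  refine norm_integral_le_of_norm_le (G := ℝ) (gint n).norm (Filter.Eventually.of_forall fun u => ?_)
  rw [norm_mul]
  exact mul_le_of_le_one_right (norm_nonneg _) (Real.abs_cos_le_one _)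

open MeasureTheory in
lemma sI_bd (n : ℕ) : ∃ M, ∀ s, |sI n s| ≤ M := by
  refine ⟨∫ u : ℝ, ‖u ^ n * Real.exp (-u ^ 2)‖, fun s => ?_⟩
  refine norm_integral_le_of_norm_le (G := ℝ) (gint n).norm (Filter.Eventually.of_forall fun u => ?_)
  rw [norm_mul]
  exact mul_le_of_le_one_right (norm_nonneg _) (Real.abs_sin_le_one _)

lemma exists_airy : ∃ A A1 : ℝ → ℝ, (∀ s, HasDerivAt A (A1 s) s) ∧
    (∀ s, HasDerivAt A1 (s * A s) s) ∧
    (∃ M, ∀ s, |A s| ≤ M * Real.exp (-s)) ∧ (∃ M, ∀ s, |A1 s| ≤ M * Real.exp (-s)) ∧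
    (∀ s, 0 ≤ s → A s = 0 → A1 s = 0 → False) := by
  have he : ∀ s : ℝ, HasDerivAt (fun s : ℝ => Real.exp (-s)) (-Real.exp (-s)) s := by
    intro s
    have := (hasDerivAt_neg s).exp
    simpa using this
  have hA : ∀ s, HasDerivAt (fun s => Real.exp (-s) * cI 0 s)
      (Real.exp (-s) * (-sI 1 s - cI 0 s)) s := by
    intro s
    have := (he s).mul (cI_deriv 0 s)
    refine HasDerivAt.congr_deriv this ?_
    ring
  have hA1 : ∀ s, HasDerivAt (fun s => Real.exp (-s) * (-sI 1 s - cI 0 s))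
      (s * (Real.exp (-s) * cI 0 s)) s := by
    intro s
    have := (he s).mul ((sI_deriv 1 s).neg.sub (cI_deriv 0 s))
    refine HasDerivAt.congr_deriv this ?_
    have h := airy_rel s
    simp only [Pi.sub_apply, Pi.neg_apply]
    linear_combination -Real.exp (-s) * h
  refine ⟨_, _, hA, hA1, ?_, ?_, ?_⟩
  · obtain ⟨M, hM⟩ := cI_bd 0
    refine ⟨M, fun s => ?_⟩
    rw [abs_mul, Real.abs_exp, mul_comm]
    exact mul_le_mul_of_nonneg_right (hM s) (Real.exp_pos _).le
  · obtain ⟨M, hM⟩ := cI_bd 0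
    obtain ⟨N, hN⟩ := sI_bd 1
    refine ⟨N + M, fun s => ?_⟩
    rw [abs_mul, Real.abs_exp, mul_comm]
    refine mul_le_mul_of_nonneg_right ?_ (Real.exp_pos _).le
    have := abs_sub (-sI 1 s) (cI 0 s)
    rw [abs_neg] at this
    linarith [hM s, hN s]
  · generalize hAe : (fun s => Real.exp (-s) * cI 0 s) = A at *
    generalize hA1e : (fun s => Real.exp (-s) * (-sI 1 s - cI 0 s)) = A1 at *
    have hA' : ∀ s, HasDerivAt A (A1 s) s := by rw [← hA1e]; exact hA
    have hA1' : ∀ s, HasDerivAt A1 (s * A s) s := by rw [← hAe]; exact hA1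
    have hpos : 0 < A 1 := by
      rw [← hAe]; exact mul_pos (Real.exp_pos _) cI_pos
    have hE : ∀ s, HasDerivAt (fun s => A s ^ 2 + A1 s ^ 2) (2 * (1 + s) * (A s * A1 s)) s := by
      intro s
      have := ((hA' s).pow 2).add ((hA1' s).pow 2)
      refine HasDerivAt.congr_deriv this ?_
      norm_num
      ring
    have hx : ∀ σ s : ℝ, HasDerivAt (fun s : ℝ => Real.exp (σ * (s + s ^ 2 / 2)))
        (Real.exp (σ * (s + s ^ 2 / 2)) * (σ * (1 + s))) s := by
      intro σ s
      have := ((((hasDerivAt_id s).add ((hasDerivAt_pow 2 s).div_const 2)).const_mul σ)).exp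
      refine HasDerivAt.congr_deriv this ?_
      norm_num
    have hm := fun σ s => (hx σ s).mul (hE s)
    intro s hs h0 h1
    replace h0 : A s = 0 := by rw [← hAe]; exact h0
    replace h1 : A1 s = 0 := by rw [← hA1e]; exact h1
    have hE1 : 0 < A 1 ^ 2 + A1 1 ^ 2 := by positivity
    rcases le_total s 1 with h | h
    · have : AntitoneOn (fun s => Real.exp (-1 * (s + s ^ 2 / 2)) * (A s ^ 2 + A1 s ^ 2)) (Set.Ici 0) := by
        refine antitoneOn_of_deriv_nonpos (convex_Ici 0)
          (fun x _ => (hm (-1) x).continuousAt.continuousWithinAt)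
          (fun x _ => (hm (-1) x).differentiableAt.differentiableWithinAt) fun x hx => ?_
        rw [interior_Ici] at hx
        have hx : 0 < x := hx
        refine le_of_eq_of_le (hm (-1) x).deriv ?_
        have : 0 ≤ Real.exp (-1 * (x + x ^ 2 / 2)) * (1 + x) * (A x - A1 x) ^ 2 := by positivity
        linarith
      have := this (show (s : ℝ) ∈ Set.Ici 0 from hs) (show (1 : ℝ) ∈ Set.Ici 0 from zero_le_one (α := ℝ)) h
      simp only [h0, h1] at this
      have h3 := mul_pos (Real.exp_pos (-1 * (1 + 1 ^ 2 / 2))) hE1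
      norm_num at this h3
      linarith
    · have : MonotoneOn (fun s => Real.exp (1 * (s + s ^ 2 / 2)) * (A s ^ 2 + A1 s ^ 2)) (Set.Ici 0) := by
        refine monotoneOn_of_deriv_nonneg (convex_Ici 0)
          (fun x _ => (hm (1) x).continuousAt.continuousWithinAt)
          (fun x _ => (hm (1) x).differentiableAt.differentiableWithinAt) fun x hx => ?_
        rw [interior_Ici] at hx
        have hx : 0 < x := hx
        refine le_of_le_of_eq ?_ (hm (1) x).deriv.symm
        have : 0 ≤ Real.exp (1 * (x + x ^ 2 / 2)) * (1 + x) * (A x + A1 x) ^ 2 := by positivity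
        linarith
      have := this (show (1 : ℝ) ∈ Set.Ici 0 from zero_le_one (α := ℝ)) (show (s : ℝ) ∈ Set.Ici 0 from hs) h
      simp only [h0, h1] at this
      have h3 := mul_pos (Real.exp_pos (1 * (1 + 1 ^ 2 / 2))) hE1
      norm_num at this h3
      linarith
/-- super-polynomial decay -/
def Dec (f : ℝ → ℝ) : Prop := ∀ N : ℕ, ∃ M, ∀ t : ℝ, |t ^ N * f t| ≤ M

lemma Dec.add {f g : ℝ → ℝ} (hf : Dec f) (hg : Dec g) : Dec (fun t => f t + g t) := by
  intro N
  obtain ⟨M, hM⟩ := hf N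
  obtain ⟨M', hM'⟩ := hg N
  refine ⟨M + M', fun t => ?_⟩
  rw [mul_add]
  exact (abs_add_le _ _).trans (add_le_add (hM t) (hM' t))

lemma Dec.mul {f : ℝ → ℝ} (hf : Dec f) (a : ℝ) (n : ℕ) : Dec (fun t => a * t ^ n * f t) := by
  intro N
  obtain ⟨M, hM⟩ := hf (N + n)
  refine ⟨|a| * M, fun t => ?_⟩
  have : t ^ N * (a * t ^ n * f t) = a * (t ^ (N + n) * f t) := by ring
  rw [this, abs_mul]
  exact mul_le_mul_of_nonneg_left (hM t) (abs_nonneg _)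

lemma Dec.refl {f : ℝ → ℝ} (hf : Dec f) : Dec (fun t => f (-t)) := by
  intro N
  obtain ⟨M, hM⟩ := hf N
  refine ⟨M, fun t => ?_⟩
  have := hM (-t)
  rw [abs_mul, abs_pow, abs_neg] at this
  rwa [abs_mul, abs_pow]

lemma Dec.of_gauss {c K : ℝ} (hc : 0 < c) {f : ℝ → ℝ}
    (hf : ∀ t, |f t| ≤ K * Real.exp (-(c * t ^ 2))) : Dec f := by
  intro N
  refine ⟨K * (1 + N.factorial / c ^ N), fun t => ?_⟩
  have hK : 0 ≤ K := by
    have := (abs_nonneg _).trans (hf 0)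
    simpa using this
  have h1 := Real.pow_div_factorial_le_exp (c * t ^ 2) (by positivity) N
  have hfac : (0 : ℝ) < N.factorial := by exact_mod_cast N.factorial_pos
  have he := Real.exp_pos (c * t ^ 2)
  have h2 : |t ^ N| ≤ 1 + (t ^ N) ^ 2 := by
    rw [← sq_abs]
    nlinarith [sq_nonneg (|t ^ N| - 1), abs_nonneg (t ^ N)]
  have h3 : (t ^ N) ^ 2 ≤ N.factorial / c ^ N * Real.exp (c * t ^ 2) := by
    rw [div_le_iff₀ hfac, mul_pow] at h1
    rw [div_mul_eq_mul_div, le_div_iff₀ (by positivity)]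
    calc (t ^ N) ^ 2 * c ^ N = c ^ N * (t ^ 2) ^ N := by ring
      _ ≤ _ := h1
      _ = _ := by ring
  have h4 : 1 ≤ Real.exp (c * t ^ 2) := Real.one_le_exp (by positivity)
  rw [abs_mul]
  calc |t ^ N| * |f t| ≤ ((1 + N.factorial / c ^ N) * Real.exp (c * t ^ 2)) *
        (K * Real.exp (-(c * t ^ 2))) := by
        refine mul_le_mul (by linarith) (hf t) (abs_nonneg _) (by positivity)
    _ = _ := by
        rw [Real.exp_neg]
        field_simp

structure Good (μ : ℝ) (W W1 : ℝ → ℝ) : Prop where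
  d : ∀ t, HasDerivAt W (W1 t) t
  d1 : ∀ t, HasDerivAt W1 ((t ^ 4 / 36 + μ * t) * W t) t
  dec : Dec W
  dec1 : Dec W1
  nz : ∀ t, W t = 0 → W1 t = 0 → False

lemma good_base : ∃ W W1, Good (1 / 2) W W1 := by
  obtain ⟨A, A1, hA, hA1, ⟨M, hM⟩, ⟨M1, hM1⟩, hnz⟩ := exists_airy
  obtain ⟨c, hc, hc3⟩ : ∃ c : ℝ, 0 < c ∧ c ^ 3 = 1 / 144 := by
    refine ⟨(1 / 144 : ℝ) ^ ((1 : ℝ) / 3), by positivity, ?_⟩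
    rw [← Real.rpow_natCast, ← Real.rpow_mul (by norm_num)]
    norm_num
  have hs : ∀ t : ℝ, HasDerivAt (fun t : ℝ => c * t ^ 2) (2 * c * t) t := by
    intro t
    refine ((hasDerivAt_pow 2 t).const_mul c).congr_deriv ?_
    norm_num
    ring
  have hB : ∀ t : ℝ, HasDerivAt (fun t => A (c * t ^ 2)) (A1 (c * t ^ 2) * (2 * c * t)) t :=
    fun t => (hA (c * t ^ 2)).comp t (hs t)
  have hB1 : ∀ t : ℝ, HasDerivAt (fun t => A1 (c * t ^ 2))
      (c * t ^ 2 * A (c * t ^ 2) * (2 * c * t)) t :=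
    fun t => (hA1 (c * t ^ 2)).comp t (hs t)
  have dB : Dec (fun t => A (c * t ^ 2)) := Dec.of_gauss hc (fun t => hM _)
  have dB1 : Dec (fun t => A1 (c * t ^ 2)) := Dec.of_gauss hc (fun t => hM1 _)
  have hz : ∀ t : ℝ, A (c * t ^ 2) = 0 → A1 (c * t ^ 2) = 0 → False :=
    fun t => hnz _ (by positivity)
  refine ⟨fun t => t * A (c * t ^ 2) + 12 * c * A1 (c * t ^ 2),
    fun t => (1 + t ^ 3 / 6) * A (c * t ^ 2) + 2 * c * t ^ 2 * A1 (c * t ^ 2), ?_, ?_, ?_, ?_, ?_⟩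
  · intro t
    refine (((hasDerivAt_id t).mul (hB t)).add ((hB1 t).const_mul (12 * c))).congr_deriv ?_
    simp only [id]
    linear_combination (24 * t ^ 3 * A (c * t ^ 2)) * hc3
  · intro t
    have h1 : HasDerivAt (fun t : ℝ => 1 + t ^ 3 / 6) (t ^ 2 / 2) t := by
      refine (((hasDerivAt_pow 3 t).div_const 6).const_add 1).congr_deriv ?_
      norm_num
      ring
    have h2 : HasDerivAt (fun t : ℝ => 2 * c * t ^ 2) (4 * c * t) t := by
      refine ((hasDerivAt_pow 2 t).const_mul (2 * c)).congr_deriv ?_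
      norm_num
      ring
    refine ((h1.mul (hB t)).add (h2.mul (hB1 t))).congr_deriv ?_
    linear_combination (4 * t ^ 5 * A (c * t ^ 2)) * hc3
  · convert (dB.mul 1 1).add (dB1.mul (12 * c) 0) using 2 with t
    ring
  · convert ((dB.mul 1 0).add (dB.mul (1/6) 3)).add (dB1.mul (2 * c) 2) using 2 with t
    ring
  · intro t h0 h1
    have hA0 : A (c * t ^ 2) = 0 := by
      linear_combination h1 - t ^ 2 / 6 * h0
    refine hz t hA0 ?_
    rw [hA0, mul_zero, zero_add] at h0
    rcases mul_eq_zero.1 h0 with h | h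
    · exact absurd h (by positivity)
    · exact h

lemma Good.refl {μ : ℝ} {W W1 : ℝ → ℝ} (h : Good μ W W1) :
    Good (-μ) (fun t => W (-t)) (fun t => -W1 (-t)) := by
  refine ⟨fun t => ?_, fun t => ?_, h.dec.refl, ?_, fun t h0 h1 => h.nz (-t) h0 (by simpa using h1)⟩
  · refine ((h.d (-t)).comp t (hasDerivAt_neg t)).congr_deriv ?_
    ring
  · refine (((h.d1 (-t)).comp t (hasDerivAt_neg t)).neg).congr_deriv ?_
    ring
  · convert h.dec1.refl.mul (-1) 0 using 2 with t
    ring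

lemma Good.neg {μ : ℝ} {W W1 : ℝ → ℝ} (h : Good μ W W1) :
    Good μ (fun t => -W t) (fun t => -W1 t) := by
  refine ⟨fun t => (h.d t).neg, fun t => ((h.d1 t).neg).congr_deriv (by ring), ?_, ?_,
    fun t h0 h1 => h.nz t (by simpa using h0) (by simpa using h1)⟩
  · convert h.dec.mul (-1) 0 using 2 with t
    ring
  · convert h.dec1.mul (-1) 0 using 2 with t
    ring

lemma Good.step {μ : ℝ} {W W1 : ℝ → ℝ} (h : Good μ W W1) (h1 : 3 * μ - 1 ≠ 0)
    (h2 : 3 * μ - 2 ≠ 0) : ∃ V V1, Good (μ - 1) V V1 := by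
  refine ⟨fun t => (3 * μ - 1 + t ^ 3 / 6) * W t - t * W1 t,
    fun t => (3 * μ - 2 + t ^ 3 / 6) * W1 t + (t ^ 2 / 2 - t * (t ^ 4 / 36 + μ * t)) * W t,
    fun t => ?_, fun t => ?_, ?_, ?_, fun t e0 e1 => ?_⟩
  · have hp : HasDerivAt (fun t : ℝ => 3 * μ - 1 + t ^ 3 / 6) (t ^ 2 / 2) t := by
      refine (((hasDerivAt_pow 3 t).div_const 6).const_add _).congr_deriv ?_
      norm_num
      ring
    refine ((hp.mul (h.d t)).sub ((hasDerivAt_id t).mul (h.d1 t))).congr_deriv ?_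
    simp only [id]
    ring
  · have hp : HasDerivAt (fun t : ℝ => 3 * μ - 2 + t ^ 3 / 6) (t ^ 2 / 2) t := by
      refine (((hasDerivAt_pow 3 t).div_const 6).const_add _).congr_deriv ?_
      norm_num
      ring
    have hp2 : HasDerivAt (fun t : ℝ => t ^ 2 / 2 - t * (t ^ 4 / 36 + μ * t))
        (t - ((t ^ 4 / 36 + μ * t) + t * (t ^ 3 / 9 + μ))) t := by
      refine (((hasDerivAt_pow 2 t).div_const 2).sub ((hasDerivAt_id t).mul
        (((hasDerivAt_pow 4 t).div_const 36).add ((hasDerivAt_id t).const_mul μ)))).congr_deriv ?_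
      simp only [id, Pi.add_apply]
      push_cast
      ring
    refine ((hp.mul (h.d1 t)).add (hp2.mul (h.d t))).congr_deriv ?_
    ring
  · convert ((h.dec.mul (3 * μ - 1) 0).add (h.dec.mul (1/6) 3)).add (h.dec1.mul (-1) 1) using 2 with t
    ring
  · convert ((h.dec1.mul (3 * μ - 2) 0).add (h.dec1.mul (1/6) 3)).add
      (((h.dec.mul (1/2 - μ) 2)).add (h.dec.mul (-1/36) 5)) using 2 with t
    ring
  · have e2 : (3 * μ - 1) * (3 * μ - 2) * W t = 0 := by
      linear_combination t * e1 + (3 * μ - 2 + t ^ 3 / 6) * e0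
    have hW : W t = 0 := by
      rcases mul_eq_zero.1 e2 with e | e
      · exact absurd e (mul_ne_zero h1 h2)
      · exact e
    refine h.nz t hW ?_
    simp only [hW, mul_zero, zero_sub, neg_eq_zero, add_zero] at e0 e1
    rcases mul_eq_zero.1 e0 with e | e
    · rcases mul_eq_zero.1 e1 with e' | e'
      · rw [e] at e'
        norm_num at e'
        exact absurd e' h2
      · exact e'
    · exact e

lemma good_nat (n : ℕ) : ∃ W W1, Good (1 / 2 - (n : ℝ)) W W1 := by
  induction n with
  | zero => simpa using good_base
  | succ n ih =>
    obtain ⟨W, W1, h⟩ := ih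
    have h1 : 3 * (1 / 2 - (n : ℝ)) - 1 ≠ 0 := by
      intro e
      have e' : 6 * (n : ℝ) = 1 := by linarith
      have : 6 * n = 1 := by exact_mod_cast e'
      omega
    have h2 : 3 * (1 / 2 - (n : ℝ)) - 2 ≠ 0 := by
      have : (0 : ℝ) ≤ n := Nat.cast_nonneg n
      intro e
      linarith
    have := h.step h1 h2
    push_cast
    rwa [← sub_sub]

lemma good_int (k : ℤ) : ∃ W W1, Good ((k : ℝ) + 1 / 2) W W1 := by
  rcases le_or_gt k 0 with hk | hk
  · obtain ⟨n, hn⟩ := Int.eq_ofNat_of_zero_le (neg_nonneg.2 hk)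
    obtain ⟨W, W1, h⟩ := good_nat n
    refine ⟨W, W1, ?_⟩
    have : (k : ℝ) = -(n : ℝ) := by
      have : k = -(n : ℤ) := by omega
      rw [this]; push_cast; rfl
    rw [this]
    convert h using 1
    ring
  · obtain ⟨n, hn⟩ := Int.eq_ofNat_of_zero_le (show 0 ≤ k + 1 by omega)
    obtain ⟨W, W1, h⟩ := good_nat n
    have h' := h.refl
    have e : (k : ℝ) + 1 = (n : ℝ) := by exact_mod_cast hn
    have e2 : -(1 / 2 - (n : ℝ)) = (k : ℝ) + 1 / 2 := by rw [← e]; ring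
    rw [e2] at h'
    exact ⟨_, _, h'⟩
lemma mono_Ici {T : ℝ} {f f' : ℝ → ℝ} (hf : ∀ x, T ≤ x → HasDerivAt f (f' x) x)
    (h : ∀ x, T ≤ x → 0 ≤ f' x) : MonotoneOn f (Set.Ici T) := by
  refine monotoneOn_of_deriv_nonneg (convex_Ici T)
    (fun x hx => (hf x hx).continuousAt.continuousWithinAt)
    (fun x hx => ?_) fun x hx => ?_
  · rw [interior_Ici] at hx
    exact (hf x (le_of_lt hx)).differentiableAt.differentiableWithinAt
  · rw [interior_Ici] at hx
    rw [(hf x (le_of_lt hx)).deriv]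
    exact h x (le_of_lt hx)

lemma nonpos_Ici {T : ℝ} {f f' : ℝ → ℝ} (hf : ∀ x, T ≤ x → HasDerivAt f (f' x) x)
    (h : ∀ x, T ≤ x → 0 ≤ f' x) (hl : Tendsto f atTop (nhds 0)) :
    ∀ x, T ≤ x → f x ≤ 0 := by
  intro x hx
  refine ge_of_tendsto hl ?_
  filter_upwards [eventually_ge_atTop x] with y hy
  exact mono_Ici hf h hx (hx.trans hy) hy

lemma Dec.tendsto {f : ℝ → ℝ} (hf : Dec f) : Tendsto f atTop (nhds 0) := by
  obtain ⟨M, hM⟩ := hf 1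
  have : Tendsto (fun t : ℝ => M / t) atTop (nhds 0) := tendsto_const_nhds.div_atTop tendsto_id
  refine squeeze_zero_norm' ?_ this
  filter_upwards [eventually_gt_atTop 0] with t ht
  rw [le_div_iff₀ ht, Real.norm_eq_abs]
  have := hM t
  rw [pow_one, abs_mul, abs_of_pos ht] at this
  linarith

lemma asym_pos {μ l T : ℝ} {w w1 : ℝ → ℝ} (h : Good μ w w1) (hl : μ = -(l + 1) / 3)
    (hT1 : 1 ≤ T) (hT2 : 36 * |μ| ≤ T) (hT3 : 12 * |l| ≤ T)
    (hw : ∀ x, T ≤ x → 0 < w x) (hw1 : ∀ x, T ≤ x → w1 x ≤ 0) :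
    ∃ C, C ≠ 0 ∧ Tendsto (fun t : ℝ => w t / (t ^ l * Real.exp (-t ^ 3 / 18))) atTop (nhds C) := by
  set E : ℝ → ℝ := fun t => t ^ l * Real.exp (-t ^ 3 / 18) with hE
  set p : ℝ → ℝ := fun t => t ^ 2 / 6 - l / t with hp
  have hpos : ∀ x, T ≤ x → 0 < x := fun x hx => by linarith
  have hEpos : ∀ x, T ≤ x → 0 < E x := fun x hx =>
    mul_pos (Real.rpow_pos_of_pos (hpos x hx) l) (Real.exp_pos _)
  have hdE : ∀ x, T ≤ x → HasDerivAt E (-p x * E x) x := by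
    intro x hx
    have hx0 := hpos x hx
    have h1 : HasDerivAt (fun t : ℝ => t ^ l) (l * x ^ (l - 1)) x :=
      Real.hasDerivAt_rpow_const (Or.inl hx0.ne')
    have h2 : HasDerivAt (fun t : ℝ => Real.exp (-t ^ 3 / 18))
        (Real.exp (-x ^ 3 / 18) * (-x ^ 2 / 6)) x := by
      refine ((((hasDerivAt_pow 3 x).neg).div_const 18).exp).congr_deriv ?_
      simp only [Pi.neg_apply]
      push_cast
      ring
    refine (h1.mul h2).congr_deriv ?_
    rw [Real.rpow_sub_one hx0.ne']
    simp only [hE, hp]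
    field_simp
    ring
  have hdp : ∀ x, T ≤ x → HasDerivAt p (x / 3 + l / x ^ 2) x := by
    intro x hx
    have hx0 := hpos x hx
    refine (((hasDerivAt_pow 2 x).div_const 6).sub
      ((hasDerivAt_const x l).div (hasDerivAt_id x) hx0.ne')).congr_deriv ?_
    simp only [id]
    push_cast
    field_simp
    ring
  have hl1 := le_abs_self l
  have hp12 : ∀ x, T ≤ x → x ^ 2 / 12 ≤ p x := by
    intro x hx
    have hx0 := hpos x hx
    have : l / x ≤ x ^ 2 / 12 := by
      rw [div_le_iff₀ hx0]
      have : x ≤ x ^ 3 := le_self_pow₀ (by linarith) (by norm_num)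
      nlinarith
    simp only [hp]
    linarith
  have hEanti : ∀ x, T ≤ x → E x ≤ E T := by
    intro x hx
    have := mono_Ici (T := T) (f := fun t => -E t) (fun y hy => (hdE y hy).neg)
      (fun y hy => by
        have := mul_nonneg ((by positivity : 0 ≤ y ^ 2 / 12).trans (hp12 y hy)) (hEpos y hy).le
        linarith) (Set.mem_Ici.2 le_rfl) (Set.mem_Ici.2 hx) hx
    simpa using this
  set F : ℝ → ℝ := fun t => E t * (w1 t + p t * w t) with hF
  set c := l * (l - 1) with hc
  have hdF : ∀ x, T ≤ x → HasDerivAt F (-c * E x * w x / x ^ 2) x := by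
    intro x hx
    have hx0 := hpos x hx
    refine ((hdE x hx).mul ((h.d1 x).add ((hdp x hx).mul (h.d x)))).congr_deriv ?_
    simp only [Pi.add_apply, Pi.mul_apply, hl, hp, hc]
    field_simp
    ring
  set K := 12 * |c| with hK
  have hK0 : 0 ≤ K := by positivity
  set B : ℝ → ℝ := fun t => K * (E t * w t / t ^ 4) with hB
  have hdB : ∀ x, T ≤ x → HasDerivAt B
      (K * (E x * ((-p x - 4 / x) * w x + w1 x) / x ^ 4)) x := by
    intro x hx
    have hx0 := hpos x hx
    refine ((((hdE x hx).mul (h.d x)).div (hasDerivAt_pow 4 x) (by positivity)).const_mul K).congr_deriv ?_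
    simp only [Pi.mul_apply]
    push_cast
    field_simp
    ring
  have hB' : ∀ x, T ≤ x → K * (E x * ((-p x - 4 / x) * w x + w1 x) / x ^ 4) ≤
      -(|c| * E x * w x / x ^ 2) := by
    intro x hx
    have hx0 := hpos x hx
    have h1 : (-p x - 4 / x) * w x + w1 x ≤ -(x ^ 2 / 12) * w x := by
      have : 0 ≤ 4 / x := by positivity
      nlinarith [hw x hx, hw1 x hx, hp12 x hx]
    have h2 : E x * ((-p x - 4 / x) * w x + w1 x) / x ^ 4 ≤ E x * (-(x ^ 2 / 12) * w x) / x ^ 4 := by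
      have := (hEpos x hx).le
      gcongr
    refine (mul_le_mul_of_nonneg_left h2 hK0).trans (le_of_eq ?_)
    rw [hK]
    field_simp
  have hww : ∀ x, T ≤ x → 0 ≤ E x * w x / x ^ 2 := by
    intro x hx
    have hx0 := hpos x hx
    have := hEpos x hx
    have := hw x hx
    positivity
  have tE : ∀ g : ℝ → ℝ, Tendsto g atTop (nhds 0) → Tendsto (fun t => E t * g t) atTop (nhds 0) := by
    intro g hg
    have h0 : Tendsto (fun t => E T * ‖g t‖) atTop (nhds 0) := by
      simpa using hg.norm.const_mul (E T)
    refine squeeze_zero_norm' ?_ h0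
    filter_upwards [eventually_ge_atTop T] with t ht
    rw [norm_mul, Real.norm_of_nonneg (hEpos t ht).le]
    exact mul_le_mul_of_nonneg_right (hEanti t ht) (norm_nonneg _)
  have tF : Tendsto F atTop (nhds 0) := by
    apply tE
    have h1 := h.dec1.tendsto
    have h2 := (h.dec.mul (1/6) 2).tendsto
    have h3 := h.dec.tendsto
    have h4 : Tendsto (fun t : ℝ => l / t) atTop (nhds 0) := tendsto_const_nhds.div_atTop tendsto_id
    have := h1.add (h2.sub (h4.mul h3))
    simp only [mul_zero, sub_zero, add_zero] at this
    refine this.congr fun t => ?_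
    simp only [hp]
    ring
  have tB : Tendsto B atTop (nhds 0) := by
    have h3 := h.dec.tendsto
    have h4 : Tendsto (fun t : ℝ => K / t ^ 4) atTop (nhds 0) :=
      tendsto_const_nhds.div_atTop (tendsto_pow_atTop (by norm_num))
    have := tE _ (h4.mul h3 |>.trans (by simp))
    refine this.congr fun t => ?_
    simp only [hB]
    ring
  have hcl := le_abs_self c
  have hcn := neg_abs_le c
  have up : ∀ x, T ≤ x → F x - B x ≤ 0 := by
    refine nonpos_Ici (fun x hx => (hdF x hx).sub (hdB x hx)) (fun x hx => ?_)
      (by simpa using tF.sub tB)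
    have e1 := hB' x hx
    have e2 := mul_nonneg (sub_nonneg.2 hcl) (hww x hx)
    have e3 : (|c| - c) * (E x * w x / x ^ 2) =
      -c * E x * w x / x ^ 2 + |c| * E x * w x / x ^ 2 := by ring
    linarith
  have dn : ∀ x, T ≤ x → -F x - B x ≤ 0 := by
    refine nonpos_Ici (fun x hx => (hdF x hx).neg.sub (hdB x hx)) (fun x hx => ?_)
      (by simpa using tF.neg.sub tB)
    have e1 := hB' x hx
    have e2 := mul_nonneg (sub_nonneg.2 hcn) (hww x hx)
    have e3 : (c - -|c|) * (E x * w x / x ^ 2) =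
      -(-c * E x * w x / x ^ 2) + |c| * E x * w x / x ^ 2 := by ring
    linarith
  have key : ∀ x, T ≤ x → |w1 x / w x + p x| ≤ K / x ^ 4 := by
    intro x hx
    have hx0 := hpos x hx
    have hwx := hw x hx
    have hEx := hEpos x hx
    have e : F x = E x * w x * (w1 x / w x + p x) := by
      simp only [hF]; field_simp
    have eB : B x = E x * w x * (K / x ^ 4) := by
      simp only [hB]; ring
    have u := up x hx
    have d := dn x hx
    rw [e, eB] at u d
    have hEw : 0 < E x * w x := by positivity
    rw [abs_le]
    constructor
    · refine le_of_mul_le_mul_left ?_ hEw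
      linarith
    · refine le_of_mul_le_mul_left ?_ hEw
      linarith
  have hdlog : ∀ x, T ≤ x → HasDerivAt (fun t => Real.log (w t) - Real.log (E t))
      (w1 x / w x + p x) x := by
    intro x hx
    refine (((h.d x).log (hw x hx).ne').sub ((hdE x hx).log (hEpos x hx).ne')).congr_deriv ?_
    have := hEpos x hx
    field_simp
    ring
  have hdr : ∀ x, T ≤ x → HasDerivAt (fun t : ℝ => K / 3 / t ^ 3) (-(K / x ^ 4)) x := by
    intro x hx
    have hx0 := hpos x hx
    refine ((hasDerivAt_const x (K / 3)).div (hasDerivAt_pow 3 x) (by positivity)).congr_deriv ?_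
    push_cast
    field_simp
    ring
  have m1 : MonotoneOn (fun t => Real.log (w t) - Real.log (E t) - K / 3 / t ^ 3) (Set.Ici T) :=
    mono_Ici (fun x hx => (hdlog x hx).sub (hdr x hx)) fun x hx => by
      have := (abs_le.1 (key x hx)).1
      linarith
  have m2 : MonotoneOn (fun t => -(Real.log (w t) - Real.log (E t)) - K / 3 / t ^ 3) (Set.Ici T) :=
    mono_Ici (fun x hx => (hdlog x hx).neg.sub (hdr x hx)) fun x hx => by
      have := (abs_le.1 (key x hx)).2
      linarith
  obtain ⟨L, hL⟩ : ∃ L, Tendsto (fun t => Real.log (w t) - Real.log (E t) - K / 3 / t ^ 3)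
      atTop (nhds L) := by
    set f := fun t => Real.log (w t) - Real.log (E t) - K / 3 / t ^ 3 with hf
    have hm : Monotone (fun t => f (max T t)) := fun a b hab =>
      m1 (Set.mem_Ici.2 (le_max_left _ _)) (Set.mem_Ici.2 (le_max_left _ _)) (max_le_max le_rfl hab)
    have hbd : BddAbove (Set.range (fun t => f (max T t))) := by
      refine ⟨-(-(Real.log (w T) - Real.log (E T)) - K / 3 / T ^ 3), ?_⟩
      rintro _ ⟨t, rfl⟩
      have hx : T ≤ max T t := le_max_left _ _
      have := m2 (Set.mem_Ici.2 le_rfl) (Set.mem_Ici.2 hx) hx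
      have h3 : 0 ≤ K / 3 / (max T t) ^ 3 := by
        have := hpos _ hx
        positivity
      simp only [hf] at this ⊢
      linarith
    refine ⟨_, (tendsto_atTop_ciSup hm hbd).congr' ?_⟩
    filter_upwards [eventually_ge_atTop T] with t ht
    rw [max_eq_right ht]
  have hr : Tendsto (fun t : ℝ => K / 3 / t ^ 3) atTop (nhds 0) :=
    tendsto_const_nhds.div_atTop (tendsto_pow_atTop (by norm_num))
  have hfin := (hL.add hr).rexp
  refine ⟨_, (Real.exp_pos _).ne', hfin.congr' ?_⟩
  filter_upwards [eventually_ge_atTop T] with t ht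
  rw [sub_add_cancel, Real.exp_sub, Real.exp_log (hw t ht), Real.exp_log (hEpos t ht)]

lemma asym {μ l : ℝ} {w w1 : ℝ → ℝ} (h : Good μ w w1) (hl : μ = -(l + 1) / 3) :
    ∃ C, C ≠ 0 ∧ Tendsto (fun t : ℝ => w t / (t ^ l * Real.exp (-t ^ 3 / 18))) atTop (nhds C) := by
  obtain ⟨T, hT1, hT2, hT3⟩ : ∃ T : ℝ, 1 ≤ T ∧ 36 * |μ| ≤ T ∧ 12 * |l| ≤ T := by
    refine ⟨1 + 36 * |μ| + 12 * |l|, ?_, ?_, ?_⟩ <;> nlinarith [abs_nonneg μ, abs_nonneg l]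
  have hww : ∀ x, T ≤ x → w x * w1 x ≤ 0 := by
    refine nonpos_Ici (fun x _ => (h.d x).mul (h.d1 x)) (fun x hx => ?_)
      (by simpa using h.dec.tendsto.mul h.dec1.tendsto)
    have : 0 ≤ x ^ 4 / 36 + μ * x := by
      have h1 : x ≤ x ^ 3 := le_self_pow₀ (by linarith) (by norm_num)
      have h2 := neg_abs_le μ
      have h3 : 0 ≤ x ^ 3 / 36 + μ := by linarith
      have h4 := mul_nonneg (show 0 ≤ x by linarith) h3
      linarith
    have := mul_nonneg this (sq_nonneg (w x))
    nlinarith [sq_nonneg (w1 x)]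
  have hm : MonotoneOn (fun x => -(w x) ^ 2) (Set.Ici T) :=
    mono_Ici (fun x _ => ((h.d x).pow 2).neg) (fun x hx => by
      have := hww x hx
      push_cast
      norm_num
      linarith)
  have hnz : ∀ x, T ≤ x → w x ≠ 0 := by
    intro x hx h0
    have hz : ∀ y, x ≤ y → w y = 0 := by
      intro y hy
      have := hm (Set.mem_Ici.2 hx) (Set.mem_Ici.2 (hx.trans hy)) hy
      simp only [h0] at this
      nlinarith [sq_nonneg (w y)]
    refine h.nz (x + 1) (hz _ (by linarith)) ?_
    have h1 : HasDerivAt w 0 (x + 1) := by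
      refine (hasDerivAt_const (x + 1) (0 : ℝ)).congr_of_eventuallyEq ?_
      filter_upwards [lt_mem_nhds (show x < x + 1 by linarith)] with y hy
      exact hz y hy.le
    exact (h.d (x + 1)).unique h1
  have hcont : Continuous w := continuous_iff_continuousAt.2 fun x => (h.d x).continuousAt
  have pos_of : ∀ v v1 : ℝ → ℝ, Continuous v → (∀ x, T ≤ x → v x ≠ 0) →
      (∀ x, T ≤ x → v x * v1 x ≤ 0) → 0 < v T →
      (∀ x, T ≤ x → 0 < v x) ∧ (∀ x, T ≤ x → v1 x ≤ 0) := by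
    intro v v1 hv hn hvv h0
    have hp : ∀ x, T ≤ x → 0 < v x := by
      intro x hx
      by_contra hneg
      obtain ⟨y, hy, hy0⟩ := intermediate_value_Icc' hx hv.continuousOn
        (show (0 : ℝ) ∈ Set.Icc (v x) (v T) from ⟨not_lt.1 hneg, h0.le⟩)
      exact hn y hy.1 hy0
    refine ⟨hp, fun x hx => ?_⟩
    by_contra hneg
    have := mul_pos (hp x hx) (not_le.1 hneg)
    linarith [hvv x hx]
  rcases lt_or_gt_of_ne (hnz T le_rfl) with h0 | h0
  · obtain ⟨a, b⟩ := pos_of (fun x => -w x) (fun x => -w1 x) hcont.neg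
      (fun x hx => neg_ne_zero.2 (hnz x hx)) (fun x hx => by simpa using hww x hx) (by simpa using h0)
    obtain ⟨C, hC, hC'⟩ := asym_pos h.neg hl hT1 hT2 hT3 a b
    refine ⟨-C, neg_ne_zero.2 hC, hC'.neg.congr fun t => ?_⟩
    ring
  · obtain ⟨a, b⟩ := pos_of w w1 hcont hnz hww h0
    exact asym_pos h hl hT1 hT2 hT3 a b
lemma Good.contDiff {μ : ℝ} {W W1 : ℝ → ℝ} (h : Good μ W W1) : ContDiff ℝ (⊤ : ℕ∞) W := by
  have hd : deriv W = W1 := funext fun t => (h.d t).deriv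
  have hd1 : deriv W1 = fun t => (t ^ 4 / 36 + μ * t) * W t := funext fun t => (h.d1 t).deriv
  have key : ∀ n : ℕ, ContDiff ℝ n W ∧ ContDiff ℝ n W1 := by
    intro n
    induction n with
    | zero =>
      exact ⟨contDiff_zero.2 (continuous_iff_continuousAt.2 fun x => (h.d x).continuousAt),
        contDiff_zero.2 (continuous_iff_continuousAt.2 fun x => (h.d1 x).continuousAt)⟩
    | succ n ih =>
      obtain ⟨i1, i2⟩ := ih
      push_cast
      refine ⟨contDiff_succ_iff_deriv.2 ⟨fun x => (h.d x).differentiableAt, by simp, ?_⟩,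
        contDiff_succ_iff_deriv.2 ⟨fun x => (h.d1 x).differentiableAt, by simp, ?_⟩⟩
      · rw [hd]; exact i2
      · rw [hd1]
        exact ContDiff.mul (by fun_prop) i1
  exact contDiff_infty.2 fun n => (key n).1

lemma bdd_of_limits {G : ℝ → ℝ} (hc : Continuous G) {a b : ℝ} (h1 : Tendsto G atBot (nhds a))
    (h2 : Tendsto G atTop (nhds b)) : ∃ M : ℝ, ∀ t, |G t| ≤ M := by
  have e1 := h1.abs.eventually (gt_mem_nhds (show |a| < |a| + 1 by linarith))
  have e2 := h2.abs.eventually (gt_mem_nhds (show |b| < |b| + 1 by linarith))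
  obtain ⟨p, hp⟩ := eventually_atBot.1 e1
  obtain ⟨q, hq⟩ := eventually_atTop.1 e2
  obtain ⟨M, hM⟩ := (isCompact_Icc (a := p) (b := q)).exists_bound_of_continuousOn hc.continuousOn
  refine ⟨max M (max (|a| + 1) (|b| + 1)), fun t => ?_⟩
  rcases le_total t p with h | h
  · exact (hp t h).le.trans ((le_max_left _ _).trans (le_max_right _ _))
  rcases le_total q t with h' | h'
  · exact (hq t h').le.trans ((le_max_right _ _).trans (le_max_right _ _))
  · exact (hM t ⟨h, h'⟩).trans (le_max_left _ _)

lemma selfSim_eq (l : ℝ) (H : ℝ → ℝ) (x y : ℝ) (hx : 0 < x) :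
    selfSimilar l (fun t => (1 + t ^ 2) ^ (-l / 2) * H t) x y
      = x ^ (l / 3) * H (y * x ^ (-(1 : ℝ) / 3)) := by
  unfold selfSimilar
  have h1 : x ^ ((2 : ℝ) / 3) * (x ^ (-(1 : ℝ) / 3)) ^ 2 = 1 := by
    rw [← Real.rpow_natCast, ← Real.rpow_mul hx.le, ← Real.rpow_add hx]
    norm_num
  have h2 : y ^ 2 + x ^ ((2 : ℝ) / 3)
      = x ^ ((2 : ℝ) / 3) * (1 + (y * x ^ (-(1 : ℝ) / 3)) ^ 2) := by
    linear_combination (-y ^ 2) * h1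
  have hpos : 0 < 1 + (y * x ^ (-(1 : ℝ) / 3)) ^ 2 := by positivity
  rw [h2, Real.mul_rpow (by positivity) hpos.le, ← Real.rpow_mul hx.le, ← mul_assoc,
    mul_assoc (x ^ _), ← Real.rpow_add hpos]
  have e1 : l / 2 + -l / 2 = 0 := by ring
  have e2 : (2 : ℝ) / 3 * (l / 2) = l / 3 := by ring
  rw [e1, e2, Real.rpow_zero, mul_one]

lemma pde {l : ℝ} {H H1 : ℝ → ℝ} (hH : ∀ t, HasDerivAt H (H1 t) t)
    (hH1 : ∀ t, HasDerivAt H1 (l / 3 * t * H t - t ^ 2 / 3 * H1 t) t) (x y : ℝ) (hx : 0 < x) :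
    y * deriv (fun s : ℝ => selfSimilar l (fun t => (1 + t ^ 2) ^ (-l / 2) * H t) s y) x
      - deriv (deriv (fun t : ℝ => selfSimilar l (fun t => (1 + t ^ 2) ^ (-l / 2) * H t) x t)) y
      = 0 := by
  set a := x ^ (-(1 : ℝ) / 3) with ha
  have ha3 : a ^ 3 * x = 1 := by
    rw [ha, ← Real.rpow_natCast, ← Real.rpow_mul hx.le]
    norm_num
    rw [Real.rpow_neg_one, inv_mul_cancel₀ hx.ne']
  have dx : HasDerivAt (fun s : ℝ => selfSimilar l (fun t => (1 + t ^ 2) ^ (-l / 2) * H t) s y)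
      ((l / 3 * (x ^ (l / 3) / x)) * H (y * a)
        + x ^ (l / 3) * (H1 (y * a) * (y * (-(1 : ℝ) / 3 * (a / x))))) x := by
    have h1 : HasDerivAt (fun s : ℝ => s ^ (l / 3)) (l / 3 * (x ^ (l / 3) / x)) x := by
      rw [← Real.rpow_sub_one hx.ne']
      exact Real.hasDerivAt_rpow_const (Or.inl hx.ne')
    have h2 : HasDerivAt (fun s : ℝ => y * s ^ (-(1 : ℝ) / 3)) (y * (-(1 : ℝ) / 3 * (a / x))) x := by
      rw [ha, ← Real.rpow_sub_one hx.ne']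
      exact (Real.hasDerivAt_rpow_const (Or.inl hx.ne')).const_mul y
    refine (h1.mul ((hH (y * a)).comp x h2)).congr_of_eventuallyEq ?_
    filter_upwards [lt_mem_nhds hx] with s hs
    exact selfSim_eq l H s y hs
  have ef : (fun t : ℝ => selfSimilar l (fun t => (1 + t ^ 2) ^ (-l / 2) * H t) x t)
      = fun t => x ^ (l / 3) * H (t * a) := funext fun t => selfSim_eq l H x t hx
  have hm : ∀ t : ℝ, HasDerivAt (fun t => t * a) a t := fun t => by
    simpa using (hasDerivAt_id t).mul_const a
  have dy : deriv (fun t => x ^ (l / 3) * H (t * a)) = fun t => x ^ (l / 3) * (H1 (t * a) * a) :=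
    funext fun t => (((hH (t * a)).comp t (hm t)).const_mul (x ^ (l / 3))).deriv
  have dyy := ((((hH1 (y * a)).comp y (hm y)).mul_const a).const_mul (x ^ (l / 3))).deriv
  have dyy' : deriv (fun t => x ^ (l / 3) * (H1 (t * a) * a)) y = _ := dyy
  rw [ef, dy, dyy', dx.deriv]
  have hdiv : ∀ z : ℝ, z / x = z * a ^ 3 := by
    intro z
    rw [div_eq_iff hx.ne']
    linear_combination (-z) * ha3
  rw [hdiv, hdiv]
  ring

theorem stmt0 (k : ℤ) :
    ∃ G : ℝ → ℝ,
      ContDiff ℝ (⊤ : ℕ∞) G ∧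
      (∃ M : ℝ, ∀ t : ℝ, |G t| ≤ M) ∧
      Tendsto G atBot (nhds 1) ∧
      Tendsto G atTop (nhds 0) ∧
      (∀ x y : ℝ, 0 < x →
        y * deriv (fun s : ℝ => selfSimilar (1 / 2 + 3 * (k : ℝ)) G s y) x
          - deriv (deriv (fun t : ℝ => selfSimilar (1 / 2 + 3 * (k : ℝ)) G x t)) y = 0) ∧
      (∀ y : ℝ, 0 < y →
        Tendsto (fun x : ℝ => selfSimilar (1 / 2 + 3 * (k : ℝ)) G x y)
          (nhdsWithin 0 (Ioi 0)) (nhds 0)) := by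
  obtain ⟨W, W1, h⟩ := good_int k
  generalize hl : 1 / 2 + 3 * (k : ℝ) = l
  have hμ : (k : ℝ) + 1 / 2 = (l + 1) / 3 := by rw [← hl]; ring
  rw [hμ] at h
  obtain ⟨C, hC, hlim⟩ := asym (l := l) h.refl (by ring)
  set H : ℝ → ℝ := fun t => C⁻¹ * (Real.exp (-t ^ 3 / 18) * W t) with hHdef
  set H1 : ℝ → ℝ := fun t => C⁻¹ * (Real.exp (-t ^ 3 / 18) * (W1 t - t ^ 2 / 6 * W t)) with hH1def
  have he : ∀ t : ℝ, HasDerivAt (fun t : ℝ => Real.exp (-t ^ 3 / 18))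
      (Real.exp (-t ^ 3 / 18) * (-t ^ 2 / 6)) t := by
    intro t
    refine ((((hasDerivAt_pow 3 t).neg).div_const 18).exp).congr_deriv ?_
    simp only [Pi.neg_apply]
    push_cast
    ring
  have hH : ∀ t, HasDerivAt H (H1 t) t := by
    intro t
    refine (((he t).mul (h.d t)).const_mul C⁻¹).congr_deriv ?_
    simp only [hH1def]
    ring
  have hH1 : ∀ t, HasDerivAt H1 (l / 3 * t * H t - t ^ 2 / 3 * H1 t) t := by
    intro t
    have h2 : HasDerivAt (fun t : ℝ => t ^ 2 / 6) (t / 3) t := by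
      refine ((hasDerivAt_pow 2 t).div_const 6).congr_deriv ?_
      push_cast
      ring
    refine (((he t).mul ((h.d1 t).sub (h2.mul (h.d t)))).const_mul C⁻¹).congr_deriv ?_
    simp only [hH1def, hHdef, Pi.sub_apply, Pi.mul_apply]
    ring
  have hsm : ContDiff ℝ (⊤ : ℕ∞) (fun t : ℝ => (1 + t ^ 2) ^ (-l / 2) * H t) := by
    refine ContDiff.mul (ContDiff.rpow_const_of_ne (by fun_prop) fun t => by positivity) ?_
    refine contDiff_const.mul (ContDiff.mul (by fun_prop) h.contDiff)
  have hbot : Tendsto (fun t : ℝ => (1 + t ^ 2) ^ (-l / 2) * H t) atBot (nhds 1) := by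
    have h1 : Tendsto (fun t : ℝ => (1 + 1 / t ^ 2) ^ (-l / 2)) atTop (nhds 1) := by
      have : Tendsto (fun t : ℝ => 1 + 1 / t ^ 2) atTop (nhds (1 + 0)) :=
        tendsto_const_nhds.add (tendsto_const_nhds.div_atTop (tendsto_pow_atTop (by norm_num)))
      rw [add_zero] at this
      simpa using this.rpow_const (p := -l / 2) (Or.inl one_ne_zero)
    have h2 := h1.mul (hlim.const_mul C⁻¹)
    rw [inv_mul_cancel₀ hC, one_mul] at h2
    have h3 := h2.comp tendsto_neg_atBot_atTop
    refine h3.congr' ?_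
    filter_upwards [eventually_lt_atBot 0] with t ht
    have hn : 0 < -t := by linarith
    have e1 : 1 + t ^ 2 = (-t) ^ 2 * (1 + 1 / (-t) ^ 2) := by
      have : (-t) ^ 2 ≠ 0 := by positivity
      rw [mul_add, mul_one, mul_one_div_cancel this]
      ring
    have e2 : ((-t) ^ 2) ^ (-l / 2) = ((-t) ^ l)⁻¹ := by
      rw [← Real.rpow_natCast, ← Real.rpow_mul hn.le, ← Real.rpow_neg hn.le]
      congr 1
      push_cast
      ring
    have e3 : Real.exp (-t ^ 3 / 18) = (Real.exp (-(-t) ^ 3 / 18))⁻¹ := by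
      rw [← Real.exp_neg]
      congr 1
      ring
    simp only [Function.comp, hHdef, neg_neg]
    rw [e1, Real.mul_rpow (by positivity) (by positivity), e2, e3]
    field_simp
  have htop : Tendsto (fun t : ℝ => (1 + t ^ 2) ^ (-l / 2) * H t) atTop (nhds 0) := by
    obtain ⟨n, hn⟩ := exists_nat_ge (-l / 2)
    have h0 := ((h.dec.mul (|C⁻¹| * 2 ^ n) (2 * n)).tendsto).norm
    rw [norm_zero] at h0
    refine squeeze_zero_norm' ?_ h0
    filter_upwards [eventually_ge_atTop 1] with t ht
    have b1 : (1 + t ^ 2) ^ (-l / 2) ≤ 2 ^ n * t ^ (2 * n) := by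
      calc (1 + t ^ 2) ^ (-l / 2) ≤ (1 + t ^ 2) ^ (n : ℝ) :=
            Real.rpow_le_rpow_of_exponent_le (by nlinarith) hn
        _ = (1 + t ^ 2) ^ n := Real.rpow_natCast _ _
        _ ≤ (2 * t ^ 2) ^ n := pow_le_pow_left₀ (by positivity) (by nlinarith) n
        _ = _ := by rw [mul_pow, pow_mul]
    have b2 : Real.exp (-t ^ 3 / 18) ≤ 1 := by
      rw [Real.exp_le_one_iff]
      have : 0 ≤ t ^ 3 := by positivity
      linarith
    have b0 : 0 ≤ (1 + t ^ 2) ^ (-l / 2) := by positivity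
    simp only [hHdef, norm_mul, Real.norm_eq_abs, abs_abs, abs_pow, Real.abs_exp, abs_of_nonneg b0]
    rw [abs_two, abs_of_nonneg (show 0 ≤ t by linarith)]
    calc (1 + t ^ 2) ^ (-l / 2) * (|C⁻¹| * (Real.exp (-t ^ 3 / 18) * |W t|))
        ≤ (2 ^ n * t ^ (2 * n)) * (|C⁻¹| * (1 * |W t|)) := by gcongr
      _ = _ := by ring
  refine ⟨fun t => (1 + t ^ 2) ^ (-l / 2) * H t, hsm, bdd_of_limits hsm.continuous hbot htop,
    hbot, htop, fun x y hx => pde hH hH1 x y hx, fun y hy => ?_⟩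
  have t1 : Tendsto (fun x : ℝ => y * x ^ (-(1 : ℝ) / 3)) (nhdsWithin 0 (Ioi 0)) atTop := by
    refine Tendsto.const_mul_atTop hy ?_
    exact tendsto_rpow_neg_nhdsGT_zero (by norm_num)
  have t2 : Tendsto (fun x : ℝ => (y ^ 2 + x ^ ((2 : ℝ) / 3)) ^ (l / 2)) (nhdsWithin 0 (Ioi 0))
      (nhds ((y ^ 2 + 0) ^ (l / 2))) := by
    refine Tendsto.rpow_const ?_ (Or.inl (by positivity))
    refine tendsto_const_nhds.add ?_
    have : ContinuousAt (fun x : ℝ => x ^ ((2 : ℝ) / 3)) 0 :=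
      Real.continuousAt_rpow_const _ _ (Or.inr (by norm_num))
    have := this.tendsto
    rw [Real.zero_rpow (by norm_num)] at this
    exact this.mono_left nhdsWithin_le_nhds
  have := t2.mul (htop.comp t1)
  rw [mul_zero] at this
  exact this
end

section
/- Let λ ∈ ℝ and let W : ℝ → ℝ be twice continuously differentiable. Suppose W satisfies Kummer's equation with parameters a = −λ/3 and b = 2/3, namely ζ·W''(ζ) + (2/3 − ζ)·W'(ζ) + (λ/3)·W(ζ) = 0 for all ζ ∈ ℝ. Then the function Λ(t) := (1+t²)^{−λ/2} · W(−t³/9) satisfies, for every t ∈ ℝ, the ordinary differential equation Λ''(t) + (t²/3 + 2λt/(1+t²))·Λ'(t) + λ·( −(1/3)·t/(1+t²) + (1 + (λ−1)t²)/(1+t²)² )·Λ(t) = 0. -/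
open Filter Set

/-- If `W` solves Kummer's equation `ζ W'' + (2/3 - ζ) W' - (-λ/3) W = 0` on `ℝ`, then
`Λ(t) = (1+t²)^(-λ/2) W(-t³/9)` solves the self-similar profile ODE
`Λ'' + (t²/3 + 2λt/(1+t²)) Λ' + λ(-(1/3) t/(1+t²) + (1+(λ-1)t²)/(1+t²)²) Λ = 0`. -/
theorem stmt2 (l : ℝ) (W : ℝ → ℝ) (hW : ContDiff ℝ 2 W)
    (hKummer : ∀ ζ : ℝ,
      ζ * deriv (deriv W) ζ + (2 / 3 - ζ) * deriv W ζ + (l / 3) * W ζ = 0) :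
    ∀ t : ℝ,
      deriv (deriv (fun s : ℝ => (1 + s ^ 2) ^ (-(l / 2)) * W (-s ^ 3 / 9))) t
        + (t ^ 2 / 3 + 2 * l * t / (1 + t ^ 2)) *
            deriv (fun s : ℝ => (1 + s ^ 2) ^ (-(l / 2)) * W (-s ^ 3 / 9)) t
        + l * (-(1 / 3) * t / (1 + t ^ 2) + (1 + (l - 1) * t ^ 2) / (1 + t ^ 2) ^ 2) *
            ((1 + t ^ 2) ^ (-(l / 2)) * W (-t ^ 3 / 9))
        = 0 := by
  have hp : ∀ s : ℝ, HasDerivAt (fun s : ℝ => (1 + s ^ 2) ^ (-(l / 2)))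
      ((1 + s ^ 2) ^ (-(l / 2)) * (-(l * s) / (1 + s ^ 2))) s := by
    intro s
    have hpos : (0 : ℝ) < 1 + s ^ 2 := by positivity
    have h1 : HasDerivAt (fun s : ℝ => 1 + s ^ 2) (2 * s) s := by
      simpa using (hasDerivAt_pow 2 s).const_add 1
    have h2 := h1.rpow_const (p := -(l / 2)) (Or.inl hpos.ne')
    refine h2.congr_deriv ?_
    rw [Real.rpow_sub_one hpos.ne']
    field_simp
  have hz : ∀ s : ℝ, HasDerivAt (fun s : ℝ => -s ^ 3 / 9) (-s ^ 2 / 3) s := by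
    intro s
    refine (((hasDerivAt_pow 3 s).neg).div_const 9).congr_deriv ?_
    norm_num
    ring
  have hW1 : ∀ z : ℝ, HasDerivAt W (deriv W z) z := fun z =>
    ((hW.differentiable (by norm_num)) z).hasDerivAt
  have hW' : ContDiff ℝ 1 (deriv W) := by
    have h : ContDiff ℝ (1 + 1) W := by
      rw [one_add_one_eq_two]
      exact hW
    exact (contDiff_succ_iff_deriv.1 h).2.2
  have hW2 : ∀ z : ℝ, HasDerivAt (deriv W) (deriv (deriv W) z) z := fun z =>
    ((hW'.differentiable (by norm_num)) z).hasDerivAt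
  have hG1 : ∀ s : ℝ, HasDerivAt (fun s : ℝ => W (-s ^ 3 / 9))
      (deriv W (-s ^ 3 / 9) * (-s ^ 2 / 3)) s := fun s =>
    (hW1 (-s ^ 3 / 9)).comp s (hz s)
  have hG2 : ∀ s : ℝ, HasDerivAt (fun s : ℝ => deriv W (-s ^ 3 / 9))
      (deriv (deriv W) (-s ^ 3 / 9) * (-s ^ 2 / 3)) s := fun s =>
    HasDerivAt.comp (h₂ := deriv W) s (hW2 (-s ^ 3 / 9)) (hz s)
  have hd1 : deriv (fun s : ℝ => (1 + s ^ 2) ^ (-(l / 2)) * W (-s ^ 3 / 9)) =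
      fun s : ℝ => (1 + s ^ 2) ^ (-(l / 2)) * (-(l * s) / (1 + s ^ 2)) * W (-s ^ 3 / 9)
        + (1 + s ^ 2) ^ (-(l / 2)) * (deriv W (-s ^ 3 / 9) * (-s ^ 2 / 3)) := by
    funext s
    exact ((hp s).mul (hG1 s)).deriv
  intro t
  have hpos : (0 : ℝ) < 1 + t ^ 2 := by positivity
  have hq : HasDerivAt (fun s : ℝ => -(l * s) / (1 + s ^ 2))
      ((-l * (1 + t ^ 2) - (-(l * t)) * (2 * t)) / (1 + t ^ 2) ^ 2) t := by
    have h1 : HasDerivAt (fun s : ℝ => 1 + s ^ 2) (2 * t) t := by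
      simpa using (hasDerivAt_pow 2 t).const_add 1
    have h0 : HasDerivAt (fun s : ℝ => -(l * s)) (-l) t := by
      exact (((hasDerivAt_id t).const_mul l).neg).congr_deriv (by ring)
    exact h0.div h1 hpos.ne'
  have hr : HasDerivAt (fun s : ℝ => -s ^ 2 / 3) (-(2 * t) / 3) t := by
    simpa using ((hasDerivAt_pow 2 t).neg).div_const 3
  have hd2 := ((((hp t).mul hq).mul (hG1 t)).add ((hp t).mul ((hG2 t).mul hr))).deriv
  rw [hd1]
  have hK := hKummer (-t ^ 3 / 9)
  refine (congrArg (fun x => x + _ + _) hd2).trans ?_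
  simp only [Pi.mul_apply]
  generalize (1 + t ^ 2) ^ (-(l / 2)) = p
  generalize deriv (deriv W) (-t ^ 3 / 9) = w2 at *
  generalize deriv W (-t ^ 3 / 9) = w1 at *
  generalize W (-t ^ 3 / 9) = w0 at *
  have hne := hpos.ne'
  have key : ∀ X : ℝ, X = -t * p * (-t ^ 3 / 9 * w2 + (2 / 3 - -t ^ 3 / 9) * w1 + l / 3 * w0) →
      X = 0 := by
    intro X hX
    rw [hX, hK, mul_zero]
  apply key
  field_simp
  ring
end

section
/- Let Λ : ℝ → ℝ be continuously differentiable with M₀ := sup_{t∈ℝ} |Λ(t)| < ∞ and M₁ := sup_{t∈ℝ} (1+|t|)³·|Λ'(t)| < ∞. Define v(x,y) := (y² + x^{2/3})^{1/4} · Λ(y·x^{−1/3}) for (x,y) ∈ (0,∞) × ℝ. Then there exists a constant C, depending only on M₀ and M₁, such that for every (x,y) ∈ (0,∞) × ℝ, |y·∂ₓv(x,y)| ≤ C · (y² + x^{2/3})^{−3/4} · (1 + |y|·x^{−1/3}). -/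
open Set

/-- The singular ansatz `v(x,y) = (y² + x^(2/3))^(1/4) · Λ(y · x^(-1/3))`,
i.e. `v = r^(1/2) Λ(t)` in the polar-like variables. -/
noncomputable def vHalf (Λ : ℝ → ℝ) (x y : ℝ) : ℝ :=
  (y ^ 2 + x ^ ((2 : ℝ) / 3)) ^ ((1 : ℝ) / 4) * Λ (y * x ^ (-(1 : ℝ) / 3))

/-- If `|Λ| ≤ M₀` and `(1+|t|)³ |Λ'| ≤ M₁`, then, with a constant `C` depending only on
`M₀` and `M₁`, `|y ∂ₓ v| ≤ C (y² + x^(2/3))^(-3/4) (1 + |y| x^(-1/3))` on `(0,∞) × ℝ`,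
where `v = r^(1/2) Λ(t)`. -/
theorem stmt7 (M₀ M₁ : ℝ) :
    ∃ C : ℝ, ∀ Λ : ℝ → ℝ, ContDiff ℝ 1 Λ →
      (∀ t : ℝ, |Λ t| ≤ M₀) →
      (∀ t : ℝ, (1 + |t|) ^ 3 * |deriv Λ t| ≤ M₁) →
      ∀ x y : ℝ, 0 < x →
        |y * deriv (fun s : ℝ => vHalf Λ s y) x|
          ≤ C * (y ^ 2 + x ^ ((2 : ℝ) / 3)) ^ (-(3 : ℝ) / 4) * (1 + |y| * x ^ (-(1 : ℝ) / 3)) := by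
  refine ⟨M₀ / 6 + M₁ / 3, ?_⟩
  intro Λ hΛ h0 h1 x y hx
  have hq : 0 < x ^ (-(1 : ℝ) / 3) := Real.rpow_pos_of_pos hx _
  have hp : 0 < x ^ ((2 : ℝ) / 3) := Real.rpow_pos_of_pos hx _
  have hR : 0 < y ^ 2 + x ^ ((2 : ℝ) / 3) := by positivity
  have e1 : x ^ ((2 : ℝ) / 3 - 1) = x ^ (-(1 : ℝ) / 3) := by norm_num
  have e2 : x ^ (-(1 : ℝ) / 3 - 1) = (x ^ (-(1 : ℝ) / 3)) ^ 4 := by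
    rw [← Real.rpow_natCast, ← Real.rpow_mul hx.le]; norm_num
  have e3 : x ^ ((2 : ℝ) / 3) * (x ^ (-(1 : ℝ) / 3)) ^ 2 = 1 := by
    rw [← Real.rpow_natCast, ← Real.rpow_mul hx.le, ← Real.rpow_add hx]; norm_num
  have e4 : (y ^ 2 + x ^ ((2 : ℝ) / 3)) ^ ((1 : ℝ) / 4)
      = (y ^ 2 + x ^ ((2 : ℝ) / 3)) ^ (-(3 : ℝ) / 4) * (y ^ 2 + x ^ ((2 : ℝ) / 3)) := by
    rw [← Real.rpow_add_one hR.ne']; norm_num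
  have d1 : HasDerivAt (fun s : ℝ => y ^ 2 + s ^ ((2 : ℝ) / 3))
      ((2 : ℝ) / 3 * x ^ ((2 : ℝ) / 3 - 1)) x :=
    (Real.hasDerivAt_rpow_const (Or.inl hx.ne')).const_add _
  have d2 := d1.rpow_const (p := (1 : ℝ) / 4) (Or.inl hR.ne')
  have d3 : HasDerivAt (fun s : ℝ => y * s ^ (-(1 : ℝ) / 3))
      (y * (-(1 : ℝ) / 3 * x ^ (-(1 : ℝ) / 3 - 1))) x :=
    (Real.hasDerivAt_rpow_const (Or.inl hx.ne')).const_mul _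
  have d4 : HasDerivAt Λ (deriv Λ (y * x ^ (-(1 : ℝ) / 3))) (y * x ^ (-(1 : ℝ) / 3)) :=
    (hΛ.differentiable (by norm_num) _).hasDerivAt
  have d5 := d2.mul (HasDerivAt.comp x d4 d3)
  have d6 : deriv (fun s : ℝ => vHalf Λ s y) x = _ := HasDerivAt.deriv d5
  rw [d6]
  have e5 : (1 : ℝ) / 4 - 1 = -(3 : ℝ) / 4 := by norm_num
  simp only [Function.comp_apply]
  rw [e1, e2, e4, e5]
  have hP : 0 < (y ^ 2 + x ^ ((2 : ℝ) / 3)) ^ (-(3 : ℝ) / 4) := Real.rpow_pos_of_pos hR _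
  generalize (y ^ 2 + x ^ ((2 : ℝ) / 3)) ^ (-(3 : ℝ) / 4) = P at *
  generalize x ^ (-(1 : ℝ) / 3) = q at *
  generalize x ^ ((2 : ℝ) / 3) = p at *
  have g0 := h0 (y * q)
  have g1 := h1 (y * q)
  have ht : |y| * q = |y * q| := by rw [abs_mul, abs_of_pos hq]
  rw [ht]
  have key : y * (2 / 3 * q * (1 / 4) * P * Λ (y * q)
      + P * (y ^ 2 + p) * (deriv Λ (y * q) * (y * (-1 / 3 * q ^ 4))))
      = P * ((y * q) * Λ (y * q) / 6
        - ((y * q) ^ 2 + 1) * (y * q) ^ 2 * deriv Λ (y * q) / 3) := by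
    linear_combination (-(P * y ^ 2 * q ^ 2 * deriv Λ (y * q)) / 3) * e3
  rw [key, abs_mul, abs_of_pos hP, mul_comm (M₀ / 6 + M₁ / 3) P,
    mul_assoc P (M₀ / 6 + M₁ / 3)]
  refine mul_le_mul_of_nonneg_left ?_ hP.le
  generalize y * q = t at *
  generalize Λ t = L at *
  generalize deriv Λ t = D at *
  refine (abs_sub _ _).trans ?_
  have a1 : |t * L / 6| = |t| * |L| / 6 := by
    rw [abs_div, abs_mul]; norm_num
  have a2 : |(t ^ 2 + 1) * t ^ 2 * D / 3| = (|t| ^ 2 + 1) * |t| ^ 2 * |D| / 3 := by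
    rw [abs_div, abs_mul, abs_of_nonneg (by positivity : 0 ≤ (t ^ 2 + 1) * t ^ 2), sq_abs]
    norm_num
  rw [a1, a2]
  have hT := abs_nonneg t
  have hD := abs_nonneg D
  have hM : 0 ≤ M₀ := (abs_nonneg L).trans g0
  generalize |t| = T at *
  have b1 : T * |L| ≤ T * M₀ := mul_le_mul_of_nonneg_left g0 hT
  have b2 : (1 + T) * ((1 + T) ^ 3 * |D|) ≤ (1 + T) * M₁ :=
    mul_le_mul_of_nonneg_left g1 (by linarith)
  have b3 : (T ^ 2 + 1) * T ^ 2 * |D| ≤ (1 + T) ^ 4 * |D| := by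
    apply mul_le_mul_of_nonneg_right _ hD
    have : 0 ≤ 1 + 4 * T + 5 * T ^ 2 + 4 * T ^ 3 := by positivity
    nlinarith
  nlinarith
end

section
/- Let Λ : ℝ → ℝ be continuously differentiable and define v(x,y) := (y² + x^{2/3})^{1/4} · Λ(y·x^{−1/3}) for (x,y) ∈ (0,∞) × ℝ, and H(t) := (1/2)·(1+t²)^{1/2}·Λ(t) − t·(1+t²)^{3/2}·Λ'(t) for t ∈ ℝ. Then (i) for every (x,y) ∈ (0,∞) × ℝ, ∂ₓv(x,y) = (1/3)·(y² + x^{2/3})^{−5/4} · H(y·x^{−1/3}); and (ii) if H is not identically zero on ℝ, then for every ε > 0, the function ∂ₓv does not belong to L²((0,ε) × (−ε,ε)), i.e. ∫₀^ε ∫₋ε^ε |∂ₓv(x,y)|² dy dx = +∞. -/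
open Set MeasureTheory

/-- The profile `H(t) = (1/2)(1+t²)^(1/2) Λ(t) - t (1+t²)^(3/2) Λ'(t)`. -/
noncomputable def Hfun (Λ : ℝ → ℝ) (t : ℝ) : ℝ :=
  1 / 2 * (1 + t ^ 2) ^ ((1 : ℝ) / 2) * Λ t - t * (1 + t ^ 2) ^ ((3 : ℝ) / 2) * deriv Λ t


lemma one_add_sq_aux (x y : ℝ) (hx : 0 < x) :
    1 + (y * x ^ (-(1 : ℝ) / 3)) ^ 2 = (y ^ 2 + x ^ ((2 : ℝ) / 3)) * x ^ (-(2 : ℝ) / 3) := by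
  have h1 : (x ^ (-(1 : ℝ) / 3)) ^ 2 = x ^ (-(2 : ℝ) / 3) := by
    rw [← Real.rpow_natCast, ← Real.rpow_mul hx.le]; norm_num
  have h2 : x ^ ((2 : ℝ) / 3) * x ^ (-(2 : ℝ) / 3) = 1 := by
    rw [← Real.rpow_add hx]; norm_num
  rw [mul_pow, h1, add_mul, h2]; ring

lemma part_one (Λ : ℝ → ℝ) (hΛ : ContDiff ℝ 1 Λ) (x y : ℝ) (hx : 0 < x) :
      deriv (fun s : ℝ => vHalf Λ s y) x
        = 1 / 3 * (y ^ 2 + x ^ ((2 : ℝ) / 3)) ^ (-(5 : ℝ) / 4)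
            * Hfun Λ (y * x ^ (-(1 : ℝ) / 3)) := by
  have hR : 0 < y ^ 2 + x ^ ((2 : ℝ) / 3) := by positivity
  have d1 : HasDerivAt (fun s : ℝ => y ^ 2 + s ^ ((2 : ℝ) / 3))
      ((2 : ℝ) / 3 * x ^ ((2 : ℝ) / 3 - 1)) x :=
    (Real.hasDerivAt_rpow_const (Or.inl hx.ne')).const_add _
  have d2 := d1.rpow_const (p := (1 : ℝ) / 4) (Or.inl hR.ne')
  have d3 : HasDerivAt (fun s : ℝ => y * s ^ (-(1 : ℝ) / 3))
      (y * (-(1 : ℝ) / 3 * x ^ (-(1 : ℝ) / 3 - 1))) x :=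
    (Real.hasDerivAt_rpow_const (Or.inl hx.ne')).const_mul _
  have d4 : HasDerivAt Λ (deriv Λ (y * x ^ (-(1 : ℝ) / 3))) (y * x ^ (-(1 : ℝ) / 3)) :=
    ((hΛ.differentiable (by norm_num)) _).hasDerivAt
  have d5 := d2.mul (d4.comp x d3)
  have e : deriv (fun s : ℝ => vHalf Λ s y) x = _ := d5.deriv
  rw [e, Hfun, one_add_sq_aux x y hx]
  simp only [Function.comp]
  generalize hRR : y ^ 2 + x ^ ((2 : ℝ) / 3) = R at *
  have p1 : (R * x ^ (-(2 : ℝ) / 3)) ^ ((1 : ℝ) / 2) = R ^ ((1 : ℝ) / 2) * x ^ (-(1 : ℝ) / 3) := by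
    rw [Real.mul_rpow hR.le (by positivity), ← Real.rpow_mul hx.le]; norm_num
  have p2 : (R * x ^ (-(2 : ℝ) / 3)) ^ ((3 : ℝ) / 2) = R ^ ((3 : ℝ) / 2) * x ^ (-(1 : ℝ)) := by
    rw [Real.mul_rpow hR.le (by positivity), ← Real.rpow_mul hx.le]; norm_num
  have p3 : R ^ ((1 : ℝ) / 4 - 1) = R ^ (-(5 : ℝ) / 4) * R ^ ((1 : ℝ) / 2) := by
    rw [← Real.rpow_add hR]; norm_num
  have p4 : R ^ ((1 : ℝ) / 4) = R ^ (-(5 : ℝ) / 4) * R ^ ((3 : ℝ) / 2) := by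
    rw [← Real.rpow_add hR]; norm_num
  have p5 : x ^ (-(1 : ℝ) / 3 - 1) = x ^ (-(1 : ℝ) / 3) * x ^ (-(1 : ℝ)) := by
    rw [← Real.rpow_add hx]; norm_num
  have p6 : x ^ ((2 : ℝ) / 3 - 1) = x ^ (-(1 : ℝ) / 3) := by norm_num
  rw [p1, p2, p3, p4, p5, p6]
  ring

lemma part_two (Λ : ℝ → ℝ) (hΛ : ContDiff ℝ 1 Λ) (h : ¬ ∀ t : ℝ, Hfun Λ t = 0) (ε : ℝ)
    (hε : 0 < ε) :
      ∫⁻ p in (Ioo (0 : ℝ) ε ×ˢ Ioo (-ε) ε),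
        ENNReal.ofReal ((deriv (fun s : ℝ => vHalf Λ s p.2) p.1) ^ 2) = ⊤ := by
  push Not at h
  obtain ⟨t₀, ht₀⟩ := h
  have hdc : Continuous (deriv Λ) := hΛ.continuous_deriv (by norm_num)
  have hc0 : Continuous Λ := hΛ.continuous
  have hpos : ∀ t : ℝ, 0 < 1 + t ^ 2 := fun t => by positivity
  have hpc : ∀ q : ℝ, Continuous (fun t : ℝ => (1 + t ^ 2) ^ q) := fun q =>
    Continuous.rpow_const (by fun_prop) (fun t => Or.inl (hpos t).ne')
  have hHc : Continuous (Hfun Λ) := by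
    unfold Hfun
    have := hpc (1/2); have := hpc (3/2)
    fun_prop
  set G : ℝ → ℝ := fun t => (1 / 3 * (1 + t ^ 2) ^ (-(5 : ℝ) / 4) * Hfun Λ t) ^ 2 with hG
  have hGc : Continuous G := by
    have := hpc (-(5:ℝ)/4)
    fun_prop
  have hG0 : 0 < G t₀ := by
    have : 0 < (1 + t₀ ^ 2) ^ (-(5 : ℝ) / 4) := Real.rpow_pos_of_pos (hpos _) _
    have : 1 / 3 * (1 + t₀ ^ 2) ^ (-(5 : ℝ) / 4) * Hfun Λ t₀ ≠ 0 := by positivity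
    positivity
  set c := G t₀ / 2 with hc
  have hcpos : 0 < c := by positivity
  have hev : ∀ᶠ t in nhds t₀, c < G t :=
    hGc.continuousAt.eventually_const_lt (by rw [hc]; linarith)
  obtain ⟨η, hη, hball⟩ := Metric.eventually_nhds_iff.1 hev
  set a := t₀ - η with ha
  set b := t₀ + η with hb
  have hab : ∀ t ∈ Ioo a b, c < G t := by
    intro t ht
    apply hball
    rw [Real.dist_eq, abs_lt]
    constructor <;> linarith [ht.1, ht.2]
  -- scale
  obtain ⟨M, hM, hMa, hMb⟩ : ∃ M : ℝ, 0 < M ∧ -M ≤ a ∧ b ≤ M := by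
    refine ⟨|t₀| + η, by positivity, ?_, ?_⟩
    · linarith [neg_abs_le t₀]
    · linarith [le_abs_self t₀]
  set δ := min ε ((ε / M) ^ 3) with hδ
  have hδpos : 0 < δ := by positivity
  have hxs : ∀ x ∈ Ioo 0 δ, x ^ ((1 : ℝ) / 3) * M < ε := by
    intro x hx
    have h1 : x < (ε / M) ^ 3 := lt_of_lt_of_le hx.2 (min_le_right _ _)
    have h2 : x ^ ((1 : ℝ) / 3) < ((ε / M) ^ 3) ^ ((1 : ℝ) / 3) :=
      Real.rpow_lt_rpow hx.1.le h1 (by norm_num)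
    have h3 : ((ε / M) ^ 3) ^ ((1 : ℝ) / 3) = ε / M := by
      rw [← Real.rpow_natCast, ← Real.rpow_mul (by positivity)]; norm_num
    rw [h3, lt_div_iff₀ hM] at h2
    exact h2
  set S : Set (ℝ × ℝ) := regionBetween (fun x => x ^ ((1 : ℝ) / 3) * a)
    (fun x => x ^ ((1 : ℝ) / 3) * b) (Ioo 0 δ) with hS
  have hSm : MeasurableSet S :=
    measurableSet_regionBetween (by fun_prop) (by fun_prop) measurableSet_Ioo
  have hSsub : S ⊆ Ioo (0 : ℝ) ε ×ˢ Ioo (-ε) ε := by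
    rintro ⟨x, y⟩ ⟨hx, hy⟩
    simp only [mem_Ioo] at hx hy
    have hk := hxs x hx
    have hp : 0 < x ^ ((1 : ℝ) / 3) := Real.rpow_pos_of_pos hx.1 _
    refine ⟨⟨hx.1, lt_of_lt_of_le hx.2 (min_le_left _ _)⟩, ?_, ?_⟩
    · show -ε < y
      nlinarith [mul_le_mul_of_nonneg_left hMa hp.le]
    · show y < ε
      nlinarith [mul_le_mul_of_nonneg_left hMb hp.le]
  have hbound : ∀ p ∈ S, ENNReal.ofReal (c * p.1 ^ (-(5 : ℝ) / 3)) ≤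
      ENNReal.ofReal ((deriv (fun s : ℝ => vHalf Λ s p.2) p.1) ^ 2) := by
    rintro ⟨x, y⟩ ⟨hx, hy⟩
    simp only [mem_Ioo] at hx hy ⊢
    have hx0 := hx.1
    have hp : 0 < x ^ ((1 : ℝ) / 3) := Real.rpow_pos_of_pos hx.1 _
    apply ENNReal.ofReal_le_ofReal
    rw [part_one Λ hΛ x y hx0]
    have hinv : x ^ (-(1 : ℝ) / 3) = (x ^ ((1 : ℝ) / 3))⁻¹ := by
      rw [← Real.rpow_neg hx0.le]; norm_num
    have ht : y * x ^ (-(1 : ℝ) / 3) ∈ Ioo a b := by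
      rw [hinv, ← div_eq_mul_inv]
      constructor
      · rw [lt_div_iff₀ hp]; linarith
      · rw [div_lt_iff₀ hp]; linarith
    have hg := hab _ ht
    have hR : 0 < y ^ 2 + x ^ ((2 : ℝ) / 3) := by positivity
    have e1 : (y ^ 2 + x ^ ((2 : ℝ) / 3)) ^ (-(5 : ℝ) / 4) =
        (1 + (y * x ^ (-(1 : ℝ) / 3)) ^ 2) ^ (-(5 : ℝ) / 4) * x ^ (-(5 : ℝ) / 6) := by
      rw [one_add_sq_aux x y hx0, Real.mul_rpow hR.le (by positivity), ← Real.rpow_mul hx0.le,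
        mul_assoc, ← Real.rpow_add hx0]
      norm_num
    have e2 : x ^ (-(5 : ℝ) / 3) = (x ^ (-(5 : ℝ) / 6)) ^ 2 := by
      rw [← Real.rpow_natCast, ← Real.rpow_mul hx0.le]; norm_num
    have e3 : (1 / 3 * (y ^ 2 + x ^ ((2 : ℝ) / 3)) ^ (-(5 : ℝ) / 4)
            * Hfun Λ (y * x ^ (-(1 : ℝ) / 3))) ^ 2
        = G (y * x ^ (-(1 : ℝ) / 3)) * x ^ (-(5 : ℝ) / 3) := by
      rw [e1, e2, hG]; ring
    rw [e3]
    exact mul_le_mul_of_nonneg_right hg.le (by positivity)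
  rw [eq_top_iff]
  calc (⊤ : ENNReal) = ∫⁻ x in Ioo 0 δ, ENNReal.ofReal (c * (b - a) * x ^ (-(4 : ℝ) / 3)) := by
        symm
        by_contra hne
        have hmeas : AEStronglyMeasurable (fun x : ℝ => c * (b - a) * x ^ (-(4 : ℝ) / 3))
            (volume.restrict (Ioo 0 δ)) := by
          apply Measurable.aestronglyMeasurable; fun_prop
        have hba : 0 < b - a := by rw [ha, hb]; linarith
        have hnn : 0 ≤ᵐ[volume.restrict (Ioo 0 δ)]
            (fun x : ℝ => c * (b - a) * x ^ (-(4 : ℝ) / 3)) := by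
          filter_upwards [ae_restrict_mem measurableSet_Ioo] with x hx
          have := hx.1
          show 0 ≤ c * (b - a) * x ^ (-(4 : ℝ) / 3)
          positivity
        have hi := (lintegral_ofReal_ne_top_iff_integrable hmeas hnn).1 hne
        have hi2 := hi.const_mul (c * (b - a))⁻¹
        have hi3 : IntegrableOn (fun x : ℝ => x ^ (-(4 : ℝ) / 3)) (Ioo 0 δ) := by
          refine hi2.congr (Filter.Eventually.of_forall fun x => ?_)
          have : c * (b - a) ≠ 0 := by positivity
          field_simp
        rw [intervalIntegral.integrableOn_Ioo_rpow_iff hδpos] at hi3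
        norm_num at hi3
    _ = ∫⁻ x, ∫⁻ y, S.indicator (fun p => ENNReal.ofReal (c * p.1 ^ (-(5 : ℝ) / 3))) (x, y) := by
        rw [← lintegral_indicator measurableSet_Ioo]
        congr 1
        ext x
        by_cases hx : x ∈ Ioo 0 δ
        · rw [indicator_of_mem hx]
          have hx0 := hx.1
          have : ∀ y, S.indicator (fun p => ENNReal.ofReal (c * p.1 ^ (-(5 : ℝ) / 3))) (x, y) =
              (Ioo (x ^ ((1 : ℝ) / 3) * a) (x ^ ((1 : ℝ) / 3) * b)).indicator
                (fun _ => ENNReal.ofReal (c * x ^ (-(5 : ℝ) / 3))) y := by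
            intro y
            have hiff : (x, y) ∈ S ↔ y ∈ Ioo (x ^ ((1 : ℝ) / 3) * a) (x ^ ((1 : ℝ) / 3) * b) :=
              ⟨fun h => h.2, fun h => ⟨hx, h⟩⟩
            by_cases hy : y ∈ Ioo (x ^ ((1 : ℝ) / 3) * a) (x ^ ((1 : ℝ) / 3) * b)
            · rw [indicator_of_mem hy, indicator_of_mem (hiff.2 hy)]
            · rw [indicator_of_notMem hy, indicator_of_notMem (fun h => hy (hiff.1 h))]
          simp_rw [this]
          rw [lintegral_indicator_const measurableSet_Ioo, Real.volume_Ioo,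
            ← ENNReal.ofReal_mul (by positivity)]
          congr 1
          have e : x ^ (-(4 : ℝ) / 3) = x ^ (-(5 : ℝ) / 3) * x ^ ((1 : ℝ) / 3) := by
            rw [← Real.rpow_add hx0]; norm_num
          rw [e]; ring
        · rw [indicator_of_notMem hx]
          have : ∀ y, S.indicator (fun p => ENNReal.ofReal (c * p.1 ^ (-(5 : ℝ) / 3))) (x, y) = 0 :=
            fun y => indicator_of_notMem (fun h => hx h.1) _
          simp [this]
    _ = ∫⁻ p, S.indicator (fun p => ENNReal.ofReal (c * p.1 ^ (-(5 : ℝ) / 3))) p := by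
        rw [Measure.volume_eq_prod, lintegral_prod]
        apply Measurable.aemeasurable
        exact Measurable.indicator (by fun_prop) hSm
    _ = ∫⁻ p in S, ENNReal.ofReal (c * p.1 ^ (-(5 : ℝ) / 3)) := lintegral_indicator hSm _
    _ ≤ ∫⁻ p in S, ENNReal.ofReal ((deriv (fun s : ℝ => vHalf Λ s p.2) p.1) ^ 2) :=
        setLIntegral_mono' hSm hbound
    _ ≤ _ := lintegral_mono_set hSsub

/-- For `v = r^(1/2) Λ(t)`: (i) `∂ₓ v = (1/3) r^(-5/2) H(t)`; (ii) if `H ≢ 0`, then for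
every `ε > 0`, `∫_{(0,ε)×(-ε,ε)} |∂ₓ v|² = +∞`, i.e. `∂ₓ v ∉ L²((0,ε) × (-ε,ε))`. -/
theorem stmt9 (Λ : ℝ → ℝ) (hΛ : ContDiff ℝ 1 Λ) :
    (∀ x y : ℝ, 0 < x →
      deriv (fun s : ℝ => vHalf Λ s y) x
        = 1 / 3 * (y ^ 2 + x ^ ((2 : ℝ) / 3)) ^ (-(5 : ℝ) / 4)
            * Hfun Λ (y * x ^ (-(1 : ℝ) / 3))) ∧
    ((¬ ∀ t : ℝ, Hfun Λ t = 0) → ∀ ε : ℝ, 0 < ε →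
      ∫⁻ p in (Ioo (0 : ℝ) ε ×ˢ Ioo (-ε) ε),
        ENNReal.ofReal ((deriv (fun s : ℝ => vHalf Λ s p.2) p.1) ^ 2) = ⊤) := by
  exact ⟨fun x y hx => part_one Λ hΛ x y hx, fun h ε hε => part_two Λ hΛ h ε hε⟩
end

section
/- Let x₀ < x₁ be real numbers and Ω := (x₀,x₁) × (−1,1). Let u be twice continuously differentiable on an open neighborhood of the closure of Ω, let f be continuous on the closure of Ω, and suppose y·∂ₓu − ∂²_{yy}u = f at every point of Ω and u(x,1) = u(x,−1) = 0 for every x ∈ [x₀,x₁]. Then the following energy identity holds: ∫_Ω (∂_yu)² dx dy + (1/2)·∫₋₁¹ y·u(x₁,y)² dy − (1/2)·∫₋₁¹ y·u(x₀,y)² dy = ∫_Ω f·u dx dy. -/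
open Set MeasureTheory

theorem aux_slice1 {w : ℝ × ℝ → ℝ} {L : ℝ × ℝ →L[ℝ] ℝ} {p : ℝ × ℝ} (h : HasFDerivAt w L p) :
    HasDerivAt (fun s => w (s, p.2)) (L (1, 0)) p.1 := by
  have h2 : HasDerivAt (fun s : ℝ => (s, p.2)) ((1 : ℝ), (0 : ℝ)) p.1 :=
    (hasDerivAt_id p.1).prodMk (hasDerivAt_const p.1 p.2)
  exact HasFDerivAt.comp_hasDerivAt (l := w) (f := fun s : ℝ => (s, p.2)) p.1 h h2

theorem aux_slice2 {w : ℝ × ℝ → ℝ} {L : ℝ × ℝ →L[ℝ] ℝ} {p : ℝ × ℝ} (h : HasFDerivAt w L p) :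
    HasDerivAt (fun s => w (p.1, s)) (L (0, 1)) p.2 := by
  have h2 : HasDerivAt (fun s : ℝ => (p.1, s)) ((0 : ℝ), (1 : ℝ)) p.2 :=
    (hasDerivAt_const p.2 p.1).prodMk (hasDerivAt_id p.2)
  exact HasFDerivAt.comp_hasDerivAt (l := w) (f := fun s : ℝ => (p.1, s)) p.2 h h2

/-- Energy identity for classical solutions of `y ∂ₓ u - ∂_yy u = f` on
`Ω = (x₀,x₁) × (-1,1)` with `u = 0` on `{y = ±1}`:
`∫_Ω (∂_y u)² + (1/2) ∫ y u(x₁,y)² dy - (1/2) ∫ y u(x₀,y)² dy = ∫_Ω f u`. -/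
theorem stmt10 (x₀ x₁ : ℝ) (hx : x₀ < x₁) (u f : ℝ → ℝ → ℝ)
    (U : Set (ℝ × ℝ)) (hU : IsOpen U)
    (hΩU : closure (Ioo x₀ x₁ ×ˢ Ioo (-1 : ℝ) 1) ⊆ U)
    (hu : ContDiffOn ℝ 2 (fun p : ℝ × ℝ => u p.1 p.2) U)
    (hf : ContinuousOn (fun p : ℝ × ℝ => f p.1 p.2) (closure (Ioo x₀ x₁ ×ˢ Ioo (-1 : ℝ) 1)))
    (heq : ∀ p ∈ Ioo x₀ x₁ ×ˢ Ioo (-1 : ℝ) 1,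
      p.2 * deriv (fun s : ℝ => u s p.2) p.1 - deriv (deriv (u p.1)) p.2 = f p.1 p.2)
    (hbc : ∀ x ∈ Icc x₀ x₁, u x 1 = 0 ∧ u x (-1) = 0) :
    (∫ p in Ioo x₀ x₁ ×ˢ Ioo (-1 : ℝ) 1, (deriv (u p.1) p.2) ^ 2)
      + (1 / 2) * (∫ y in Ioo (-1 : ℝ) 1, y * (u x₁ y) ^ 2)
      - (1 / 2) * (∫ y in Ioo (-1 : ℝ) 1, y * (u x₀ y) ^ 2)
      = ∫ p in Ioo x₀ x₁ ×ˢ Ioo (-1 : ℝ) 1, f p.1 p.2 * u p.1 p.2 := by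
  have hcl : closure (Ioo x₀ x₁ ×ˢ Ioo (-1 : ℝ) 1) = Icc x₀ x₁ ×ˢ Icc (-1 : ℝ) 1 := by
    rw [closure_prod_eq, closure_Ioo hx.ne, closure_Ioo (by norm_num)]
  rw [hcl] at hΩU hf
  have hsub : Ioo x₀ x₁ ×ˢ Ioo (-1 : ℝ) 1 ⊆ Icc x₀ x₁ ×ˢ Icc (-1 : ℝ) 1 :=
    prod_mono Ioo_subset_Icc_self Ioo_subset_Icc_self
  have hK : IsCompact (Icc x₀ x₁ ×ˢ Icc (-1 : ℝ) 1) := isCompact_Icc.prod isCompact_Icc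
  have hae : (Ioo x₀ x₁ ×ˢ Ioo (-1 : ℝ) 1 : Set (ℝ × ℝ)) =ᵐ[volume] Icc x₀ x₁ ×ˢ Icc (-1 : ℝ) 1 :=
    Measure.set_prod_ae_eq Ioo_ae_eq_Icc Ioo_ae_eq_Icc
  set w : ℝ × ℝ → ℝ := fun p => u p.1 p.2 with hw
  set v : ℝ × ℝ → ℝ := fun p => fderiv ℝ w p (0, 1) with hv
  have hv1 : ContDiffOn ℝ 1 v U :=
    (hu.fderiv_of_isOpen hU (by norm_num)).clm_apply contDiffOn_const
  have hw1 : ContDiffOn ℝ 1 w U := hu.of_le (by norm_num)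
  have hwd : ∀ p ∈ U, HasFDerivAt w (fderiv ℝ w p) p := fun p hp =>
    ((hw1.differentiableOn (by norm_num)).differentiableAt (hU.mem_nhds hp)).hasFDerivAt
  have hvd : ∀ p ∈ U, HasFDerivAt v (fderiv ℝ v p) p := fun p hp =>
    ((hv1.differentiableOn (by norm_num)).differentiableAt (hU.mem_nhds hp)).hasFDerivAt
  have huy : ∀ p ∈ U, deriv (u p.1) p.2 = v p := fun p hp => (aux_slice2 (hwd p hp)).deriv
  have huyy : ∀ p ∈ U, deriv (deriv (u p.1)) p.2 = fderiv ℝ v p (0, 1) := by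
    intro p hp
    have h1 : deriv (u p.1) =ᶠ[nhds p.2] fun s => v (p.1, s) := by
      have hc : Continuous (fun s : ℝ => (p.1, s)) := by fun_prop
      filter_upwards [(hU.preimage hc).mem_nhds (show p.2 ∈ _ from hp)] with s hs
      exact huy (p.1, s) hs
    rw [h1.deriv_eq]
    exact (aux_slice2 (hvd p hp)).deriv
  have hux : ∀ p ∈ U, deriv (fun s => u s p.2) p.1 = fderiv ℝ w p (1, 0) :=
    fun p hp => (aux_slice1 (hwd p hp)).deriv
  set F : ℝ × ℝ → ℝ := fun p => 1 / 2 * (p.2 * w p ^ 2) with hF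
  set G : ℝ × ℝ → ℝ := fun p => - (w p * v p) with hG
  have hF1 : ContDiffOn ℝ 1 F U :=
    contDiffOn_const.mul (contDiffOn_snd.mul (hw1.pow 2))
  have hG1 : ContDiffOn ℝ 1 G U := (hw1.mul hv1).neg
  have hFd : ∀ p ∈ U, HasFDerivAt F (fderiv ℝ F p) p := fun p hp =>
    ((hF1.differentiableOn (by norm_num)).differentiableAt (hU.mem_nhds hp)).hasFDerivAt
  have hGd : ∀ p ∈ U, HasFDerivAt G (fderiv ℝ G p) p := fun p hp =>
    ((hG1.differentiableOn (by norm_num)).differentiableAt (hU.mem_nhds hp)).hasFDerivAt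
  have hFx : ∀ p ∈ U, fderiv ℝ F p (1, 0) = p.2 * w p * fderiv ℝ w p (1, 0) := by
    intro p hp
    have h1 := aux_slice1 (hFd p hp)
    have h2 := (((aux_slice1 (hwd p hp)).pow 2).const_mul p.2).const_mul (1 / 2)
    rw [h1.unique h2]
    simp
    ring
  have hGy : ∀ p ∈ U, fderiv ℝ G p (0, 1) = - (v p ^ 2 + w p * fderiv ℝ v p (0, 1)) := by
    intro p hp
    have h1 := aux_slice2 (hGd p hp)
    have h2 := ((aux_slice2 (hwd p hp)).mul (aux_slice2 (hvd p hp))).neg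
    rw [h1.unique h2]
    simp only [hv]
    ring
  have hcont : ContinuousOn (fun p => fderiv ℝ F p (1, 0) + fderiv ℝ G p (0, 1))
      (Icc x₀ x₁ ×ˢ Icc (-1 : ℝ) 1) :=
    (((hF1.continuousOn_fderiv_of_isOpen hU le_rfl).clm_apply continuousOn_const).add
      ((hG1.continuousOn_fderiv_of_isOpen hU le_rfl).clm_apply continuousOn_const)).mono hΩU
  have hdiv := integral_divergence_prod_Icc_of_hasFDerivAt_of_le F G (fderiv ℝ F) (fderiv ℝ G)
    (x₀, -1) (x₁, 1) ⟨hx.le, by norm_num⟩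
    (by rw [← Icc_prod_Icc]; exact hF1.continuousOn.mono hΩU)
    (by rw [← Icc_prod_Icc]; exact hG1.continuousOn.mono hΩU)
    (fun p hp => hFd p (hΩU (hsub hp))) (fun p hp => hGd p (hΩU (hsub hp)))
    (by rw [← Icc_prod_Icc]; exact hcont.integrableOn_compact hK)
  rw [← Icc_prod_Icc, ← setIntegral_congr_set hae] at hdiv
  have hms : MeasurableSet (Ioo x₀ x₁ ×ˢ Ioo (-1 : ℝ) 1) := measurableSet_Ioo.prod measurableSet_Ioo
  have e1 : (∫ p in Ioo x₀ x₁ ×ˢ Ioo (-1 : ℝ) 1, fderiv ℝ F p (1, 0) + fderiv ℝ G p (0, 1))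
      = ∫ p in Ioo x₀ x₁ ×ˢ Ioo (-1 : ℝ) 1, (f p.1 p.2 * u p.1 p.2 - v p ^ 2) := by
    refine setIntegral_congr_fun hms fun p hp => ?_
    have hpU := hΩU (hsub hp)
    have h := heq p hp
    rw [hux p hpU, huyy p hpU] at h
    simp only [hFx p hpU, hGy p hpU, ← h, hw]
    ring
  have e2 : (∫ p in Ioo x₀ x₁ ×ˢ Ioo (-1 : ℝ) 1, (deriv (u p.1) p.2) ^ 2)
      = ∫ p in Ioo x₀ x₁ ×ˢ Ioo (-1 : ℝ) 1, v p ^ 2 :=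
    setIntegral_congr_fun hms fun p hp => by simp only [huy p (hΩU (hsub hp))]
  have i1 : IntegrableOn (fun p : ℝ × ℝ => f p.1 p.2 * u p.1 p.2)
      (Ioo x₀ x₁ ×ˢ Ioo (-1 : ℝ) 1) :=
    ((hf.mul (hw1.continuousOn.mono hΩU)).integrableOn_compact hK).mono_set hsub
  have i2 : IntegrableOn (fun p : ℝ × ℝ => v p ^ 2) (Ioo x₀ x₁ ×ˢ Ioo (-1 : ℝ) 1) :=
    (((hv1.continuousOn.mono hΩU).pow 2).integrableOn_compact hK).mono_set hsub
  have g1 : (∫ x in x₀..x₁, G (x, 1)) = 0 := by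
    rw [intervalIntegral.integral_congr (g := fun _ => 0)]
    · simp
    · intro x hx'
      rw [uIcc_of_le hx.le] at hx'
      simp [hG, hw, (hbc x hx').1]
  have g2 : (∫ x in x₀..x₁, G (x, -1)) = 0 := by
    rw [intervalIntegral.integral_congr (g := fun _ => 0)]
    · simp
    · intro x hx'
      rw [uIcc_of_le hx.le] at hx'
      simp [hG, hw, (hbc x hx').2]
  have b1 : ∀ x, (∫ y in (-1 : ℝ)..1, F (x, y))
      = 1 / 2 * ∫ y in Ioo (-1 : ℝ) 1, y * (u x y) ^ 2 := by
    intro x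
    simp only [hF, hw]
    rw [intervalIntegral.integral_const_mul, intervalIntegral.integral_of_le (by norm_num),
      setIntegral_congr_set Ioo_ae_eq_Ioc]
  rw [e1, integral_sub i1 i2] at hdiv
  simp only [g1, g2, b1] at hdiv
  rw [e2]
  linarith
end

section
/- Let x₀ < x₁ be real numbers and Ω := (x₀,x₁) × (−1,1). Let u be twice continuously differentiable on an open neighborhood of the closure of Ω and suppose: y·∂ₓu − ∂²_{yy}u = 0 at every point of Ω; u(x₀,y) = 0 for every y ∈ [0,1]; u(x₁,y) = 0 for every y ∈ [−1,0]; and u(x,1) = u(x,−1) = 0 for every x ∈ [x₀,x₁]. Then u vanishes identically on the closure of Ω. -/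
open Set

lemma max_aux (x₀ x₁ : ℝ) (hx : x₀ < x₁) (u ux uy uyy : ℝ × ℝ → ℝ)
    (hc : ContinuousOn u (Icc x₀ x₁ ×ˢ Icc (-1 : ℝ) 1))
    (h1 : ∀ p ∈ Icc x₀ x₁ ×ˢ Icc (-1 : ℝ) 1, HasDerivAt (fun s => u (s, p.2)) (ux p) p.1)
    (h2 : ∀ p ∈ Icc x₀ x₁ ×ˢ Icc (-1 : ℝ) 1, HasDerivAt (fun t => u (p.1, t)) (uy p) p.2)
    (h3 : ∀ p ∈ Icc x₀ x₁ ×ˢ Icc (-1 : ℝ) 1, HasDerivAt (fun t => uy (p.1, t)) (uyy p) p.2)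
    (heq : ∀ p ∈ Icc x₀ x₁ ×ˢ Icc (-1 : ℝ) 1, p.2 * ux p - uyy p = 0)
    (hS0 : ∀ y ∈ Icc (0 : ℝ) 1, u (x₀, y) = 0)
    (hS1 : ∀ y ∈ Icc (-1 : ℝ) 0, u (x₁, y) = 0)
    (hbc : ∀ x ∈ Icc x₀ x₁, u (x, 1) = 0 ∧ u (x, -1) = 0) :
    ∀ p ∈ Icc x₀ x₁ ×ˢ Icc (-1 : ℝ) 1, u p ≤ 0 := by
  intro q hq
  refine le_of_forall_pos_le_add fun ε hε => ?_
  rw [zero_add]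
  set K := Icc x₀ x₁ ×ˢ Icc (-1 : ℝ) 1 with hK
  have hKc : IsCompact K := isCompact_Icc.prod isCompact_Icc
  obtain ⟨p, hp, hmax⟩ := hKc.exists_isMaxOn (f := fun p => u p + ε * p.2 ^ 2) ⟨q, hq⟩
    (hc.add (by fun_prop))
  have hqm : u q + ε * q.2 ^ 2 ≤ u p + ε * p.2 ^ 2 := hmax hq
  suffices hup : u p = 0 by
    have : p.2 ^ 2 ≤ 1 := by
      have := hp.2.1; have := hp.2.2; nlinarith
    nlinarith [mul_nonneg hε.le (sq_nonneg q.2)]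
  by_contra hne
  obtain ⟨x, y⟩ := p
  have hpx : x ∈ Icc x₀ x₁ := hp.1
  have hpy : y ∈ Icc (-1 : ℝ) 1 := hp.2
  have hy1 : y ≠ 1 := by rintro rfl; exact hne (hbc x hpx).1
  have hy2 : y ≠ -1 := by rintro rfl; exact hne (hbc x hpx).2
  have hyI : y ∈ Ioo (-1 : ℝ) 1 := ⟨lt_of_le_of_ne hpy.1 (Ne.symm hy2), lt_of_le_of_ne hpy.2 hy1⟩
  have hxmax : IsMaxOn (fun s => u (s, y)) (Icc x₀ x₁) x := by
    intro s hs
    have : u (s, y) + ε * y ^ 2 ≤ u (x, y) + ε * y ^ 2 := hmax (show (s, y) ∈ K from ⟨hs, hpy⟩)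
    simpa using this
  have hdx := (h1 (x, y) hp).hasFDerivAt.hasFDerivWithinAt (s := Icc x₀ x₁)
  have hend : ∀ z ∈ Icc x₀ x₁, (z - x) * ux (x, y) ≤ 0 := by
    intro z hz
    have := hxmax.localize.hasFDerivWithinAt_nonpos hdx (y := z - x)
      (mem_posTangentConeAt_of_segment_subset
        (by simpa using (convex_Icc x₀ x₁).segment_subset hpx hz))
    simpa using this
  have hyux : 0 ≤ y * ux (x, y) := by
    rcases lt_trichotomy y 0 with h | h | h
    · have hx1 : x ≠ x₁ := by rintro rfl; exact hne (hS1 y ⟨hpy.1, h.le⟩)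
      have := hend x₁ (right_mem_Icc.2 hx.le)
      have : 0 < x₁ - x := sub_pos.2 (lt_of_le_of_ne hpx.2 hx1)
      have : ux (x, y) ≤ 0 := by
        by_contra hh; push Not at hh; nlinarith
      nlinarith
    · simp [h]
    · have hx1 : x ≠ x₀ := by rintro rfl; exact hne (hS0 y ⟨h.le, hpy.2⟩)
      have := hend x₀ (left_mem_Icc.2 hx.le)
      have : 0 < x - x₀ := sub_pos.2 (lt_of_le_of_ne hpx.1 (Ne.symm hx1))
      have : 0 ≤ ux (x, y) := by
        by_contra hh; push Not at hh; nlinarith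
      nlinarith
  have hE := heq (x, y) hp
  have huyy : 0 ≤ uyy (x, y) := by simp only at hE; linarith
  -- second derivative test in `y`
  set g : ℝ → ℝ := fun t => u (x, t) + ε * t ^ 2 with hg
  have hnhds : Ioo (-1 : ℝ) 1 ∈ nhds y := Ioo_mem_nhds hyI.1 hyI.2
  have hgmax : IsLocalMax g y := by
    filter_upwards [hnhds] with t ht
    exact hmax (show (x, t) ∈ K from ⟨hpx, Ioo_subset_Icc_self ht⟩)
  have hgd : ∀ t ∈ Icc (-1 : ℝ) 1, HasDerivAt g (uy (x, t) + ε * (2 * t)) t := by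
    intro t ht
    have := (h2 (x, t) ⟨hpx, ht⟩).fun_add (((hasDerivAt_id t).pow 2).const_mul ε)
    simpa [hg] using this
  have hgd2 : HasDerivAt (deriv g) (uyy (x, y) + ε * 2) y := by
    have h := (h3 (x, y) hp).fun_add (((hasDerivAt_id y).const_mul 2).const_mul ε)
    have h' : HasDerivAt (fun t => uy (x, t) + ε * (2 * t)) (uyy (x, y) + ε * 2) y := by
      simpa using h
    refine h'.congr_of_eventuallyEq ?_
    filter_upwards [hnhds] with t ht
    exact (hgd t (Ioo_subset_Icc_self ht)).deriv
  have hgmin : IsLocalMin g y := by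
    apply isLocalMin_of_deriv_deriv_pos
    · rw [hgd2.deriv]; positivity
    · exact hgmax.deriv_eq_zero
    · exact (hgd y hpy).continuousAt
  have hconst : g =ᶠ[nhds y] fun _ => g y := by
    filter_upwards [hgmin, hgmax] with t h1 h2
    exact le_antisymm h2 h1
  have h0 : deriv (deriv g) y = 0 := by
    rw [hconst.deriv.deriv_eq]; simp
  rw [hgd2.deriv] at h0
  linarith

/-- Uniqueness for the linear shear-flow problem: a classical solution of
`y ∂ₓ u - ∂_yy u = 0` on `Ω = (x₀,x₁) × (-1,1)` vanishing on `Σ₀ = {x₀} × [0,1]`,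
on `Σ₁ = {x₁} × [-1,0]` and on `{y = ±1}` vanishes identically on the closure of `Ω`. -/
theorem stmt11 (x₀ x₁ : ℝ) (hx : x₀ < x₁) (u : ℝ → ℝ → ℝ)
    (U : Set (ℝ × ℝ)) (hU : IsOpen U)
    (hΩU : closure (Ioo x₀ x₁ ×ˢ Ioo (-1 : ℝ) 1) ⊆ U)
    (hu : ContDiffOn ℝ 2 (fun p : ℝ × ℝ => u p.1 p.2) U)
    (heq : ∀ p ∈ Ioo x₀ x₁ ×ˢ Ioo (-1 : ℝ) 1,
      p.2 * deriv (fun s : ℝ => u s p.2) p.1 - deriv (deriv (u p.1)) p.2 = 0)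
    (hSigma0 : ∀ y ∈ Icc (0 : ℝ) 1, u x₀ y = 0)
    (hSigma1 : ∀ y ∈ Icc (-1 : ℝ) 0, u x₁ y = 0)
    (hbc : ∀ x ∈ Icc x₀ x₁, u x 1 = 0 ∧ u x (-1) = 0) :
    ∀ p ∈ closure (Ioo x₀ x₁ ×ˢ Ioo (-1 : ℝ) 1), u p.1 p.2 = 0 := by
  rw [closure_prod_eq, closure_Ioo hx.ne, closure_Ioo (by norm_num)] at hΩU ⊢
  set F : ℝ × ℝ → ℝ := fun p => u p.1 p.2 with hF
  set D : ℝ × ℝ → ℝ := fun p => fderiv ℝ F p (0, 1) with hD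
  have hF' : ContDiffOn ℝ 1 (fderiv ℝ F) U := hu.fderiv_of_isOpen hU (by norm_num)
  have hDc : ContDiffOn ℝ 1 D U := hF'.clm_apply contDiffOn_const
  have hD' : ContinuousOn (fderiv ℝ D) U := hDc.continuousOn_fderiv_of_isOpen hU le_rfl
  have hFd : ∀ p ∈ U, HasFDerivAt F (fderiv ℝ F p) p := fun p hp =>
    ((hu.contDiffAt (hU.mem_nhds hp)).differentiableAt (by norm_num)).hasFDerivAt
  have hDd : ∀ p ∈ U, HasFDerivAt D (fderiv ℝ D p) p := fun p hp =>
    ((hDc.contDiffAt (hU.mem_nhds hp)).differentiableAt (by norm_num)).hasFDerivAt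
  have d1 : ∀ p ∈ U, HasDerivAt (fun s => F (s, p.2)) (fderiv ℝ F p (1, 0)) p.1 := fun p hp =>
    (hFd p hp).comp_hasDerivAt (f := fun s => (s, p.2)) p.1
      ((hasDerivAt_id p.1).prodMk (hasDerivAt_const p.1 p.2))
  have d2 : ∀ p ∈ U, HasDerivAt (fun t => F (p.1, t)) (D p) p.2 := fun p hp =>
    (hFd p hp).comp_hasDerivAt (f := fun t => (p.1, t)) p.2
      ((hasDerivAt_const p.2 p.1).prodMk (hasDerivAt_id p.2))
  have d3 : ∀ p ∈ U, HasDerivAt (fun t => D (p.1, t)) (fderiv ℝ D p (0, 1)) p.2 := fun p hp =>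
    (hDd p hp).comp_hasDerivAt (f := fun t => (p.1, t)) p.2
      ((hasDerivAt_const p.2 p.1).prodMk (hasDerivAt_id p.2))
  have hEq : ∀ p ∈ Icc x₀ x₁ ×ˢ Icc (-1 : ℝ) 1,
      p.2 * fderiv ℝ F p (1, 0) - fderiv ℝ D p (0, 1) = 0 := by
    have hcl : Icc x₀ x₁ ×ˢ Icc (-1 : ℝ) 1 = closure (Ioo x₀ x₁ ×ˢ Ioo (-1 : ℝ) 1) := by
      rw [closure_prod_eq, closure_Ioo hx.ne, closure_Ioo (by norm_num)]
    have hsub : Ioo x₀ x₁ ×ˢ Ioo (-1 : ℝ) 1 ⊆ Icc x₀ x₁ ×ˢ Icc (-1 : ℝ) 1 :=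
      prod_mono Ioo_subset_Icc_self Ioo_subset_Icc_self
    have hcont : ContinuousOn (fun p : ℝ × ℝ => p.2 * fderiv ℝ F p (1, 0) - fderiv ℝ D p (0, 1))
        (Icc x₀ x₁ ×ˢ Icc (-1 : ℝ) 1) := by
      refine ContinuousOn.mono ?_ hΩU
      exact (continuousOn_snd.mul (hF'.continuousOn.clm_apply continuousOn_const)).sub
        (hD'.clm_apply continuousOn_const)
    have hE : EqOn (fun p : ℝ × ℝ => p.2 * fderiv ℝ F p (1, 0) - fderiv ℝ D p (0, 1))
        (fun _ => 0) (Ioo x₀ x₁ ×ˢ Ioo (-1 : ℝ) 1) := by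
      intro p hp
      have hpU := hΩU (hsub hp)
      have e1 : deriv (fun s : ℝ => u s p.2) p.1 = fderiv ℝ F p (1, 0) := (d1 p hpU).deriv
      have e2 : deriv (deriv (u p.1)) p.2 = fderiv ℝ D p (0, 1) := by
        refine HasDerivAt.deriv ((d3 p hpU).congr_of_eventuallyEq ?_)
        have : ∀ᶠ t in nhds p.2, (p.1, t) ∈ U :=
          (Continuous.prodMk_right p.1).continuousAt.eventually (hU.mem_nhds hpU)
        filter_upwards [this] with t ht
        exact (d2 (p.1, t) ht).deriv
      have := heq p hp
      rw [e1, e2] at this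
      exact this
    intro p hp
    exact hE.of_subset_closure hcont continuousOn_const hsub hcl.le hp
  have hFc : ContinuousOn F (Icc x₀ x₁ ×ˢ Icc (-1 : ℝ) 1) := hu.continuousOn.mono hΩU
  intro p hp
  apply le_antisymm
  · exact max_aux x₀ x₁ hx F _ D _ hFc (fun p hp => d1 p (hΩU hp)) (fun p hp => d2 p (hΩU hp))
      (fun p hp => d3 p (hΩU hp)) hEq hSigma0 hSigma1 hbc p hp
  · have := max_aux x₀ x₁ hx (fun p => -F p) (fun p => -fderiv ℝ F p (1, 0)) (fun p => -D p)
      (fun p => -fderiv ℝ D p (0, 1)) hFc.neg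
      (fun p hp => (d1 p (hΩU hp)).fun_neg) (fun p hp => (d2 p (hΩU hp)).fun_neg)
      (fun p hp => (d3 p (hΩU hp)).fun_neg) (fun p hp => by have := hEq p hp; linarith)
      (fun y hy => by simpa [hF] using hSigma0 y hy) (fun y hy => by simpa [hF] using hSigma1 y hy)
      (fun x hx => by simpa [hF] using hbc x hx) p hp
    simpa [hF] using this
end

section
/- Let x₀ < x₁ be real numbers and Ω := (x₀,x₁) × (−1,1). Let α and γ be continuously differentiable on an open neighborhood of the closure of Ω with α(x,y) ≥ 1/2, |∂_yα(x,y)| ≤ 1/8 and |∂_yγ(x,y)| ≤ 1/8 for all (x,y) in the closure of Ω. Let u be twice continuously differentiable on an open neighborhood of the closure of Ω and suppose: y·∂ₓu + γ·∂_yu − α·∂²_{yy}u = 0 at every point of Ω; u(x₀,y) = 0 for every y ∈ [0,1]; u(x₁,y) = 0 for every y ∈ [−1,0]; and u(x,1) = u(x,−1) = 0 for every x ∈ [x₀,x₁]. Then u vanishes identically on the closure of Ω. -/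
open Set

lemma aux_deriv_y (F : ℝ → ℝ → ℝ) (U : Set (ℝ × ℝ)) (hU : IsOpen U) (n m : WithTop ℕ∞)
    (hmn : m + 1 ≤ n) (hn : n ≠ 0)
    (hF : ContDiffOn ℝ n (fun p : ℝ × ℝ => F p.1 p.2) U) :
    ContDiffOn ℝ m (fun p : ℝ × ℝ => deriv (F p.1) p.2) U ∧
    ∀ p ∈ U, DifferentiableAt ℝ (F p.1) p.2 := by
  have key : ∀ p ∈ U, HasDerivAt (F p.1)
      (fderiv ℝ (fun p : ℝ × ℝ => F p.1 p.2) p (0, 1)) p.2 := by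
    intro p hp
    have h1 : HasFDerivAt (fun p : ℝ × ℝ => F p.1 p.2) _ (p.1, p.2) :=
      ((hF.differentiableOn hn).differentiableAt (hU.mem_nhds hp)).hasFDerivAt
    have h2 : HasDerivAt (fun t : ℝ => (p.1, t)) ((0 : ℝ), (1 : ℝ)) p.2 :=
      (hasDerivAt_const _ _).prodMk (hasDerivAt_id _)
    exact h1.comp_hasDerivAt p.2 h2
  refine ⟨?_, fun p hp => (key p hp).differentiableAt⟩
  have h3 : ContDiffOn ℝ m (fun p => fderiv ℝ (fun p : ℝ × ℝ => F p.1 p.2) p (0, 1)) U :=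
    (hF.fderiv_of_isOpen hU hmn).clm_apply contDiffOn_const
  exact h3.congr (fun p hp => (key p hp).deriv)

lemma aux_deriv_x (F : ℝ → ℝ → ℝ) (U : Set (ℝ × ℝ)) (hU : IsOpen U) (n m : WithTop ℕ∞)
    (hmn : m + 1 ≤ n) (hn : n ≠ 0)
    (hF : ContDiffOn ℝ n (fun p : ℝ × ℝ => F p.1 p.2) U) :
    ContDiffOn ℝ m (fun p : ℝ × ℝ => deriv (fun s => F s p.2) p.1) U ∧
    ∀ p ∈ U, DifferentiableAt ℝ (fun s => F s p.2) p.1 := by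
  have key : ∀ p ∈ U, HasDerivAt (fun s => F s p.2)
      (fderiv ℝ (fun p : ℝ × ℝ => F p.1 p.2) p (1, 0)) p.1 := by
    intro p hp
    have h1 : HasFDerivAt (fun p : ℝ × ℝ => F p.1 p.2) _ (p.1, p.2) :=
      ((hF.differentiableOn hn).differentiableAt (hU.mem_nhds hp)).hasFDerivAt
    have h2 : HasDerivAt (fun t : ℝ => (t, p.2)) ((1 : ℝ), (0 : ℝ)) p.1 :=
      (hasDerivAt_id _).prodMk (hasDerivAt_const _ _)
    exact h1.comp_hasDerivAt p.1 h2
  refine ⟨?_, fun p hp => (key p hp).differentiableAt⟩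
  have h3 : ContDiffOn ℝ m (fun p => fderiv ℝ (fun p : ℝ × ℝ => F p.1 p.2) p (1, 0)) U :=
    (hF.fderiv_of_isOpen hU hmn).clm_apply contDiffOn_const
  exact h3.congr (fun p hp => (key p hp).deriv)

lemma aux_second (f : ℝ → ℝ) (y : ℝ) (hc : ContinuousAt f y) (h : IsLocalMax f y) :
    deriv (deriv f) y ≤ 0 := by
  by_contra hcon
  push Not at hcon
  have hmin := isLocalMin_of_deriv_deriv_pos hcon h.deriv_eq_zero hc
  have he : f =ᶠ[nhds y] fun _ => f y := by
    filter_upwards [h, hmin] with t h1 h2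
    exact le_antisymm h1 h2
  have h2 : deriv (deriv f) y = 0 := by
    rw [he.deriv.deriv_eq]; simp
  linarith

lemma aux_side (f : ℝ → ℝ) (a b x z : ℝ) (hx : x ∈ Icc a b) (hz : z ∈ Icc a b)
    (hd : DifferentiableAt ℝ f x) (h : IsMaxOn f (Icc a b) x) :
    deriv f x * (z - x) ≤ 0 := by
  have h1 := h.localize.hasFDerivWithinAt_nonpos
    hd.hasDerivAt.hasFDerivAt.hasFDerivWithinAt
    (sub_mem_posTangentConeAt_of_segment_subset ((convex_Icc a b).segment_subset hx hz))
  simpa [mul_comm] using h1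

lemma aux_le (x₀ x₁ : ℝ) (u α γ : ℝ → ℝ → ℝ)
    (U : Set (ℝ × ℝ)) (hU : IsOpen U) (hKU : Icc x₀ x₁ ×ˢ Icc (-1 : ℝ) 1 ⊆ U)
    (haLB : ∀ p ∈ Icc x₀ x₁ ×ˢ Icc (-1 : ℝ) 1, (1 : ℝ) / 2 ≤ α p.1 p.2)
    (M : ℝ) (hM : ∀ p ∈ Icc x₀ x₁ ×ˢ Icc (-1 : ℝ) 1, |γ p.1 p.2| ≤ M)
    (hu : ContDiffOn ℝ 2 (fun p : ℝ × ℝ => u p.1 p.2) U)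
    (heq : ∀ p ∈ Icc x₀ x₁ ×ˢ Icc (-1 : ℝ) 1,
      p.2 * deriv (fun s : ℝ => u s p.2) p.1 + γ p.1 p.2 * deriv (u p.1) p.2
        - α p.1 p.2 * deriv (deriv (u p.1)) p.2 = 0)
    (hSigma0 : ∀ y ∈ Icc (0 : ℝ) 1, u x₀ y = 0)
    (hSigma1 : ∀ y ∈ Icc (-1 : ℝ) 0, u x₁ y = 0)
    (hbc : ∀ x ∈ Icc x₀ x₁, u x 1 = 0 ∧ u x (-1) = 0) :
    ∀ p ∈ Icc x₀ x₁ ×ˢ Icc (-1 : ℝ) 1, u p.1 p.2 ≤ 0 := by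
  intro q hq
  have hM0 : 0 ≤ M := (abs_nonneg _).trans (hM q hq)
  obtain ⟨L, hL⟩ : ∃ L : ℝ, L = 2 * M + 1 := ⟨_, rfl⟩
  have hLpos : 0 < L := by linarith
  suffices H : ∀ ε > 0, u q.1 q.2 ≤ ε * Real.exp L by
    by_contra hcon
    push Not at hcon
    have := H (u q.1 q.2 / (2 * Real.exp L)) (by positivity)
    have h2 : u q.1 q.2 / (2 * Real.exp L) * Real.exp L = u q.1 q.2 / 2 := by
      field_simp
    linarith
  intro ε hε
  have hcomp : IsCompact (Icc x₀ x₁ ×ˢ Icc (-1 : ℝ) 1) := isCompact_Icc.prod isCompact_Icc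
  have hcont : ContinuousOn (fun p : ℝ × ℝ => u p.1 p.2 + ε * Real.exp (L * p.2))
      (Icc x₀ x₁ ×ˢ Icc (-1 : ℝ) 1) :=
    (hu.continuousOn.mono hKU).add (by fun_prop)
  obtain ⟨⟨x, y⟩, hp, hmax⟩ := hcomp.exists_isMaxOn ⟨q, hq⟩ hcont
  have hmax' : ∀ p ∈ Icc x₀ x₁ ×ˢ Icc (-1 : ℝ) 1,
    u p.1 p.2 + ε * Real.exp (L * p.2) ≤ u x y + ε * Real.exp (L * y) := fun p hp => hmax hp
  have hxI : x ∈ Icc x₀ x₁ := hp.1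
  have hyI : y ∈ Icc (-1 : ℝ) 1 := hp.2
  have hdone : u x y = 0 → u q.1 q.2 ≤ ε * Real.exp L := by
    intro h0
    have h1 := hmax' q hq
    have h2 : Real.exp (L * y) ≤ Real.exp L := Real.exp_le_exp.2 (by nlinarith [hyI.2])
    have h3 : 0 < ε * Real.exp (L * q.2) := by positivity
    nlinarith
  by_cases hy1 : y = 1
  · exact hdone (by rw [hy1]; exact (hbc x hxI).1)
  by_cases hy2 : y = -1
  · exact hdone (by rw [hy2]; exact (hbc x hxI).2)
  have hyO : y ∈ Ioo (-1 : ℝ) 1 :=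
    ⟨lt_of_le_of_ne hyI.1 (Ne.symm hy2), lt_of_le_of_ne hyI.2 hy1⟩
  by_cases hc0 : x = x₀ ∧ 0 ≤ y
  · exact hdone (by rw [hc0.1]; exact hSigma0 y ⟨hc0.2, hyI.2⟩)
  by_cases hc1 : x = x₁ ∧ y ≤ 0
  · exact hdone (by rw [hc1.1]; exact hSigma1 y ⟨hyI.1, hc1.2⟩)
  exfalso
  have hpU : (x, y) ∈ U := hKU hp
  obtain ⟨hDy, hdy⟩ := aux_deriv_y u U hU 2 1 (by norm_num) (by norm_num) hu
  obtain ⟨-, hdyy⟩ := aux_deriv_y (fun x y => deriv (u x) y) U hU 1 0 (by norm_num)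
    (by norm_num) hDy
  obtain ⟨-, hdx⟩ := aux_deriv_x u U hU 2 1 (by norm_num) (by norm_num) hu
  -- x direction
  have hmx : IsMaxOn (fun s => u s y) (Icc x₀ x₁) x := by
    intro s hs
    have := hmax' (s, y) ⟨hs, hyI⟩
    simpa using this
  have hs0 := aux_side _ x₀ x₁ x x₀ hxI ⟨le_rfl, hxI.1.trans hxI.2⟩ (hdx _ hpU) hmx
  have hs1 := aux_side _ x₀ x₁ x x₁ hxI ⟨hxI.1.trans hxI.2, le_rfl⟩ (hdx _ hpU) hmx
  have hux : 0 ≤ y * deriv (fun s => u s y) x := by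
    rcases lt_trichotomy y 0 with h | h | h
    · have : x < x₁ := lt_of_le_of_ne hxI.2 (fun h' => hc1 ⟨h', h.le⟩)
      have : deriv (fun s => u s y) x ≤ 0 := by
        by_contra hh; push Not at hh; nlinarith
      nlinarith
    · simp [h]
    · have : x₀ < x := lt_of_le_of_ne hxI.1 (fun h' => hc0 ⟨h'.symm, h.le⟩)
      have : 0 ≤ deriv (fun s => u s y) x := by
        by_contra hh; push Not at hh; nlinarith
      nlinarith
  -- y direction
  have hmy : IsLocalMax (fun t => u x t + ε * Real.exp (L * t)) y := by
    filter_upwards [Ioo_mem_nhds hyO.1 hyO.2] with t ht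
    exact hmax' (x, t) ⟨hxI, ht.1.le, ht.2.le⟩
  have hexp : ∀ t, HasDerivAt (fun t => ε * Real.exp (L * t)) (ε * L * Real.exp (L * t)) t := by
    intro t
    have h : HasDerivAt (fun t => ε * Real.exp (L * t)) (ε * (Real.exp (L * t) * (L * 1))) t :=
      ((((hasDerivAt_id t).const_mul L).exp).const_mul ε)
    rwa [show ε * (Real.exp (L * t) * (L * 1)) = ε * L * Real.exp (L * t) by ring] at h
  have hvd : ∀ t ∈ Ioo (-1 : ℝ) 1, HasDerivAt (fun t => u x t + ε * Real.exp (L * t))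
      (deriv (u x) t + ε * L * Real.exp (L * t)) t := fun t ht =>
    (hdy (x, t) (hKU ⟨hxI, ht.1.le, ht.2.le⟩)).hasDerivAt.add (hexp t)
  have h1 : deriv (u x) y + ε * L * Real.exp (L * y) = 0 := hmy.hasDerivAt_eq_zero (hvd y hyO)
  have h2 : deriv (deriv (u x)) y + ε * L * (L * Real.exp (L * y)) ≤ 0 := by
    have h3 := aux_second _ y (hvd y hyO).continuousAt hmy
    have h4 : deriv (fun t => u x t + ε * Real.exp (L * t)) =ᶠ[nhds y]
        fun t => deriv (u x) t + ε * L * Real.exp (L * t) := by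
      filter_upwards [Ioo_mem_nhds hyO.1 hyO.2] with t ht
      exact (hvd t ht).deriv
    rw [h4.deriv_eq] at h3
    have h5 : HasDerivAt (fun t => ε * L * Real.exp (L * t))
        (ε * L * (L * Real.exp (L * y))) y := by
      have h : HasDerivAt (fun t => ε * L * Real.exp (L * t))
          (ε * L * (Real.exp (L * y) * (L * 1))) y :=
        ((((hasDerivAt_id y).const_mul L).exp).const_mul (ε * L))
      rwa [show ε * L * (Real.exp (L * y) * (L * 1)) = ε * L * (L * Real.exp (L * y)) by
        ring] at h
    have h6 : HasDerivAt (fun t => deriv (u x) t + ε * L * Real.exp (L * t)) _ y :=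
      (hdyy (x, y) hpU).hasDerivAt.add h5
    rw [h6.deriv] at h3
    exact h3
  have he := heq (x, y) hp
  have haa := haLB (x, y) hp
  have hgg := (abs_le.1 (hM (x, y) hp)).2
  simp only at he haa hgg
  obtain ⟨c, hc⟩ : ∃ c, c = ε * L * Real.exp (L * y) := ⟨_, rfl⟩
  have hcpos : 0 < c := by rw [hc]; positivity
  have h1' : deriv (u x) y = -c := by rw [hc]; linarith
  have h2' : deriv (deriv (u x)) y ≤ -(L * c) := by rw [hc]; nlinarith
  rw [h1'] at he
  have h7 : α x y * deriv (deriv (u x)) y ≤ α x y * (-(L * c)) :=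
    mul_le_mul_of_nonneg_left h2' (by linarith)
  have h8 : (1 / 2) * (L * c) ≤ α x y * (L * c) :=
    mul_le_mul_of_nonneg_right haa (by positivity)
  have h9 : γ x y * c ≤ M * c := mul_le_mul_of_nonneg_right hgg hcpos.le
  have h10 : (1 / 2) * (L * c) = M * c + c / 2 := by rw [hL]; ring
  nlinarith

/-- Uniqueness for the degenerate forward-backward equation
`y ∂ₓ u + γ ∂_y u - α ∂_yy u = 0` on `Ω = (x₀,x₁) × (-1,1)`, with `α ≥ 1/2`,
`|∂_y α| ≤ 1/8`, `|∂_y γ| ≤ 1/8`: a classical solution vanishing on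
`Σ₀ = {x₀} × [0,1]`, `Σ₁ = {x₁} × [-1,0]` and `{y = ±1}` vanishes identically. -/
theorem stmt12 (x₀ x₁ : ℝ) (hx : x₀ < x₁) (u α γ : ℝ → ℝ → ℝ)
    (U : Set (ℝ × ℝ)) (hU : IsOpen U)
    (hΩU : closure (Ioo x₀ x₁ ×ˢ Ioo (-1 : ℝ) 1) ⊆ U)
    (ha : ContDiffOn ℝ 1 (fun p : ℝ × ℝ => α p.1 p.2) U)
    (hg : ContDiffOn ℝ 1 (fun p : ℝ × ℝ => γ p.1 p.2) U)
    (haLB : ∀ p ∈ closure (Ioo x₀ x₁ ×ˢ Ioo (-1 : ℝ) 1), (1 : ℝ) / 2 ≤ α p.1 p.2)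
    (haD : ∀ p ∈ closure (Ioo x₀ x₁ ×ˢ Ioo (-1 : ℝ) 1), |deriv (α p.1) p.2| ≤ 1 / 8)
    (hgD : ∀ p ∈ closure (Ioo x₀ x₁ ×ˢ Ioo (-1 : ℝ) 1), |deriv (γ p.1) p.2| ≤ 1 / 8)
    (hu : ContDiffOn ℝ 2 (fun p : ℝ × ℝ => u p.1 p.2) U)
    (heq : ∀ p ∈ Ioo x₀ x₁ ×ˢ Ioo (-1 : ℝ) 1,
      p.2 * deriv (fun s : ℝ => u s p.2) p.1 + γ p.1 p.2 * deriv (u p.1) p.2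
        - α p.1 p.2 * deriv (deriv (u p.1)) p.2 = 0)
    (hSigma0 : ∀ y ∈ Icc (0 : ℝ) 1, u x₀ y = 0)
    (hSigma1 : ∀ y ∈ Icc (-1 : ℝ) 0, u x₁ y = 0)
    (hbc : ∀ x ∈ Icc x₀ x₁, u x 1 = 0 ∧ u x (-1) = 0) :
    ∀ p ∈ closure (Ioo x₀ x₁ ×ˢ Ioo (-1 : ℝ) 1), u p.1 p.2 = 0 := by
  have hcl : closure (Ioo x₀ x₁ ×ˢ Ioo (-1 : ℝ) 1) = Icc x₀ x₁ ×ˢ Icc (-1 : ℝ) 1 := by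
    rw [closure_prod_eq, closure_Ioo hx.ne, closure_Ioo (by norm_num)]
  obtain ⟨hDy, hdy⟩ := aux_deriv_y u U hU 2 1 (by norm_num) (by norm_num) hu
  obtain ⟨hDyy, -⟩ := aux_deriv_y (fun x y => deriv (u x) y) U hU 1 0 (by norm_num)
    (by norm_num) hDy
  obtain ⟨hDx, -⟩ := aux_deriv_x u U hU 2 1 (by norm_num) (by norm_num) hu
  have heq' : ∀ p ∈ closure (Ioo x₀ x₁ ×ˢ Ioo (-1 : ℝ) 1),
      p.2 * deriv (fun s : ℝ => u s p.2) p.1 + γ p.1 p.2 * deriv (u p.1) p.2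
        - α p.1 p.2 * deriv (deriv (u p.1)) p.2 = 0 := by
    have hc : ContinuousOn (fun p : ℝ × ℝ =>
        p.2 * deriv (fun s : ℝ => u s p.2) p.1 + γ p.1 p.2 * deriv (u p.1) p.2
        - α p.1 p.2 * deriv (deriv (u p.1)) p.2) (closure (Ioo x₀ x₁ ×ˢ Ioo (-1 : ℝ) 1)) :=
      ((((continuousOn_snd).mul hDx.continuousOn).add
        (hg.continuousOn.mul hDy.continuousOn)).sub
        (ha.continuousOn.mul hDyy.continuousOn)).mono hΩU
    have h0 : EqOn _ (fun _ : ℝ × ℝ => (0 : ℝ)) (Ioo x₀ x₁ ×ˢ Ioo (-1 : ℝ) 1) := heq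
    exact h0.of_subset_closure hc continuousOn_const subset_closure subset_rfl
  obtain ⟨M, hM⟩ := (isCompact_Icc.prod isCompact_Icc :
    IsCompact (Icc x₀ x₁ ×ˢ Icc (-1 : ℝ) 1)).exists_bound_of_continuousOn
    (hg.continuousOn.mono (hcl ▸ hΩU))
  rw [hcl] at hΩU haLB heq' ⊢
  intro p hp
  refine le_antisymm
    (aux_le x₀ x₁ u α γ U hU hΩU haLB M hM hu heq' hSigma0 hSigma1 hbc p hp) ?_
  have := aux_le x₀ x₁ (fun x y => -u x y) α γ U hU hΩU haLB M hM hu.neg ?_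
    (fun y hy => by simp [hSigma0 y hy]) (fun y hy => by simp [hSigma1 y hy])
    (fun x hx => by simp [hbc x hx]) p hp
  · simpa using this
  · intro p hp
    have h := heq' p hp
    have e1 : deriv (fun y => -u p.1 y) = fun y => -deriv (u p.1) y := by
      funext y; exact deriv.fun_neg
    have e2 : deriv (fun y => -deriv (u p.1) y) p.2 = -deriv (deriv (u p.1)) p.2 :=
      deriv.fun_neg
    have e3 : deriv (fun s => -u s p.2) p.1 = -deriv (fun s => u s p.2) p.1 := deriv.fun_neg
    rw [e1, e2, e3]
    linarith
end

section
/- Let x₀ < x₁ be real numbers and Ω := (x₀,x₁) × (−1,1). Let f be continuous on the closure of Ω and let u₁, u₂ be twice continuously differentiable on an open neighborhood of the closure of Ω such that, for i = 1,2: (y + uᵢ)·∂ₓuᵢ − ∂²_{yy}uᵢ = f at every point of Ω and uᵢ(x,1) = uᵢ(x,−1) = 0 for every x ∈ [x₀,x₁]. Assume the same lateral boundary data: u₁(x₀,y) = u₂(x₀,y) for y ∈ [0,1] and u₁(x₁,y) = u₂(x₁,y) for y ∈ [−1,0]. Assume the sign conditions y + u₁(x₁,y) ≥ 0 for y ∈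 [0,1] and y + u₁(x₀,y) ≤ 0 for y ∈ [−1,0], and the smallness conditions sup_Ω |∂ₓu₁| ≤ 1/8 and sup_Ω |∂ₓu₂| ≤ 1/8. Then u₁ = u₂ on the closure of Ω. -/
open Set

/-- Basic calculus facts for the partial derivatives of a `C²` function. -/
lemma partials_aux (u : ℝ → ℝ → ℝ) (U : Set (ℝ × ℝ)) (hU : IsOpen U)
    (hu : ContDiffOn ℝ 2 (fun p : ℝ × ℝ => u p.1 p.2) U) :
    ∃ v : ℝ × ℝ → ℝ, ContDiffOn ℝ 1 v U ∧
      (∀ p ∈ U, v p = fderiv ℝ (fun p : ℝ × ℝ => u p.1 p.2) p (0, 1)) ∧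
      ∀ p ∈ U, deriv (fun s : ℝ => u s p.2) p.1
          = fderiv ℝ (fun p : ℝ × ℝ => u p.1 p.2) p (1, 0) ∧
        deriv (deriv (u p.1)) p.2 = fderiv ℝ v p (0, 1) := by
  have hv : ContDiffOn ℝ 1 (fun q => fderiv ℝ (fun p : ℝ × ℝ => u p.1 p.2) q (0, 1)) U :=
    (hu.fderiv_of_isOpen hU (by norm_num)).clm_apply contDiffOn_const
  have hd : ∀ p ∈ U, HasFDerivAt (fun p : ℝ × ℝ => u p.1 p.2)
      (fderiv ℝ (fun p : ℝ × ℝ => u p.1 p.2) p) p := fun p hp =>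
    ((hu.differentiableOn (by norm_num)).differentiableAt (hU.mem_nhds hp)).hasFDerivAt
  have hpx : ∀ p : ℝ × ℝ, HasDerivAt (fun s : ℝ => (s, p.2)) ((1, 0) : ℝ × ℝ) p.1 := fun p =>
    (hasDerivAt_id p.1).prodMk (hasDerivAt_const p.1 p.2)
  have hpy : ∀ p : ℝ × ℝ, HasDerivAt (fun s : ℝ => (p.1, s)) ((0, 1) : ℝ × ℝ) p.2 := fun p =>
    (hasDerivAt_const p.2 p.1).prodMk (hasDerivAt_id p.2)
  refine ⟨_, hv, fun p _ => rfl, fun p hp => ⟨?_, ?_⟩⟩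
  · exact ((hd p hp).comp_hasDerivAt p.1 (hpx p)).deriv
  · have hev : deriv (u p.1) =ᶠ[nhds p.2]
        fun y => fderiv ℝ (fun p : ℝ × ℝ => u p.1 p.2) (p.1, y) (0, 1) := by
      have : ∀ᶠ y in nhds p.2, (p.1, y) ∈ U :=
        (hpy p).continuousAt.eventually (hU.mem_nhds hp)
      filter_upwards [this] with y hy
      exact ((hd (p.1, y) hy).comp_hasDerivAt y (hpy (p.1, y))).deriv
    rw [hev.deriv_eq]
    have h2 := ((hv.differentiableOn (by norm_num)).differentiableAt (hU.mem_nhds hp)).hasFDerivAt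
    exact (h2.comp_hasDerivAt p.2 (hpy p)).deriv

/-- Uniqueness for the quasilinear forward-backward equation `(y+u) ∂ₓ u - ∂_yy u = f`
on `Ω = (x₀,x₁) × (-1,1)`: two classical solutions with the same source term, the same
lateral data on `Σ₀ = {x₀} × [0,1]` and `Σ₁ = {x₁} × [-1,0]`, vanishing on `{y = ±1}`,
satisfying the sign conditions `y + u₁(x₁,·) ≥ 0` on `[0,1]`, `y + u₁(x₀,·) ≤ 0` on
`[-1,0]` and the smallness conditions `sup_Ω |∂ₓ uᵢ| ≤ 1/8`, coincide on the closure. -/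
theorem stmt13 (x₀ x₁ : ℝ) (hx : x₀ < x₁) (u₁ u₂ f : ℝ → ℝ → ℝ)
    (U : Set (ℝ × ℝ)) (hU : IsOpen U)
    (hΩU : closure (Ioo x₀ x₁ ×ˢ Ioo (-1 : ℝ) 1) ⊆ U)
    (hf : ContinuousOn (fun p : ℝ × ℝ => f p.1 p.2) (closure (Ioo x₀ x₁ ×ˢ Ioo (-1 : ℝ) 1)))
    (hu₁ : ContDiffOn ℝ 2 (fun p : ℝ × ℝ => u₁ p.1 p.2) U)
    (hu₂ : ContDiffOn ℝ 2 (fun p : ℝ × ℝ => u₂ p.1 p.2) U)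
    (heq₁ : ∀ p ∈ Ioo x₀ x₁ ×ˢ Ioo (-1 : ℝ) 1,
      (p.2 + u₁ p.1 p.2) * deriv (fun s : ℝ => u₁ s p.2) p.1
        - deriv (deriv (u₁ p.1)) p.2 = f p.1 p.2)
    (heq₂ : ∀ p ∈ Ioo x₀ x₁ ×ˢ Ioo (-1 : ℝ) 1,
      (p.2 + u₂ p.1 p.2) * deriv (fun s : ℝ => u₂ s p.2) p.1
        - deriv (deriv (u₂ p.1)) p.2 = f p.1 p.2)
    (hbc₁ : ∀ x ∈ Icc x₀ x₁, u₁ x 1 = 0 ∧ u₁ x (-1) = 0)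
    (hbc₂ : ∀ x ∈ Icc x₀ x₁, u₂ x 1 = 0 ∧ u₂ x (-1) = 0)
    (hlat0 : ∀ y ∈ Icc (0 : ℝ) 1, u₁ x₀ y = u₂ x₀ y)
    (hlat1 : ∀ y ∈ Icc (-1 : ℝ) 0, u₁ x₁ y = u₂ x₁ y)
    (hsgn0 : ∀ y ∈ Icc (0 : ℝ) 1, 0 ≤ y + u₁ x₁ y)
    (hsgn1 : ∀ y ∈ Icc (-1 : ℝ) 0, y + u₁ x₀ y ≤ 0)
    (hsmall₁ : ∀ p ∈ Ioo x₀ x₁ ×ˢ Ioo (-1 : ℝ) 1,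
      |deriv (fun s : ℝ => u₁ s p.2) p.1| ≤ 1 / 8)
    (hsmall₂ : ∀ p ∈ Ioo x₀ x₁ ×ˢ Ioo (-1 : ℝ) 1,
      |deriv (fun s : ℝ => u₂ s p.2) p.1| ≤ 1 / 8) :
    ∀ p ∈ closure (Ioo x₀ x₁ ×ˢ Ioo (-1 : ℝ) 1), u₁ p.1 p.2 = u₂ p.1 p.2 := by
  have hcl : closure (Ioo x₀ x₁ ×ˢ Ioo (-1 : ℝ) 1) = Icc x₀ x₁ ×ˢ Icc (-1 : ℝ) 1 := by
    rw [closure_prod_eq, closure_Ioo hx.ne, closure_Ioo (by norm_num)]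
  obtain ⟨v₁, hv₁, hv₁e, hd₁⟩ := partials_aux u₁ U hU hu₁
  obtain ⟨v₂, hv₂, hv₂e, hd₂⟩ := partials_aux u₂ U hU hu₂
  set a : ℝ × ℝ → ℝ := fun p => u₁ p.1 p.2 with ha
  set b : ℝ × ℝ → ℝ := fun p => u₂ p.1 p.2 with hb
  have ha1 : ContDiffOn ℝ 1 a U := hu₁.of_le (by norm_num)
  have hb1 : ContDiffOn ℝ 1 b U := hu₂.of_le (by norm_num)
  set F : ℝ × ℝ → ℝ := fun p => (p.2 + a p) * ((a p - b p) * (a p - b p)) with hF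
  set G : ℝ × ℝ → ℝ := fun p =>
    -(2 * ((a p - b p) * (v₁ p - v₂ p)) + p.2 * ((a p - b p) * (a p - b p))) with hG
  have hF1 : ContDiffOn ℝ 1 F U :=
    (contDiffOn_snd.add ha1).mul ((ha1.sub hb1).mul (ha1.sub hb1))
  have hG1 : ContDiffOn ℝ 1 G U :=
    ((contDiffOn_const.mul ((ha1.sub hb1).mul (hv₁.sub hv₂))).add
      (contDiffOn_snd.mul ((ha1.sub hb1).mul (ha1.sub hb1)))).neg
  have hdf : ∀ {g : ℝ × ℝ → ℝ}, ContDiffOn ℝ 1 g U → ∀ p ∈ U, HasFDerivAt g (fderiv ℝ g p) p :=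
    fun hg p hp =>
      ((hg.differentiableOn (by norm_num)).differentiableAt (hU.mem_nhds hp)).hasFDerivAt
  have hdivc : ContinuousOn (fun p => fderiv ℝ F p (1, 0) + fderiv ℝ G p (0, 1)) U :=
    ((hF1.continuousOn_fderiv_of_isOpen hU le_rfl).clm_apply continuousOn_const).add
      ((hG1.continuousOn_fderiv_of_isOpen hU le_rfl).clm_apply continuousOn_const)
  have hwc : ContinuousOn (fun p => a p - b p) U := ha1.continuousOn.sub hb1.continuousOn
  have hKU : Icc x₀ x₁ ×ˢ Icc (-1 : ℝ) 1 ⊆ U := hcl ▸ hΩU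
  have hin : ∀ p ∈ Ioo x₀ x₁ ×ˢ Ioo (-1 : ℝ) 1,
      (a p - b p) ^ 2 / 8 ≤ -(fderiv ℝ F p (1, 0) + fderiv ℝ G p (0, 1)) := by
    intro p hp
    have hpU : p ∈ U := hΩU (subset_closure hp)
    have e1 := heq₁ p hp
    have e2 := heq₂ p hp
    have s1 := hsmall₁ p hp
    have s2 := hsmall₂ p hp
    rw [(hd₁ p hpU).1] at s1 e1
    rw [(hd₂ p hpU).1] at s2 e2
    rw [(hd₁ p hpU).2] at e1
    rw [(hd₂ p hpU).2] at e2
    have da := hdf ha1 p hpU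
    have db := hdf hb1 p hpU
    have dv1 := hdf hv₁ p hpU
    have dv2 := hdf hv₂ p hpU
    have dy : HasFDerivAt (fun q : ℝ × ℝ => q.2) (ContinuousLinearMap.snd ℝ ℝ ℝ) p :=
      hasFDerivAt_snd
    have dF := ((dy.add da).mul ((da.sub db).mul (da.sub db))).fderiv
    have dG := ((((da.sub db).mul (dv1.sub dv2)).const_mul 2).add
      (dy.mul ((da.sub db).mul (da.sub db)))).neg.fderiv
    have eF : fderiv ℝ F p (1, 0) = fderiv ℝ a p (1, 0) * (a p - b p) ^ 2
        + 2 * (p.2 + a p) * (a p - b p) * (fderiv ℝ a p (1, 0) - fderiv ℝ b p (1, 0)) := by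
      refine (DFunLike.congr_fun dF (1, 0)).trans ?_
      simp
      ring
    have eG : fderiv ℝ G p (0, 1) = -(2 * (v₁ p - v₂ p) ^ 2
        + 2 * (a p - b p) * (fderiv ℝ v₁ p (0, 1) - fderiv ℝ v₂ p (0, 1))
        + (a p - b p) ^ 2 + 2 * p.2 * (a p - b p) * (v₁ p - v₂ p)) := by
      refine (DFunLike.congr_fun dG (0, 1)).trans ?_
      simp [← hv₁e p hpU, ← hv₂e p hpU]
      ring
    rw [eF, eG]
    have hy : p.2 ^ 2 ≤ 1 := by
      have := hp.2.1; have := hp.2.2; nlinarith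
    change (p.2 + a p) * _ - _ = _ at e1
    change (p.2 + b p) * _ - _ = _ at e2
    generalize fderiv ℝ a p (1, 0) = ax at *
    generalize fderiv ℝ b p (1, 0) = bx at *
    generalize fderiv ℝ v₁ p (0, 1) = ayy at *
    generalize fderiv ℝ v₂ p (0, 1) = byy at *
    generalize v₁ p - v₂ p = wy at *
    have key : ayy - byy = (p.2 + a p) * (ax - bx) + (a p - b p) * bx := by
      linear_combination e2 - e1
    rw [key]
    generalize a p - b p = w at *
    rw [abs_le] at s1 s2
    have hw := sq_nonneg w
    have h1 := mul_nonneg hw (sub_nonneg.2 s1.2)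
    have h2 := mul_nonneg hw (sub_nonneg.2 s2.1)
    have h3 := mul_nonneg hw (sub_nonneg.2 hy)
    have h4 := sq_nonneg (wy + p.2 * w / 2)
    nlinarith
  have hinK : ∀ p ∈ Icc x₀ x₁ ×ˢ Icc (-1 : ℝ) 1,
      (a p - b p) ^ 2 / 8 ≤ -(fderiv ℝ F p (1, 0) + fderiv ℝ G p (0, 1)) := by
    intro p hp
    rw [← hcl] at hp
    exact ContinuousWithinAt.closure_le hp
      ((((hwc p (hΩU hp)).pow 2).div_const 8).mono (subset_closure.trans hΩU))
      ((hdivc p (hΩU hp)).neg.mono (subset_closure.trans hΩU)) hin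
  have hKe : Icc ((x₀, -1) : ℝ × ℝ) (x₁, 1) = Icc x₀ x₁ ×ˢ Icc (-1 : ℝ) 1 := by
    rw [Icc_prod_eq]
  have hKc : IsCompact (Icc x₀ x₁ ×ˢ Icc (-1 : ℝ) 1) := isCompact_Icc.prod isCompact_Icc
  have hint : MeasureTheory.IntegrableOn
      (fun p => fderiv ℝ F p (1, 0) + fderiv ℝ G p (0, 1)) (Icc x₀ x₁ ×ˢ Icc (-1 : ℝ) 1) :=
    (hdivc.mono hKU).integrableOn_compact hKc
  have hdiv := MeasureTheory.integral_divergence_prod_Icc_of_hasFDerivAt_of_le F G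
    (fderiv ℝ F) (fderiv ℝ G) (x₀, -1) (x₁, 1) ⟨hx.le, by norm_num⟩
    (by rw [hKe]; exact hF1.continuousOn.mono hKU) (by rw [hKe]; exact hG1.continuousOn.mono hKU)
    (fun p hp => hdf hF1 p (hΩU (subset_closure hp)))
    (fun p hp => hdf hG1 p (hΩU (subset_closure hp)))
    (by rw [hKe]; exact hint)
  rw [hKe] at hdiv
  have hz1 : ∫ x in x₀..x₁, G (x, 1) = 0 := by
    rw [intervalIntegral.integral_congr (g := fun _ => (0 : ℝ))]
    · simp
    · intro x hxx
      rw [uIcc_of_le hx.le] at hxx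
      simp [hG, ha, hb, (hbc₁ x hxx).1, (hbc₂ x hxx).1]
  have hz2 : ∫ x in x₀..x₁, G (x, -1) = 0 := by
    rw [intervalIntegral.integral_congr (g := fun _ => (0 : ℝ))]
    · simp
    · intro x hxx
      rw [uIcc_of_le hx.le] at hxx
      simp [hG, ha, hb, (hbc₁ x hxx).2, (hbc₂ x hxx).2]
  have hz3 : 0 ≤ ∫ y in (-1 : ℝ)..1, F (x₁, y) := by
    refine intervalIntegral.integral_nonneg (by norm_num) fun y hy => ?_
    rcases le_total y 0 with h | h
    · simp [hF, ha, hb, hlat1 y ⟨hy.1, h⟩]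
    · exact mul_nonneg (hsgn0 y ⟨h, hy.2⟩) (mul_self_nonneg _)
  have hz4 : ∫ y in (-1 : ℝ)..1, F (x₀, y) ≤ 0 := by
    rw [← neg_nonneg, ← intervalIntegral.integral_neg]
    refine intervalIntegral.integral_nonneg (by norm_num) fun y hy => ?_
    rw [neg_nonneg]
    rcases le_total y 0 with h | h
    · exact mul_nonpos_of_nonpos_of_nonneg (hsgn1 y ⟨hy.1, h⟩) (mul_self_nonneg _)
    · simp [hF, ha, hb, hlat0 y ⟨h, hy.2⟩]
  simp only [hz1, hz2] at hdiv
  have hmeas : MeasurableSet (Icc x₀ x₁ ×ˢ Icc (-1 : ℝ) 1) := hKc.measurableSet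
  have hnn : ∀ p ∈ Icc x₀ x₁ ×ˢ Icc (-1 : ℝ) 1,
      0 ≤ -(fderiv ℝ F p (1, 0) + fderiv ℝ G p (0, 1)) := fun p hp =>
    le_trans (by positivity) (hinK p hp)
  have hI0 : ∫ p in Icc x₀ x₁ ×ˢ Icc (-1 : ℝ) 1,
      -(fderiv ℝ F p (1, 0) + fderiv ℝ G p (0, 1)) = 0 := by
    refine le_antisymm ?_ (MeasureTheory.setIntegral_nonneg hmeas hnn)
    rw [MeasureTheory.integral_neg, hdiv]
    linarith
  rw [MeasureTheory.setIntegral_eq_zero_iff_of_nonneg_ae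
    ((MeasureTheory.ae_restrict_iff' hmeas).2 (Filter.Eventually.of_forall hnn)) hint.neg] at hI0
  have hEq := MeasureTheory.Measure.eqOn_of_ae_eq hI0 (hdivc.mono hKU).neg continuousOn_const
    (by rw [interior_prod_eq, interior_Icc, interior_Icc, hcl])
  intro p hp
  rw [hcl] at hp
  have h1 := hinK p hp
  have h2 := hEq hp
  simp only [Pi.zero_apply] at h2
  rw [h2] at h1
  have h3 : (a p - b p) ^ 2 = 0 := le_antisymm (by linarith) (sq_nonneg _)
  exact sub_eq_zero.1 (pow_eq_zero_iff (by norm_num) |>.1 h3)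
end

section
/- Let x₀ < x₁ be real numbers, Ω := (x₀,x₁) × (−1,1), Ω⁺ := (x₀,x₁) × (0,1) and Ω⁻ := (x₀,x₁) × (−1,0). Let f be continuously differentiable on an open neighborhood of the closure of Ω, let δ₀ : [0,1] → ℝ and δ₁ : [−1,0] → ℝ be twice continuously differentiable, and let w be twice continuously differentiable on an open neighborhood of the closure of Ω satisfying: y·∂ₓw − ∂²_{yy}w = ∂ₓf at every point of Ω; y·w(x₀,y) = f(x₀,y) + δ₀''(y) for every y ∈ (0,1); and y·w(x₁,y) = f(x₁,y) + δ₁''(y) for every y ∈ (−1,0). Define ũ(x,y) := δ₀(y) + ∫_{x₀}^{x} w(s,y) ds for (x,y) with y ∈ (0,1), and ũ(x,y) := δ₁(y) − ∫_{x}^{x₁} w(s,y) ds for (x,y) with y ∈ (−1,0). Then y·∂ₓũ − ∂²_{yy}ũ = f at every point of Ω⁺ ∪ Ω⁻, and ũ(x₀,y) = δ₀(y) for y ∈ (0,1) and ũ(x₁,y) = δ₁(y) for y ∈ (−1,0). -/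
open Set MeasureTheory

/-- `ũ(x,y) = δ₀(y) + ∫_{x₀}^{x} w(s,y) ds`, the candidate solution on the upper half
`Ω⁺ = (x₀,x₁) × (0,1)`. -/
noncomputable def uPlus (δ₀ : ℝ → ℝ) (w : ℝ → ℝ → ℝ) (x₀ : ℝ) (x y : ℝ) : ℝ :=
  δ₀ y + ∫ s in x₀..x, w s y

/-- `ũ(x,y) = δ₁(y) - ∫_{x}^{x₁} w(s,y) ds`, the candidate solution on the lower half
`Ω⁻ = (x₀,x₁) × (-1,0)`. -/
noncomputable def uMinus (δ₁ : ℝ → ℝ) (w : ℝ → ℝ → ℝ) (x₁ : ℝ) (x y : ℝ) : ℝ :=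
  δ₁ y - ∫ s in x..x₁, w s y

lemma aux_partial_y {g : ℝ × ℝ → ℝ} {U : Set (ℝ × ℝ)} (hU : IsOpen U)
    (hg : ContDiffOn ℝ 1 g U) {s y : ℝ} (h : (s, y) ∈ U) :
    HasDerivAt (fun t => g (s, t)) (fderiv ℝ g (s, y) (0, 1)) y := by
  have h1 : HasFDerivAt g (fderiv ℝ g (s, y)) (s, y) :=
    ((hg.contDiffAt (hU.mem_nhds h)).differentiableAt (by norm_num)).hasFDerivAt
  have h2 : HasDerivAt (fun t : ℝ => (s, t)) ((0 : ℝ), (1 : ℝ)) y :=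
    (hasDerivAt_const y s).prodMk (hasDerivAt_id y)
  exact h1.comp_hasDerivAt y h2

lemma aux_partial_x {g : ℝ × ℝ → ℝ} {U : Set (ℝ × ℝ)} (hU : IsOpen U)
    (hg : ContDiffOn ℝ 1 g U) {s y : ℝ} (h : (s, y) ∈ U) :
    HasDerivAt (fun t => g (t, y)) (fderiv ℝ g (s, y) (1, 0)) s := by
  have h1 : HasFDerivAt g (fderiv ℝ g (s, y)) (s, y) :=
    ((hg.contDiffAt (hU.mem_nhds h)).differentiableAt (by norm_num)).hasFDerivAt
  have h2 : HasDerivAt (fun t : ℝ => (t, y)) ((1 : ℝ), (0 : ℝ)) s :=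
    (hasDerivAt_id s).prodMk (hasDerivAt_const s y)
  exact h1.comp_hasDerivAt s h2

lemma aux_cont_slice {g : ℝ × ℝ → ℝ} {U : Set (ℝ × ℝ)} (hg : ContinuousOn g U)
    {a b y : ℝ} (h : ∀ s ∈ Icc a b, (s, y) ∈ U) :
    ContinuousOn (fun s => g (s, y)) (Icc a b) :=
  hg.comp (by fun_prop) h

lemma aux_leibniz {g : ℝ × ℝ → ℝ} {U : Set (ℝ × ℝ)} (hU : IsOpen U)
    (hg : ContDiffOn ℝ 1 g U) {a b y : ℝ} (hab : a ≤ b)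
    (h : ∀ s ∈ Icc a b, ∀ t ∈ Icc (-1 : ℝ) 1, (s, t) ∈ U) (hy : y ∈ Ioo (-1 : ℝ) 1) :
    HasDerivAt (fun t => ∫ s in a..b, g (s, t))
      (∫ s in a..b, fderiv ℝ g (s, y) (0, 1)) y := by
  have hcg : ContinuousOn g U := hg.continuousOn
  have hcd : ContinuousOn (fun p => fderiv ℝ g p (0, 1)) U :=
    (hg.continuousOn_fderiv_of_isOpen hU (by norm_num)).clm_apply continuousOn_const
  have hsub : Icc a b ×ˢ Icc (-1 : ℝ) 1 ⊆ U := fun p hp => h p.1 hp.1 p.2 hp.2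
  obtain ⟨C, hC⟩ := (isCompact_Icc.prod isCompact_Icc).exists_bound_of_continuousOn
    (hcd.mono hsub)
  have hI : uIoc a b ⊆ Icc a b := by
    rw [uIoc_of_le hab]; exact Ioc_subset_Icc_self
  have key : ∀ {k : ℝ × ℝ → ℝ}, ContinuousOn k U → ∀ t ∈ Icc (-1 : ℝ) 1,
      IntervalIntegrable (fun s => k (s, t)) volume a b := fun hk t ht =>
    ContinuousOn.intervalIntegrable (by
      rw [uIcc_of_le hab]; exact aux_cont_slice hk fun s hs => h s hs t ht)
  have hy' : y ∈ Icc (-1 : ℝ) 1 := Ioo_subset_Icc_self hy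
  refine (intervalIntegral.hasDerivAt_integral_of_dominated_loc_of_deriv_le
    (F := fun t s => g (s, t)) (F' := fun t s => fderiv ℝ g (s, t) (0, 1))
    (s := Icc (-1) 1) (bound := fun _ => C) (Icc_mem_nhds hy.1 hy.2) ?_
    (key hcg y hy') ?_ ?_ intervalIntegrable_const ?_).2
  · filter_upwards [Icc_mem_nhds hy.1 hy.2] with t ht
    exact (intervalIntegrable_iff.1 (key hcg t ht)).aestronglyMeasurable
  · exact (intervalIntegrable_iff.1 (key hcd y hy')).aestronglyMeasurable
  · exact Filter.Eventually.of_forall fun s hs t ht => hC (s, t) ⟨hI hs, ht⟩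
  · exact Filter.Eventually.of_forall fun s hs t ht => aux_partial_y hU hg (h s (hI hs) t ht)

/-- Second `y` derivative of the integral, evaluated via the differentiated equation. -/
lemma aux_main {f w : ℝ → ℝ → ℝ} {x₀ x₁ a b y : ℝ}
    {Uf Uw : Set (ℝ × ℝ)} (hUf : IsOpen Uf) (hUw : IsOpen Uw)
    (hΩUf : Icc x₀ x₁ ×ˢ Icc (-1 : ℝ) 1 ⊆ Uf)
    (hΩUw : Icc x₀ x₁ ×ˢ Icc (-1 : ℝ) 1 ⊆ Uw)
    (hf : ContDiffOn ℝ 1 (fun p : ℝ × ℝ => f p.1 p.2) Uf)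
    (hw : ContDiffOn ℝ 2 (fun p : ℝ × ℝ => w p.1 p.2) Uw)
    (hweq : ∀ p ∈ Ioo x₀ x₁ ×ˢ Ioo (-1 : ℝ) 1,
      p.2 * deriv (fun s : ℝ => w s p.2) p.1 - deriv (deriv (w p.1)) p.2
        = deriv (fun s : ℝ => f s p.2) p.1)
    (ha : x₀ ≤ a) (hab : a ≤ b) (hb : b ≤ x₁) (hy : y ∈ Ioo (-1 : ℝ) 1) :
    ∃ G : ℝ → ℝ, (∀ t ∈ Ioo (-1 : ℝ) 1, HasDerivAt (fun t => ∫ s in a..b, w s t) (G t) t) ∧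
      HasDerivAt G ((y * w b y - f b y) - (y * w a y - f a y)) y := by
  set g : ℝ × ℝ → ℝ := fun p => w p.1 p.2 with hgdef
  set gy : ℝ × ℝ → ℝ := fun p => fderiv ℝ g p (0, 1) with hgydef
  have hg1 : ContDiffOn ℝ 1 g Uw := hw.of_le (by norm_num)
  have hgy1 : ContDiffOn ℝ 1 gy Uw :=
    (hw.fderiv_of_isOpen hUw (by norm_num)).clm_apply contDiffOn_const
  have hsub : ∀ s ∈ Icc a b, s ∈ Icc x₀ x₁ := fun s hs => ⟨ha.trans hs.1, hs.2.trans hb⟩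
  have hmw : ∀ s ∈ Icc a b, ∀ t ∈ Icc (-1 : ℝ) 1, (s, t) ∈ Uw :=
    fun s hs t ht => hΩUw ⟨hsub s hs, ht⟩
  have hmf : ∀ s ∈ Icc a b, ∀ t ∈ Icc (-1 : ℝ) 1, (s, t) ∈ Uf :=
    fun s hs t ht => hΩUf ⟨hsub s hs, ht⟩
  have hy' : y ∈ Icc (-1 : ℝ) 1 := Ioo_subset_Icc_self hy
  refine ⟨fun t => ∫ s in a..b, gy (s, t), fun t ht => aux_leibniz hUw hg1 hab hmw ht, ?_⟩
  have h2 := aux_leibniz hUw hgy1 hab hmw hy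
  convert h2 using 1
  have hcd : ContinuousOn (fun p => fderiv ℝ gy p (0, 1)) Uw :=
    (hgy1.continuousOn_fderiv_of_isOpen hUw (by norm_num)).clm_apply continuousOn_const
  symm
  refine intervalIntegral.integral_eq_sub_of_hasDerivAt_of_le
    (f := fun s => y * w s y - f s y) hab ?_ ?_ ?_
  · exact (continuousOn_const.mul
      (aux_cont_slice hg1.continuousOn fun s hs => hmw s hs y hy')).sub
      (aux_cont_slice hf.continuousOn fun s hs => hmf s hs y hy')
  · intro s hs
    have hs' := Ioo_subset_Icc_self hs
    have hwx := aux_partial_x hUw hg1 (hmw s hs' y hy')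
    have hfx := aux_partial_x hUf hf (hmf s hs' y hy')
    have hyy := aux_partial_y hUw hgy1 (hmw s hs' y hy')
    have e : deriv (deriv (w s)) y = fderiv ℝ gy (s, y) (0, 1) := by
      rw [← hyy.deriv]
      apply Filter.EventuallyEq.deriv_eq
      filter_upwards [Icc_mem_nhds hy.1 hy.2] with t ht
      exact (aux_partial_y hUw hg1 (hmw s hs' t ht)).deriv
    have eq := hweq (s, y) ⟨⟨ha.trans_lt hs.1, hs.2.trans_le hb⟩, hy⟩
    have e1 := hwx.deriv
    have e2 := hfx.deriv
    simp only [hgdef] at e1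
    simp only [e, e1, e2] at eq
    have hfin := (hwx.const_mul y).fun_sub hfx
    rw [← eq, sub_sub_cancel] at hfin
    exact hfin
  · apply ContinuousOn.intervalIntegrable
    rw [uIcc_of_le hab]
    exact aux_cont_slice hcd fun s hs => hmw s hs y hy'

lemma aux_delta {δ : ℝ → ℝ} {a b y : ℝ} (hd : ContDiffOn ℝ 2 δ (Icc a b)) (hy : y ∈ Ioo a b) :
    (∀ t ∈ Ioo a b, HasDerivAt δ (deriv δ t) t) ∧
      HasDerivAt (deriv δ) (deriv (deriv δ) y) y := by
  have hd' : ContDiffOn ℝ 2 δ (Ioo a b) := hd.mono Ioo_subset_Icc_self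
  refine ⟨fun t ht => ?_, ?_⟩
  · exact ((hd'.contDiffAt (isOpen_Ioo.mem_nhds ht)).differentiableAt (by norm_num)).hasDerivAt
  · have h1 : ContDiffOn ℝ 1 (deriv δ) (Ioo a b) :=
      hd'.deriv_of_isOpen isOpen_Ioo (by norm_num)
    exact ((h1.contDiffAt (isOpen_Ioo.mem_nhds hy)).differentiableAt (by norm_num)).hasDerivAt

/-- If `w` solves the differentiated problem `y ∂ₓ w - ∂_yy w = ∂ₓ f` with lateral data
`y w(xᵢ,y) = f(xᵢ,y) + δᵢ''(y)`, then `ũ` (defined by integrating `w` in `x` from the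
relevant lateral boundary) solves `y ∂ₓ ũ - ∂_yy ũ = f` on `Ω⁺ ∪ Ω⁻` and attains the
lateral data `δ₀` on `Σ₀` and `δ₁` on `Σ₁`. -/
theorem stmt14 (x₀ x₁ : ℝ) (hx : x₀ < x₁) (f w : ℝ → ℝ → ℝ) (δ₀ δ₁ : ℝ → ℝ)
    (Uf : Set (ℝ × ℝ)) (hUf : IsOpen Uf)
    (hΩUf : closure (Ioo x₀ x₁ ×ˢ Ioo (-1 : ℝ) 1) ⊆ Uf)
    (hf : ContDiffOn ℝ 1 (fun p : ℝ × ℝ => f p.1 p.2) Uf)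
    (hd₀ : ContDiffOn ℝ 2 δ₀ (Icc (0 : ℝ) 1))
    (hd₁ : ContDiffOn ℝ 2 δ₁ (Icc (-1 : ℝ) 0))
    (Uw : Set (ℝ × ℝ)) (hUw : IsOpen Uw)
    (hΩUw : closure (Ioo x₀ x₁ ×ˢ Ioo (-1 : ℝ) 1) ⊆ Uw)
    (hw : ContDiffOn ℝ 2 (fun p : ℝ × ℝ => w p.1 p.2) Uw)
    (hweq : ∀ p ∈ Ioo x₀ x₁ ×ˢ Ioo (-1 : ℝ) 1,
      p.2 * deriv (fun s : ℝ => w s p.2) p.1 - deriv (deriv (w p.1)) p.2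
        = deriv (fun s : ℝ => f s p.2) p.1)
    (hwbc0 : ∀ y ∈ Ioo (0 : ℝ) 1, y * w x₀ y = f x₀ y + deriv (deriv δ₀) y)
    (hwbc1 : ∀ y ∈ Ioo (-1 : ℝ) 0, y * w x₁ y = f x₁ y + deriv (deriv δ₁) y) :
    (∀ x ∈ Ioo x₀ x₁, ∀ y ∈ Ioo (0 : ℝ) 1,
      y * deriv (fun s : ℝ => uPlus δ₀ w x₀ s y) x
        - deriv (deriv (uPlus δ₀ w x₀ x)) y = f x y) ∧
    (∀ x ∈ Ioo x₀ x₁, ∀ y ∈ Ioo (-1 : ℝ) 0,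
      y * deriv (fun s : ℝ => uMinus δ₁ w x₁ s y) x
        - deriv (deriv (uMinus δ₁ w x₁ x)) y = f x y) ∧
    (∀ y ∈ Ioo (0 : ℝ) 1, uPlus δ₀ w x₀ x₀ y = δ₀ y) ∧
    (∀ y ∈ Ioo (-1 : ℝ) 0, uMinus δ₁ w x₁ x₁ y = δ₁ y) := by
  have hcl : closure (Ioo x₀ x₁ ×ˢ Ioo (-1 : ℝ) 1) = Icc x₀ x₁ ×ˢ Icc (-1 : ℝ) 1 := by
    rw [closure_prod_eq, closure_Ioo hx.ne, closure_Ioo (by norm_num)]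
  rw [hcl] at hΩUf hΩUw
  have hcw : ∀ y ∈ Icc (-1 : ℝ) 1, ContinuousOn (fun s => w s y) (Icc x₀ x₁) := fun y hy =>
    aux_cont_slice (g := fun p : ℝ × ℝ => w p.1 p.2) hw.continuousOn
      fun s hs => hΩUw ⟨hs, hy⟩
  have hca : ∀ y ∈ Icc (-1 : ℝ) 1, ∀ x ∈ Ioo x₀ x₁, ContinuousAt (fun s => w s y) x :=
    fun y hy x hx => (hcw y hy).continuousAt (Icc_mem_nhds hx.1 hx.2)
  have hint : ∀ y ∈ Icc (-1 : ℝ) 1, ∀ a b, x₀ ≤ a → a ≤ b → b ≤ x₁ →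
      IntervalIntegrable (fun s => w s y) volume a b := fun y hy a b ha hab hb =>
    ContinuousOn.intervalIntegrable (by
      rw [uIcc_of_le hab]; exact (hcw y hy).mono (Icc_subset_Icc ha hb))
  refine ⟨?_, ?_, ?_, ?_⟩
  · intro x hxx y hy
    have hy1 : y ∈ Ioo (-1 : ℝ) 1 := ⟨by linarith [hy.1], hy.2⟩
    have hy2 := Ioo_subset_Icc_self hy1
    obtain ⟨G, hG, hG'⟩ := aux_main hUf hUw hΩUf hΩUw hf hw hweq le_rfl hxx.1.le hxx.2.le hy1
    obtain ⟨hδ, hδ'⟩ := aux_delta hd₀ hy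
    have ex : deriv (fun s : ℝ => uPlus δ₀ w x₀ s y) x = w x y :=
      ((intervalIntegral.integral_hasDerivAt_right
        (hint y hy2 x₀ x le_rfl hxx.1.le hxx.2.le)
        (ContinuousAt.stronglyMeasurableAtFilter isOpen_Ioo (hca y hy2) x hxx)
        (hca y hy2 x hxx)).const_add (δ₀ y)).deriv
    have ey : deriv (deriv (uPlus δ₀ w x₀ x)) y = deriv (fun t => deriv δ₀ t + G t) y := by
      apply Filter.EventuallyEq.deriv_eq
      filter_upwards [Ioo_mem_nhds hy.1 hy.2] with t ht
      exact ((hδ t ht).add (hG t ⟨by linarith [ht.1], ht.2⟩)).deriv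
    have ey2 := (hδ'.fun_add hG').deriv
    rw [ex, ey, ey2]
    linarith [hwbc0 y hy]
  · intro x hxx y hy
    have hy1 : y ∈ Ioo (-1 : ℝ) 1 := ⟨hy.1, by linarith [hy.2]⟩
    have hy2 := Ioo_subset_Icc_self hy1
    obtain ⟨G, hG, hG'⟩ := aux_main hUf hUw hΩUf hΩUw hf hw hweq hxx.1.le hxx.2.le le_rfl hy1
    obtain ⟨hδ, hδ'⟩ := aux_delta hd₁ hy
    have ex : deriv (fun s : ℝ => uMinus δ₁ w x₁ s y) x = - - w x y :=
      ((intervalIntegral.integral_hasDerivAt_left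
        (hint y hy2 x x₁ hxx.1.le hxx.2.le le_rfl)
        (ContinuousAt.stronglyMeasurableAtFilter isOpen_Ioo (hca y hy2) x hxx)
        (hca y hy2 x hxx)).const_sub (δ₁ y)).deriv
    have ey : deriv (deriv (uMinus δ₁ w x₁ x)) y = deriv (fun t => deriv δ₁ t - G t) y := by
      apply Filter.EventuallyEq.deriv_eq
      filter_upwards [Ioo_mem_nhds hy.1 hy.2] with t ht
      exact ((hδ t ht).sub (hG t ⟨ht.1, by linarith [ht.2]⟩)).deriv
    have ey2 := (hδ'.fun_sub hG').deriv
    rw [ex, ey, ey2]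
    linarith [hwbc1 y hy]
  · intro y _
    simp [uPlus]
  · intro y _
    simp [uMinus]
end

section
/- Let x₀ < x₁ be real numbers, Ω := (x₀,x₁) × (−1,1). Let f be continuously differentiable on an open neighborhood of the closure of Ω, let δ₀ : [0,1] → ℝ and δ₁ : [−1,0] → ℝ be twice continuously differentiable, and let w be twice continuously differentiable on an open neighborhood of the closure of Ω satisfying: y·∂ₓw − ∂²_{yy}w = ∂ₓf at every point of Ω; y·w(x₀,y) = f(x₀,y) + δ₀''(y) for every y ∈ (0,1); and y·w(x₁,y) = f(x₁,y) + δ₁''(y) for every y ∈ (−1,0). Define ũ(x,y) := δ₀(y) + ∫_{x₀}^{x} w(s,y) ds for y ∈ (0,1) and ũ(x,y) := δ₁(y) − ∫_{x}^{x₁} w(s,y) ds for y ∈ (−1,0). Assume the two orthogonality conditions: δ₀(0) − δ₁(0) + ∫_{x₀}^{x₁} w(s,0) ds = 0 and δ₀'(0) − δ₁'(0) + ∫_{x₀}^{x₁} ∂_yw(s,0) ds = 0. Then ũ extends to a function u on Ω which is continuously differentiable on Ω, twice continuously differentiable with respect to y on Ω, coincides with ũ on Ω ∩ {y ≠ 0},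 and satisfies y·∂ₓu − ∂²_{yy}u = f at every point of Ω, including on the line {y = 0}. -/
open Set MeasureTheory

open Filter Topology

lemma aux_py {h : ℝ → ℝ → ℝ} {U : Set (ℝ × ℝ)} (hU : IsOpen U)
    (hh : ContDiffOn ℝ 1 (fun p : ℝ × ℝ => h p.1 p.2) U) {p : ℝ × ℝ} (hp : p ∈ U) :
    HasDerivAt (h p.1) (fderiv ℝ (fun p : ℝ × ℝ => h p.1 p.2) p (0, 1)) p.2 := by
  have h1 : HasFDerivAt (fun p : ℝ × ℝ => h p.1 p.2) (fderiv ℝ (fun p : ℝ × ℝ => h p.1 p.2) p)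
      (p.1, p.2) :=
    (((hh.differentiableOn one_ne_zero) p hp).differentiableAt (hU.mem_nhds hp)).hasFDerivAt
  exact h1.comp_hasDerivAt (x := p.2) (f := fun y : ℝ => (p.1, y))
    ((hasDerivAt_const p.2 p.1).prodMk (hasDerivAt_id p.2))

lemma aux_px {h : ℝ → ℝ → ℝ} {U : Set (ℝ × ℝ)} (hU : IsOpen U)
    (hh : ContDiffOn ℝ 1 (fun p : ℝ × ℝ => h p.1 p.2) U) {p : ℝ × ℝ} (hp : p ∈ U) :
    HasDerivAt (fun s => h s p.2) (fderiv ℝ (fun p : ℝ × ℝ => h p.1 p.2) p (1, 0)) p.1 := by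
  have h1 : HasFDerivAt (fun p : ℝ × ℝ => h p.1 p.2) (fderiv ℝ (fun p : ℝ × ℝ => h p.1 p.2) p)
      (p.1, p.2) :=
    (((hh.differentiableOn one_ne_zero) p hp).differentiableAt (hU.mem_nhds hp)).hasFDerivAt
  exact h1.comp_hasDerivAt (x := p.1) (f := fun y : ℝ => (y, p.2))
    ((hasDerivAt_id p.1).prodMk (hasDerivAt_const p.1 p.2))

lemma aux_cy {h : ℝ → ℝ → ℝ} {U : Set (ℝ × ℝ)} (hU : IsOpen U)
    (hh : ContDiffOn ℝ 1 (fun p : ℝ × ℝ => h p.1 p.2) U) :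
    ContinuousOn (fun p : ℝ × ℝ => deriv (h p.1) p.2) U := by
  have := (hh.continuousOn_fderiv_of_isOpen hU le_rfl).clm_apply
    (continuousOn_const (c := ((0 : ℝ), (1 : ℝ))))
  exact this.congr fun p hp => (aux_py hU hh hp).deriv

lemma aux_cx {h : ℝ → ℝ → ℝ} {U : Set (ℝ × ℝ)} (hU : IsOpen U)
    (hh : ContDiffOn ℝ 1 (fun p : ℝ × ℝ => h p.1 p.2) U) :
    ContinuousOn (fun p : ℝ × ℝ => deriv (fun s => h s p.2) p.1) U := by
  have := (hh.continuousOn_fderiv_of_isOpen hU le_rfl).clm_apply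
    (continuousOn_const (c := ((1 : ℝ), (0 : ℝ))))
  exact this.congr fun p hp => (aux_px hU hh hp).deriv

lemma aux_c2 {h : ℝ → ℝ → ℝ} {U : Set (ℝ × ℝ)} (hU : IsOpen U)
    (hh : ContDiffOn ℝ 2 (fun p : ℝ × ℝ => h p.1 p.2) U) :
    ContDiffOn ℝ 1 (fun p : ℝ × ℝ => deriv (h p.1) p.2) U := by
  have := (hh.fderiv_of_isOpen (m := 1) hU (by norm_num)).clm_apply
    (contDiffOn_const (c := ((0 : ℝ), (1 : ℝ))))
  exact this.congr fun p hp => (aux_py hU (hh.of_le (by norm_num)) hp).deriv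

/-- slices are continuous -/
lemma aux_slice {h : ℝ → ℝ → ℝ} {a b : ℝ}
    (hh : ContinuousOn (fun p : ℝ × ℝ => h p.1 p.2) (Icc a b ×ˢ Icc (-1 : ℝ) 1)) {y : ℝ}
    (hy : y ∈ Icc (-1 : ℝ) 1) : ContinuousOn (fun s => h s y) (Icc a b) :=
  hh.comp (f := fun s : ℝ => (s, y)) (by fun_prop) (fun _ hs => ⟨hs, hy⟩)

lemma aux_cint {h : ℝ → ℝ → ℝ} {a b : ℝ} (hab : a ≤ b)
    (hh : ContinuousOn (fun p : ℝ × ℝ => h p.1 p.2) (Icc a b ×ˢ Icc (-1 : ℝ) 1)) :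
    ContinuousOn (fun p : ℝ × ℝ => ∫ s in a..p.1, h s p.2) (Icc a b ×ˢ Icc (-1 : ℝ) 1) := by
  have h11 : (-1 : ℝ) ≤ 1 := by norm_num
  have hc : Continuous (fun q : (ℝ × ℝ) × ℝ =>
      h (projIcc a b hab q.2) (projIcc (-1 : ℝ) 1 h11 q.1.2)) := by
    refine hh.comp_continuous (f := fun q : (ℝ × ℝ) × ℝ =>
      (((projIcc a b hab q.2 : Icc a b) : ℝ), ((projIcc (-1 : ℝ) 1 h11 q.1.2 : Icc (-1 : ℝ) 1) : ℝ)))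
      ?_ ?_
    · exact (continuous_subtype_val.comp (continuous_projIcc.comp continuous_snd)).prodMk
        (continuous_subtype_val.comp (continuous_projIcc.comp (continuous_snd.comp continuous_fst)))
    · intro q
      exact ⟨Subtype.coe_prop _, Subtype.coe_prop _⟩
  have hi := intervalIntegral.continuous_parametric_intervalIntegral_of_continuous (μ := volume)
    (f := fun (p : ℝ × ℝ) (s : ℝ) => h (projIcc a b hab s) (projIcc (-1 : ℝ) 1 h11 p.2))
    (a₀ := a) hc (s := fun p => p.1) continuous_fst
  refine hi.continuousOn.congr ?_
  rintro ⟨x, y⟩ ⟨hx, hy⟩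
  refine intervalIntegral.integral_congr ?_
  intro s hs
  rw [uIcc_of_le hx.1] at hs
  have hs' : s ∈ Icc a b := ⟨hs.1, hs.2.trans hx.2⟩
  simp only
  rw [projIcc_of_mem hab hs', projIcc_of_mem h11 hy]

lemma aux_dint {h : ℝ → ℝ → ℝ} {a b : ℝ} {U : Set (ℝ × ℝ)} (hU : IsOpen U)
    (hK : Icc a b ×ˢ Icc (-1 : ℝ) 1 ⊆ U)
    (hh : ContDiffOn ℝ 1 (fun p : ℝ × ℝ => h p.1 p.2) U) {x : ℝ} (hx : x ∈ Icc a b)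
    {y : ℝ} (hy : y ∈ Ioo (-1 : ℝ) 1) :
    HasDerivAt (fun y => ∫ s in a..x, h s y) (∫ s in a..x, deriv (h s) y) y := by
  have hc := hh.continuousOn.mono hK
  have hc' := (aux_cy hU hh).mono hK
  obtain ⟨C, hC⟩ := (isCompact_Icc.prod isCompact_Icc).exists_bound_of_continuousOn hc'
  have hsub : uIcc a x ⊆ Icc a b := by
    rw [uIcc_of_le hx.1]; exact Icc_subset_Icc_right hx.2
  have hsub' : uIoc a x ⊆ Icc a b := uIoc_subset_uIcc.trans hsub
  refine (intervalIntegral.hasDerivAt_integral_of_dominated_loc_of_deriv_le (μ := volume)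
    (F := fun y s => h s y) (F' := fun y s => deriv (h s) y) (bound := fun _ => C)
    (Ioo_mem_nhds hy.1 hy.2) ?_ ?_ ?_ ?_ ?_ ?_).2
  · filter_upwards [Ioo_mem_nhds hy.1 hy.2] with z hz
    exact ((aux_slice hc (Ioo_subset_Icc_self hz)).mono hsub').aestronglyMeasurable
      measurableSet_uIoc
  · exact ((aux_slice hc (Ioo_subset_Icc_self hy)).mono hsub).intervalIntegrable
  · exact ((aux_slice (h := fun s y => deriv (h s) y) hc'
      (Ioo_subset_Icc_self hy)).mono hsub').aestronglyMeasurable measurableSet_uIoc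
  · exact Eventually.of_forall fun t ht z hz => hC (t, z) ⟨hsub' ht, Ioo_subset_Icc_self hz⟩
  · simp
  · refine Eventually.of_forall fun t ht z hz => ?_
    have := aux_py hU hh (p := (t, z)) (hK ⟨hsub' ht, Ioo_subset_Icc_self hz⟩)
    exact this.differentiableAt.hasDerivAt

lemma aux_glue {p q p' q' : ℝ → ℝ}
    (hp : ∀ y ∈ Ico (0 : ℝ) 1, HasDerivWithinAt p (p' y) (Icc 0 1) y)
    (hq : ∀ y ∈ Ioc (-1 : ℝ) 0, HasDerivWithinAt q (q' y) (Icc (-1) 0) y)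
    (h0 : p 0 = q 0) (h0' : p' 0 = q' 0) {y : ℝ} (hy : y ∈ Ioo (-1 : ℝ) 1) :
    HasDerivAt (fun y => if 0 ≤ y then p y else q y) (if 0 ≤ y then p' y else q' y) y := by
  rcases lt_trichotomy y 0 with h | h | h
  · rw [if_neg (not_le.2 h)]
    refine ((hq y ⟨hy.1, h.le⟩).hasDerivAt (Icc_mem_nhds hy.1 h)).congr_of_eventuallyEq ?_
    filter_upwards [Iio_mem_nhds h] with z hz
    rw [if_neg (not_le.2 hz)]
  · subst h
    rw [if_pos le_rfl]
    have h1 : HasDerivWithinAt (fun y => if 0 ≤ y then p y else q y) (p' 0) (Icc 0 1) 0 :=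
      (hp 0 ⟨le_rfl, one_pos⟩).congr (fun z hz => if_pos hz.1) (if_pos le_rfl)
    have h2 : HasDerivWithinAt (fun y => if 0 ≤ y then p y else q y) (p' 0) (Icc (-1) 0) 0 := by
      rw [h0']
      refine (hq 0 ⟨by norm_num, le_rfl⟩).congr (fun z hz => ?_) ?_
      · rcases hz.2.lt_or_eq with h | h
        · exact if_neg (not_le.2 h)
        · subst h; simp [h0]
      · simp [h0]
    have h3 := h2.union h1
    rw [Icc_union_Icc_eq_Icc (by norm_num) (by norm_num)] at h3
    exact h3.hasDerivAt (Icc_mem_nhds (by norm_num) (by norm_num))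
  · rw [if_pos h.le]
    refine ((hp y ⟨h.le, hy.2⟩).hasDerivAt (Icc_mem_nhds h hy.2)).congr_of_eventuallyEq ?_
    filter_upwards [Ioi_mem_nhds h] with z hz
    rw [if_pos (le_of_lt hz)]

lemma aux_d2 {δ g : ℝ → ℝ} {a b : ℝ} (hab : a < b) (hd : ContDiffOn ℝ 2 δ (Icc a b))
    (hg : ContinuousOn g (Icc a b)) (h : ∀ y ∈ Ioo a b, deriv (deriv δ) y = g y)
    {y : ℝ} (hy : y ∈ Icc a b) :
    HasDerivWithinAt (derivWithin δ (Icc a b)) (g y) (Icc a b) y := by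
  have hu := uniqueDiffOn_Icc hab
  have h1 : ContDiffOn ℝ 1 (derivWithin δ (Icc a b)) (Icc a b) := hd.derivWithin hu (by norm_num)
  have h2 := h1.continuousOn_derivWithin hu le_rfl
  have heq : EqOn (derivWithin (derivWithin δ (Icc a b)) (Icc a b)) g (Ioo a b) := by
    intro z hz
    rw [← h z hz, derivWithin_of_mem_nhds (Icc_mem_nhds hz.1 hz.2)]
    refine EventuallyEq.deriv_eq ?_
    filter_upwards [Ioo_mem_nhds hz.1 hz.2] with t ht
    exact derivWithin_of_mem_nhds (Icc_mem_nhds ht.1 ht.2)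
  have heq' : EqOn (derivWithin (derivWithin δ (Icc a b)) (Icc a b)) g (Icc a b) :=
    heq.of_subset_closure h2 hg Ioo_subset_Icc_self (by rw [closure_Ioo hab.ne])
  rw [← heq' hy]
  exact (h1.differentiableOn one_ne_zero y hy).hasDerivWithinAt

/-- Under the two orthogonality conditions (vanishing of the jumps of `ũ` and `∂_y ũ`
across `{y = 0}`), the candidate `ũ` built from `w` extends to a solution `u` of
`y ∂ₓ u - ∂_yy u = f` on all of `Ω = (x₀,x₁) × (-1,1)`, including the line `{y = 0}`;
`u` is `C¹` on `Ω`, `C²` with respect to `y` on `Ω`, and coincides with `ũ` off `{y = 0}`. -/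
theorem stmt15 (x₀ x₁ : ℝ) (hx : x₀ < x₁) (f w : ℝ → ℝ → ℝ) (δ₀ δ₁ : ℝ → ℝ)
    (Uf : Set (ℝ × ℝ)) (hUf : IsOpen Uf)
    (hΩUf : closure (Ioo x₀ x₁ ×ˢ Ioo (-1 : ℝ) 1) ⊆ Uf)
    (hf : ContDiffOn ℝ 1 (fun p : ℝ × ℝ => f p.1 p.2) Uf)
    (hd₀ : ContDiffOn ℝ 2 δ₀ (Icc (0 : ℝ) 1))
    (hd₁ : ContDiffOn ℝ 2 δ₁ (Icc (-1 : ℝ) 0))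
    (Uw : Set (ℝ × ℝ)) (hUw : IsOpen Uw)
    (hΩUw : closure (Ioo x₀ x₁ ×ˢ Ioo (-1 : ℝ) 1) ⊆ Uw)
    (hw : ContDiffOn ℝ 2 (fun p : ℝ × ℝ => w p.1 p.2) Uw)
    (hweq : ∀ p ∈ Ioo x₀ x₁ ×ˢ Ioo (-1 : ℝ) 1,
      p.2 * deriv (fun s : ℝ => w s p.2) p.1 - deriv (deriv (w p.1)) p.2
        = deriv (fun s : ℝ => f s p.2) p.1)
    (hwbc0 : ∀ y ∈ Ioo (0 : ℝ) 1, y * w x₀ y = f x₀ y + deriv (deriv δ₀) y)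
    (hwbc1 : ∀ y ∈ Ioo (-1 : ℝ) 0, y * w x₁ y = f x₁ y + deriv (deriv δ₁) y)
    (horth0 : δ₀ 0 - δ₁ 0 + ∫ s in x₀..x₁, w s 0 = 0)
    (horth1 : derivWithin δ₀ (Icc (0 : ℝ) 1) 0 - derivWithin δ₁ (Icc (-1 : ℝ) 0) 0
        + ∫ s in x₀..x₁, deriv (w s) 0 = 0) :
    ∃ u : ℝ → ℝ → ℝ,
      ContDiffOn ℝ 1 (fun p : ℝ × ℝ => u p.1 p.2) (Ioo x₀ x₁ ×ˢ Ioo (-1 : ℝ) 1) ∧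
      (∀ x ∈ Ioo x₀ x₁, ContDiffOn ℝ 2 (u x) (Ioo (-1 : ℝ) 1)) ∧
      ContinuousOn (fun p : ℝ × ℝ => deriv (deriv (u p.1)) p.2)
        (Ioo x₀ x₁ ×ˢ Ioo (-1 : ℝ) 1) ∧
      (∀ x ∈ Ioo x₀ x₁, ∀ y ∈ Ioo (0 : ℝ) 1, u x y = uPlus δ₀ w x₀ x y) ∧
      (∀ x ∈ Ioo x₀ x₁, ∀ y ∈ Ioo (-1 : ℝ) 0, u x y = uMinus δ₁ w x₁ x y) ∧
      (∀ p ∈ Ioo x₀ x₁ ×ˢ Ioo (-1 : ℝ) 1,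
        p.2 * deriv (fun s : ℝ => u s p.2) p.1 - deriv (deriv (u p.1)) p.2 = f p.1 p.2) := by
  have hcl : closure (Ioo x₀ x₁ ×ˢ Ioo (-1 : ℝ) 1) = Icc x₀ x₁ ×ˢ Icc (-1 : ℝ) 1 := by
    rw [closure_prod_eq, closure_Ioo hx.ne, closure_Ioo (by norm_num)]
  rw [hcl] at hΩUf hΩUw
  have hw1 : ContDiffOn ℝ 1 (fun p : ℝ × ℝ => w p.1 p.2) Uw := hw.of_le (by norm_num)
  have hwc := hw.continuousOn.mono hΩUw
  have hfc := hf.continuousOn.mono hΩUf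
  have hwy := aux_c2 hUw hw
  have hx0 : x₀ ∈ Icc x₀ x₁ := ⟨le_rfl, hx.le⟩
  have hx1 : x₁ ∈ Icc x₀ x₁ := ⟨hx.le, le_rfl⟩
  -- the second y-derivative of the integral
  have hI2 : ∀ x ∈ Icc x₀ x₁, ∀ y ∈ Ioo (-1 : ℝ) 1,
      ∫ s in x₀..x, deriv (deriv (w s)) y
        = (y * w x y - f x y) - (y * w x₀ y - f x₀ y) := by
    intro x hxx y hy
    have hy' := Ioo_subset_Icc_self hy
    have hsub : uIcc x₀ x ⊆ Icc x₀ x₁ := by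
      rw [uIcc_of_le hxx.1]; exact Icc_subset_Icc_right hxx.2
    have e1 : ∫ s in x₀..x, deriv (deriv (w s)) y
        = ∫ s in x₀..x, (y * deriv (fun t => w t y) s - deriv (fun t => f t y) s) := by
      refine intervalIntegral.integral_congr_Ioo_of_le hxx.1 ?_
      intro s hs
      have := hweq (s, y) ⟨⟨hs.1, hs.2.trans_le hxx.2⟩, hy⟩
      simp only at this ⊢
      linarith
    rw [e1]
    refine intervalIntegral.integral_eq_sub_of_hasDerivAt
      (f := fun s => y * w s y - f s y) ?_ ?_
    · intro s hs
      have a1 := (aux_px hUw hw1 (p := (s, y)) (hΩUw ⟨hsub hs, hy'⟩)).differentiableAt.hasDerivAt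
      have a2 := (aux_px hUf hf (p := (s, y)) (hΩUf ⟨hsub hs, hy'⟩)).differentiableAt.hasDerivAt
      exact (a1.const_mul y).sub a2
    · refine ContinuousOn.intervalIntegrable ?_
      have c1 := aux_slice (h := fun s y => deriv (fun t => w t y) s)
        ((aux_cx hUw hw1).mono hΩUw) hy'
      have c2 := aux_slice (h := fun s y => deriv (fun t => f t y) s)
        ((aux_cx hUf hf).mono hΩUf) hy'
      exact ((continuousOn_const.mul c1).sub c2).mono hsub
  have hvert : ∀ {h : ℝ → ℝ → ℝ} (_ : ContinuousOn (fun p : ℝ × ℝ => h p.1 p.2)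
      (Icc x₀ x₁ ×ˢ Icc (-1 : ℝ) 1)) {x : ℝ} (_ : x ∈ Icc x₀ x₁),
      ContinuousOn (h x) (Icc (-1 : ℝ) 1) := by
    intro h hh x hxx
    exact hh.comp (f := fun y : ℝ => (x, y)) (by fun_prop) (fun _ hs => ⟨hxx, hs⟩)
  have hg : ∀ x ∈ Icc x₀ x₁, ContinuousOn (fun y => y * w x y - f x y) (Icc (-1 : ℝ) 1) :=
    fun x hxx => (continuousOn_id.mul (hvert hwc hxx)).sub (hvert hfc hxx)
  have hD0 : ∀ y ∈ Icc (0 : ℝ) 1, HasDerivWithinAt (derivWithin δ₀ (Icc 0 1))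
      (y * w x₀ y - f x₀ y) (Icc 0 1) y := fun y hy =>
    aux_d2 one_pos hd₀ ((hg x₀ hx0).mono (Icc_subset_Icc_left (by norm_num)))
      (fun y hy => by linarith [hwbc0 y hy]) hy
  have hD1 : ∀ y ∈ Icc (-1 : ℝ) 0, HasDerivWithinAt (derivWithin δ₁ (Icc (-1) 0))
      (y * w x₁ y - f x₁ y) (Icc (-1) 0) y := fun y hy =>
    aux_d2 (by norm_num) hd₁ ((hg x₁ hx1).mono (Icc_subset_Icc_right (by norm_num)))
      (fun y hy => by linarith [hwbc1 y hy]) hy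
  obtain ⟨d, hd⟩ : ∃ d : ℝ → ℝ, d = fun y =>
    if 0 ≤ y then δ₀ y else δ₁ y - ∫ s in x₀..x₁, w s y := ⟨_, rfl⟩
  obtain ⟨d', hd'⟩ : ∃ d' : ℝ → ℝ, d' = fun y =>
    if 0 ≤ y then derivWithin δ₀ (Icc 0 1) y
    else derivWithin δ₁ (Icc (-1) 0) y - ∫ s in x₀..x₁, deriv (w s) y := ⟨_, rfl⟩
  have hdd : ∀ y ∈ Ioo (-1 : ℝ) 1, HasDerivAt d (d' y) y := by
    intro y hy
    rw [hd, hd']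
    refine aux_glue (p := δ₀) (q := fun y => δ₁ y - ∫ s in x₀..x₁, w s y)
      (p' := derivWithin δ₀ (Icc 0 1))
      (q' := fun y => derivWithin δ₁ (Icc (-1) 0) y - ∫ s in x₀..x₁, deriv (w s) y)
      ?_ ?_ ?_ ?_ hy
    · intro z hz
      exact (hd₀.differentiableOn two_ne_zero z (Ico_subset_Icc_self hz)).hasDerivWithinAt
    · intro z hz
      exact (hd₁.differentiableOn two_ne_zero z (Ioc_subset_Icc_self hz)).hasDerivWithinAt.sub
        (aux_dint hUw hΩUw hw1 hx1 ⟨hz.1, hz.2.trans_lt one_pos⟩).hasDerivWithinAt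
    · linarith
    · linarith
  have hdd' : ∀ y ∈ Ioo (-1 : ℝ) 1, HasDerivAt d' (y * w x₀ y - f x₀ y) y := by
    intro y hy
    rw [hd']
    have := aux_glue (p := derivWithin δ₀ (Icc 0 1))
      (q := fun y => derivWithin δ₁ (Icc (-1) 0) y - ∫ s in x₀..x₁, deriv (w s) y)
      (p' := fun y => y * w x₀ y - f x₀ y) (q' := fun y => y * w x₀ y - f x₀ y)
      (fun z hz => hD0 z (Ico_subset_Icc_self hz)) ?_ (by linarith) rfl hy
    · simpa using this
    · intro z hz
      have hz' : z ∈ Ioo (-1 : ℝ) 1 := ⟨hz.1, hz.2.trans_lt one_pos⟩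
      have := (hD1 z (Ioc_subset_Icc_self hz)).sub
        (aux_dint (h := fun s y => deriv (w s) y) hUw hΩUw hwy hx1 hz').hasDerivWithinAt
      rw [hI2 x₁ hx1 z hz'] at this
      exact HasDerivWithinAt.congr_deriv this (by ring)
  -- derivatives of u
  have huy : ∀ x ∈ Icc x₀ x₁, ∀ y ∈ Ioo (-1 : ℝ) 1,
      HasDerivAt (fun y => d y + ∫ s in x₀..x, w s y)
        (d' y + ∫ s in x₀..x, deriv (w s) y) y := fun x hxx y hy =>
    (hdd y hy).add (aux_dint hUw hΩUw hw1 hxx hy)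
  have huyy : ∀ x ∈ Icc x₀ x₁, ∀ y ∈ Ioo (-1 : ℝ) 1,
      HasDerivAt (fun y => d' y + ∫ s in x₀..x, deriv (w s) y)
        (y * w x y - f x y) y := by
    intro x hxx y hy
    have := (hdd' y hy).add (aux_dint (h := fun s y => deriv (w s) y) hUw hΩUw hwy hxx hy)
    rw [hI2 x hxx y hy] at this
    exact HasDerivAt.congr_deriv this (by ring)
  have hux : ∀ x ∈ Ioo x₀ x₁, ∀ y ∈ Ioo (-1 : ℝ) 1,
      HasDerivAt (fun x => d y + ∫ s in x₀..x, w s y) (w x y) x := by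
    intro x hxx y hy
    have hs := aux_slice hwc (Ioo_subset_Icc_self hy)
    refine (intervalIntegral.integral_hasDerivAt_right ?_ ?_ ?_).const_add (d y)
    · refine (hs.mono ?_).intervalIntegrable
      rw [uIcc_of_le hxx.1.le]; exact Icc_subset_Icc_right hxx.2.le
    · exact (hs.mono Ioo_subset_Icc_self).stronglyMeasurableAtFilter isOpen_Ioo x hxx
    · exact hs.continuousAt (Icc_mem_nhds hxx.1 hxx.2)
  have hderiv : ∀ x ∈ Icc x₀ x₁, ∀ y ∈ Ioo (-1 : ℝ) 1,
      deriv (fun y => d y + ∫ s in x₀..x, w s y) =ᶠ[𝓝 y]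
        fun y => d' y + ∫ s in x₀..x, deriv (w s) y := by
    intro x hxx y hy
    filter_upwards [Ioo_mem_nhds hy.1 hy.2] with z hz
    exact (huy x hxx z hz).deriv
  have hderiv2 : ∀ x ∈ Icc x₀ x₁, ∀ y ∈ Ioo (-1 : ℝ) 1,
      deriv (deriv (fun y => d y + ∫ s in x₀..x, w s y)) y = y * w x y - f x y := by
    intro x hxx y hy
    rw [(hderiv x hxx y hy).deriv_eq]
    exact (huyy x hxx y hy).deriv
  have hΩo : IsOpen (Ioo x₀ x₁ ×ˢ Ioo (-1 : ℝ) 1) := isOpen_Ioo.prod isOpen_Ioo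
  have hΩK : Ioo x₀ x₁ ×ˢ Ioo (-1 : ℝ) 1 ⊆ Icc x₀ x₁ ×ˢ Icc (-1 : ℝ) 1 :=
    prod_mono Ioo_subset_Icc_self Ioo_subset_Icc_self
  refine ⟨fun x y => d y + ∫ s in x₀..x, w s y, ?_, ?_, ?_, ?_, ?_, ?_⟩
  · have hcw := hwc.mono hΩK
    have hcy : ContinuousOn (fun p : ℝ × ℝ => d' p.2 + ∫ s in x₀..p.1, deriv (w s) p.2)
        (Ioo x₀ x₁ ×ˢ Ioo (-1 : ℝ) 1) := by
      refine ContinuousOn.add ?_ ((aux_cint (h := fun s y => deriv (w s) y) hx.le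
        (hwy.continuousOn.mono hΩUw)).mono hΩK)
      exact ContinuousOn.comp (t := Ioo (-1 : ℝ) 1) (g := d')
        (fun y hy => (hdd' y hy).continuousAt.continuousWithinAt) continuousOn_snd
        (fun p hp => hp.2)
    have hF : ∀ p ∈ Ioo x₀ x₁ ×ˢ Ioo (-1 : ℝ) 1,
        HasFDerivAt (fun p : ℝ × ℝ => d p.2 + ∫ s in x₀..p.1, w s p.2)
          ((ContinuousLinearMap.toSpanSingleton ℝ (w p.1 p.2)).coprod
            (ContinuousLinearMap.toSpanSingleton ℝ
              (d' p.2 + ∫ s in x₀..p.1, deriv (w s) p.2))) p := by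
      intro p hp
      have hn := hΩo.mem_nhds hp
      refine (hasStrictFDerivAt_uncurry_coprod (𝕜 := ℝ) (u := p)
        (f := fun x y => d y + ∫ s in x₀..x, w s y)
        (f₁ := fun x y => ContinuousLinearMap.toSpanSingleton ℝ (w x y))
        (f₂ := fun x y => ContinuousLinearMap.toSpanSingleton ℝ
              (d' y + ∫ s in x₀..x, deriv (w s) y)) ?_ ?_ ?_ ?_).hasFDerivAt
      · filter_upwards [hn] with v hv
        exact (hux v.1 hv.1 v.2 hv.2).hasFDerivAt
      · filter_upwards [hn] with v hv
        exact (huy v.1 (Ioo_subset_Icc_self hv.1) v.2 hv.2).hasFDerivAt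
      · exact (ContinuousLinearMap.toSpanSingletonCLE (𝕜 := ℝ) (E := ℝ)).continuous.continuousAt.comp
          (hcw.continuousAt hn)
      · exact (ContinuousLinearMap.toSpanSingletonCLE (𝕜 := ℝ) (E := ℝ)).continuous.continuousAt.comp
          (hcy.continuousAt hn)
    rw [show (1 : WithTop ℕ∞) = 0 + 1 from rfl, contDiffOn_succ_iff_fderiv_of_isOpen hΩo]
    refine ⟨fun p hp => (hF p hp).differentiableAt.differentiableWithinAt, by simp, ?_⟩
    rw [contDiffOn_zero]
    have hc := (((ContinuousLinearMap.toSpanSingletonCLE (𝕜 := ℝ)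
        (E := ℝ)).continuous.comp_continuousOn hcw).clm_comp
        (continuousOn_const (c := ContinuousLinearMap.fst ℝ ℝ ℝ))).add
      (((ContinuousLinearMap.toSpanSingletonCLE (𝕜 := ℝ)
        (E := ℝ)).continuous.comp_continuousOn hcy).clm_comp
        (continuousOn_const (c := ContinuousLinearMap.snd ℝ ℝ ℝ)))
    refine hc.congr fun p hp => ?_
    rw [(hF p hp).fderiv]
    ext <;> simp
  · intro x hxx
    have hxx' := Ioo_subset_Icc_self hxx
    rw [show (2 : WithTop ℕ∞) = 1 + 1 from by norm_num,
      contDiffOn_succ_iff_deriv_of_isOpen isOpen_Ioo]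
    refine ⟨fun y hy => (huy x hxx' y hy).differentiableAt.differentiableWithinAt, by simp, ?_⟩
    rw [show (1 : WithTop ℕ∞) = 0 + 1 from rfl, contDiffOn_succ_iff_deriv_of_isOpen isOpen_Ioo]
    refine ⟨fun y hy => ?_, by simp, ?_⟩
    · exact ((hderiv x hxx' y hy).differentiableAt_iff.2
        (huyy x hxx' y hy).differentiableAt).differentiableWithinAt
    · rw [contDiffOn_zero]
      exact ((hg x hxx').mono Ioo_subset_Icc_self).congr fun y hy => hderiv2 x hxx' y hy
  · refine ContinuousOn.congr (f := fun p : ℝ × ℝ => p.2 * w p.1 p.2 - f p.1 p.2)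
      ((continuousOn_snd.mul (hwc.mono hΩK)).sub (hfc.mono hΩK)) ?_
    intro p hp
    exact hderiv2 p.1 (Ioo_subset_Icc_self hp.1) p.2 hp.2
  · intro x _ y hy
    simp only [hd, uPlus, if_pos hy.1.le]
  · intro x hxx y hy
    simp only [hd, uMinus, if_neg (not_le.2 hy.2)]
    have hs := aux_slice hwc (y := y) ⟨hy.1.le, hy.2.le.trans zero_le_one⟩
    have i1 : IntervalIntegrable (fun s => w s y) volume x₀ x := by
      refine (hs.mono ?_).intervalIntegrable
      rw [uIcc_of_le hxx.1.le]; exact Icc_subset_Icc_right hxx.2.le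
    have i2 : IntervalIntegrable (fun s => w s y) volume x x₁ := by
      refine (hs.mono ?_).intervalIntegrable
      rw [uIcc_of_le hxx.2.le]; exact Icc_subset_Icc_left hxx.1.le
    rw [← intervalIntegral.integral_add_adjacent_intervals i1 i2]
    ring
  · intro p hp
    have e1 := (hux p.1 hp.1 p.2 hp.2).deriv
    have e2 := hderiv2 p.1 (Ioo_subset_Icc_self hp.1) p.2 hp.2
    simp only at e1 e2 ⊢
    rw [e1, e2]
    ring
end
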